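/- arXiv:2206.14224 — 2 statements merged into one kernel-verified Lean document; each statement's English description precedes it below -/
import Mathlib

section
/- Let E be a countable Borel equivalence relation on 𝓔_∞. Then there exists a Ramsey conull set 𝓓 ⊆ 𝓔_∞ such that for all B ∈ 𝓓 and all A, A' ∈ 𝓔_∞ with A ≤ B and A' ≤ B, one has A E A' if and only if A = A'. -/
open Classical

/-- The space `𝓔_∞` of equivalence relations on `ℕ` with infinitely many classes
(infinite partitions of `ℕ`). -/
def Einf : Type := {A : Setoid ℕ // Infinite (Quotient A)}

namespace Einf

/-- `Coarsen A B` (written `A ≤ B` in the paper): `A` is a coarsening of `B`,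
i.e. every `A`-class is a union of `B`-classes. -/
def Coarsen (A B : Einf) : Prop := ∀ i j : ℕ, B.1 i j → A.1 i j

/-- `μ_n(A)`: the `(n+1)`-st smallest minimal representative of an `A`-class. -/
noncomputable def mu (A : Einf) (n : ℕ) : ℕ :=
  Nat.nth (fun k => ∀ m, A.1 m k → k ≤ m) n

/-- `𝓔_∞^fin`: equivalence relations on initial segments `{0,…,k−1}` of `ℕ`. -/
def FinApprox : Type := Σ k : ℕ, Setoid (Fin k)

/-- `r_n(A)`: the restriction of `A` to `{0,…,μ_n(A)−1}`. -/
noncomputable def rn (A : Einf) (n : ℕ) : FinApprox :=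
  ⟨A.mu n, Setoid.comap (fun i => (i : ℕ)) A.1⟩

/-- `s ⊑ A`: `s` is an initial approximation of `A`, i.e. `s = r_n(A)` for some `n`. -/
def InitSeg (s : FinApprox) (A : Einf) : Prop := ∃ n, rn A n = s

/-- The Ellentuck cube `[s, A] = {B ∈ 𝓔_∞ : s ⊑ B and B ≤ A}`. -/
def cube (s : FinApprox) (A : Einf) : Set Einf := {B | InitSeg s B ∧ Coarsen B A}

/-- The identification of `𝓔_∞` with `𝓒𝓢 ⊆ 2^{ℕ×ℕ}`: `toCS A n m = 1` iff
`m` is `A`-equivalent to `μ_n(A)` (so the `n`-th row is the `A`-class of `μ_n(A)`). -/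
noncomputable def toCS (A : Einf) : ℕ → ℕ → Bool :=
  fun n m => decide (A.1 m (A.mu n))

/-- The Borel structure of the Polish topology on `𝓔_∞`, pulled back from `2^{ℕ×ℕ}`. -/
noncomputable instance : MeasurableSpace Einf :=
  MeasurableSpace.comap toCS inferInstance

/-- `𝓧 ⊆ 𝓔_∞` is Ramsey null. -/
def RamseyNull (X : Set Einf) : Prop :=
  ∀ s A, (cube s A).Nonempty → ∃ B ∈ cube s A, cube s B ∩ X = ∅

/-- `𝓧 ⊆ 𝓔_∞` is Ramsey conull: its complement is Ramsey null. -/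
def RamseyConull (X : Set Einf) : Prop := RamseyNull Xᶜ

end Einf

open Einf

/-! ### Part 1: a weak form of the Lusin-Novikov theorem -/

namespace LN

open MeasureTheory Set Topology Filter

variable {Z X : Type*}

/-- Covered by countably many Borel sets on which `p` is injective. -/
def Small [MeasurableSpace Z] (p : Z → X) (S : Set Z) : Prop :=
  ∃ P : ℕ → Set Z, (∀ n, MeasurableSet (P n) ∧ InjOn p (P n)) ∧ S ⊆ ⋃ n, P n

/-- The family `l` of sets is hit by a single fibre inside `Y`. -/
def Real (p : Z → X) (l : List (Set Z)) (Y : Set Z) : Prop :=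
  ∃ x, ∀ V ∈ l, ∃ z ∈ V ∩ Y, p z = x

lemma Real.mono {p : Z → X} {l : List (Set Z)} {Y Y' : Set Z} (h : Y ⊆ Y') (hr : Real p l Y) :
    Real p l Y' := by
  obtain ⟨x, hx⟩ := hr
  refine ⟨x, fun V hV => ?_⟩
  obtain ⟨z, hz, e⟩ := hx V hV
  exact ⟨z, ⟨hz.1, h hz.2⟩, e⟩

lemma small_iUnion [MeasurableSpace Z] {p : Z → X} {ι : Type*} [Countable ι] {S : ι → Set Z}
    (h : ∀ i, Small p (S i)) : Small p (⋃ i, S i) := by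
  rcases isEmpty_or_nonempty ι with hι | hι
  · refine ⟨fun _ => ∅, fun n => ⟨MeasurableSet.empty, by simp [InjOn]⟩, by simp⟩
  choose P hP hS using h
  obtain ⟨f, hf⟩ := exists_surjective_nat (ι × ℕ)
  refine ⟨fun n => P (f n).1 (f n).2, fun n => hP _ _, ?_⟩
  intro z hz
  obtain ⟨i, hi⟩ := mem_iUnion.1 hz
  obtain ⟨m, hm⟩ := mem_iUnion.1 (hS i hi)
  obtain ⟨n, hn⟩ := hf (i, m)
  exact mem_iUnion.2 ⟨n, by rw [hn]; exact hm⟩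

/-- `Y` is measurable with small complement. -/
def Co [MeasurableSpace Z] (p : Z → X) (Y : Set Z) : Prop := MeasurableSet Y ∧ Small p Yᶜ

def Solid [MeasurableSpace Z] (p : Z → X) (l : List (Set Z)) : Prop := ∀ Y, Co p Y → Real p l Y

variable [MetricSpace Z] [CompleteSpace Z] [SecondCountableTopology Z] [MeasurableSpace Z]
  [BorelSpace Z] [TopologicalSpace X] [PolishSpace X] [MeasurableSpace X] [BorelSpace X]

lemma analytic_nbr {p : Z → X} (hp : Continuous p) {A : Set Z} (hA : AnalyticSet A) :
    AnalyticSet {z' | ∃ z ∈ A, p z = p z' ∧ z ≠ z'} := by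
  have h1 : AnalyticSet ((Prod.fst : Z × Z → Z) ⁻¹' A) := hA.preimage continuous_fst
  have h2 : AnalyticSet {q : Z × Z | p q.1 = p q.2} :=
    (isClosed_eq (hp.comp continuous_fst) (hp.comp continuous_snd)).analyticSet
  have h3 : AnalyticSet {q : Z × Z | q.1 ≠ q.2} := by
    have : IsOpen {q : Z × Z | q.1 ≠ q.2} := isOpen_ne_fun continuous_fst continuous_snd
    exact this.measurableSet.analyticSet
  have h4 : AnalyticSet (⋂ i : Fin 3, (![(Prod.fst : Z × Z → Z) ⁻¹' A, {q : Z × Z | p q.1 = p q.2},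
      {q : Z × Z | q.1 ≠ q.2}] i)) := by
    apply AnalyticSet.iInter
    intro i
    fin_cases i
    · exact h1
    · exact h2
    · exact h3
  convert! h4.image_of_continuous continuous_snd
  ext z'
  simp only [mem_ofPred_eq, mem_image, mem_iInter, Fin.forall_fin_succ]
  constructor
  · rintro ⟨z, hz, h, h'⟩
    exact ⟨(z, z'), by simp [hz, h, h'], rfl⟩
  · rintro ⟨⟨z, z''⟩, h, rfl⟩
    simp at h
    exact ⟨z, h.1, h.2.1, h.2.2⟩

lemma exists_borel_injOn {p : Z → X} (hp : Continuous p) {A : Set Z} (hA : AnalyticSet A)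
    (hinj : InjOn p A) : ∃ P, MeasurableSet P ∧ InjOn p P ∧ A ⊆ P := by
  obtain ⟨P1, h1, h1', m1⟩ := hA.measurablySeparable (analytic_nbr hp hA) (by
    rw [Set.disjoint_left]
    rintro z hz ⟨z', hz', e, ne⟩
    exact ne (hinj hz' hz e))
  obtain ⟨P2, h2, h2', m2⟩ := hA.measurablySeparable (analytic_nbr hp m1.analyticSet) (by
    rw [Set.disjoint_left]
    rintro z hz ⟨z', hz', e, ne⟩
    exact Set.disjoint_left.1 h1' ⟨z, hz, e.symm, ne.symm⟩ hz')
  refine ⟨P1 ∩ P2, m1.inter m2, ?_, subset_inter h1 h2⟩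
  intro z hz z' hz' e
  by_contra ne
  exact Set.disjoint_left.1 h2' ⟨z, hz.1, e, ne⟩ hz'.2

lemma exists_basis_small {z : Z} {O : Set Z} (hO : IsOpen O) (hz : z ∈ O) {ε : ℝ} (hε : 0 < ε) :
    ∃ V ∈ TopologicalSpace.countableBasis Z, z ∈ V ∧ closure V ⊆ O ∧
      ∀ a ∈ V, ∀ b ∈ V, dist a b ≤ ε := by
  obtain ⟨r, hr, hrO⟩ := Metric.nhds_basis_closedBall.mem_iff.1 (hO.mem_nhds hz)
  have hpos : 0 < min r (ε / 2) := lt_min hr (by positivity)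
  obtain ⟨V, hV, hzV, hVb⟩ := (TopologicalSpace.isBasis_countableBasis Z).mem_nhds_iff.1
    (Metric.ball_mem_nhds z hpos)
  refine ⟨V, hV, hzV, ?_, ?_⟩
  · refine (closure_minimal (hVb.trans Metric.ball_subset_closedBall) Metric.isClosed_closedBall).trans ?_
    exact (Metric.closedBall_subset_closedBall (min_le_left _ _)).trans hrO
  · intro a ha b hb
    have h1 := hVb ha
    have h2 := hVb hb
    rw [Metric.mem_ball] at h1 h2
    have := dist_triangle_right a b z
    have := min_le_right r (ε / 2)
    linarith

lemma step {p : Z → X} (hp : Continuous p) (n r : ℕ) (hr : r ≤ n) (F : ℕ → Set Z)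
    (hF : ∀ i ≤ n, F i ∈ TopologicalSpace.countableBasis Z)
    (hs : Solid p ((List.range (n + 1)).map F)) {ε : ℝ} (hε : 0 < ε) :
    ∃ G : ℕ → Set Z, (∀ i ≤ n + 1, G i ∈ TopologicalSpace.countableBasis Z) ∧
      Solid p ((List.range (n + 2)).map G) ∧ (∀ i ≤ n, closure (G i) ⊆ F i) ∧
      closure (G (n + 1)) ⊆ F r ∧ Disjoint (G r) (G (n + 1)) ∧
      (∀ i ≤ n + 1, ∀ a ∈ G i, ∀ b ∈ G i, dist a b ≤ ε) := by
  by_contra hcon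
  push Not at hcon
  have hcount : Countable (TopologicalSpace.countableBasis Z) :=
    (TopologicalSpace.countable_countableBasis Z).to_subtype
  have hY : ∀ l : List (TopologicalSpace.countableBasis Z), ∃ Y, Co p Y ∧
      (¬ Solid p (l.map (fun V => V.1)) → ¬ Real p (l.map (fun V => V.1)) Y) := by
    intro l
    by_cases h : Solid p (l.map (fun V => V.1))
    · exact ⟨univ, ⟨MeasurableSet.univ, ⟨fun _ => ∅, fun n => ⟨MeasurableSet.empty, by simp [InjOn]⟩,
        by simp⟩⟩, fun h' => absurd h h'⟩
    · unfold Solid at h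
      push Not at h
      obtain ⟨Y, hY, hY'⟩ := h
      exact ⟨Y, hY, fun _ => hY'⟩
  choose Yl hYl hYl' using hY
  set Y := ⋂ l, Yl l with hYdef
  have hYm : MeasurableSet Y := MeasurableSet.iInter fun l => (hYl l).1
  have hYs : Small p Yᶜ := by
    rw [hYdef, compl_iInter]
    exact small_iUnion fun l => (hYl l).2
  -- the analytic set
  have hopen : ∀ i ≤ n, IsOpen (F i) := fun i hi =>
    TopologicalSpace.isOpen_of_mem_countableBasis (hF i hi)
  set A : Set Z := ⋂ i : Option (Fin (n+1)), i.elim (F r ∩ Y) (fun i => p ⁻¹' (p '' (F i ∩ Y)))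
    with hAdef
  have hA : AnalyticSet A := by
    apply AnalyticSet.iInter
    intro i
    cases i with
    | none => exact ((hopen r hr).measurableSet.inter hYm).analyticSet
    | some i =>
      refine AnalyticSet.preimage ?_ hp
      exact ((hopen i (by omega)).measurableSet.inter hYm).analyticSet.image_of_continuous hp
  have hninj : ¬ InjOn p A := by
    intro hinj
    obtain ⟨P, hPm, hPi, hAP⟩ := exists_borel_injOn hp hA hinj
    have hco : Co p (Y \ P) := by
      refine ⟨hYm.diff hPm, ?_⟩
      have : (Y \ P)ᶜ = ⋃ b : Bool, cond b Yᶜ P := by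
        ext z; simp [Set.mem_iUnion]; tauto
      rw [this]
      refine small_iUnion fun b => ?_
      cases b with
      | true => exact hYs
      | false => exact ⟨fun _ => P, fun _ => ⟨hPm, hPi⟩, fun z hz => mem_iUnion.2 ⟨0, hz⟩⟩
    obtain ⟨x, hx⟩ := hs _ hco
    have hx' : ∀ i ≤ n, ∃ z ∈ F i ∩ (Y \ P), p z = x := fun i hi => hx _ (by
      simp only [List.mem_map, List.mem_range]; exact ⟨i, by omega, rfl⟩)
    obtain ⟨z, hz, hzx⟩ := hx' r hr
    apply hz.2.2
    apply hAP
    rw [hAdef, mem_iInter]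
    intro i
    cases i with
    | none => exact ⟨hz.1, hz.2.1⟩
    | some i =>
      obtain ⟨w, hw, hwx⟩ := hx' i (by omega)
      exact ⟨w, ⟨hw.1, hw.2.1⟩, by rw [hwx, hzx]⟩
  unfold InjOn at hninj
  push Not at hninj
  obtain ⟨z, hz, z', hz', he, hne⟩ := hninj
  rw [hAdef, mem_iInter] at hz hz'
  have hw : ∀ i, ∃ w, i ≤ n → w ∈ F i ∩ Y ∧ p w = p z := by
    intro i
    by_cases hi : i ≤ n
    · obtain ⟨w, hw⟩ := hz (some ⟨i, by omega⟩)
      exact ⟨w, fun _ => hw⟩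
    · exact ⟨z, fun h => absurd h hi⟩
  choose w hw using hw
  obtain ⟨U, U', hU, hU', hzU, hzU', hUU⟩ := t2_separation hne
  have hzF : z ∈ F r ∩ Y := hz none
  have hzF' : z' ∈ F r ∩ Y := hz' none
  -- choose new neighbourhoods
  have hG : ∀ i, ∃ V, i ≤ n + 1 → V ∈ TopologicalSpace.countableBasis Z ∧
      (∀ a ∈ V, ∀ b ∈ V, dist a b ≤ ε) ∧ (∃ u ∈ V ∩ Y, p u = p z) ∧
      (i ≤ n → closure V ⊆ F i) ∧ (i = n + 1 → closure V ⊆ F r ∩ U') ∧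
      (i = r → closure V ⊆ U) := by
    intro i
    by_cases h1 : i = n + 1
    · obtain ⟨V, hV, hm, hc, hd⟩ := exists_basis_small ((hopen r hr).inter hU')
        (show z' ∈ F r ∩ U' from ⟨hzF'.1, hzU'⟩) hε
      exact ⟨V, fun _ => ⟨hV, hd, ⟨z', ⟨hm, hzF'.2⟩, he.symm⟩, fun h => by omega, fun _ => hc,
        fun h => by omega⟩⟩
    by_cases h2 : i = r
    · obtain ⟨V, hV, hm, hc, hd⟩ := exists_basis_small ((hopen r hr).inter hU)
        (show z ∈ F r ∩ U from ⟨hzF.1, hzU⟩) hε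
      exact ⟨V, fun _ => ⟨hV, hd, ⟨z, ⟨hm, hzF.2⟩, rfl⟩, fun _ => by
        rw [h2]; exact hc.trans inter_subset_left, fun h => by omega,
        fun h => hc.trans inter_subset_right⟩⟩
    by_cases h3 : i ≤ n
    · obtain ⟨V, hV, hm, hc, hd⟩ := exists_basis_small (hopen i h3) (hw i h3).1.1 hε
      exact ⟨V, fun _ => ⟨hV, hd, ⟨w i, ⟨hm, (hw i h3).1.2⟩, (hw i h3).2⟩, fun _ => hc,
        fun h => by omega, fun h => by omega⟩⟩
    · exact ⟨∅, fun h => by omega⟩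
  choose G hG using hG
  have hbas : ∀ i ≤ n + 1, G i ∈ TopologicalSpace.countableBasis Z := fun i hi => (hG i hi).1
  by_cases hsol : Solid p ((List.range (n + 2)).map G)
  · obtain ⟨i, hi, a, ha, b, hb, hab⟩ := hcon G hbas hsol (fun i hi => (hG i (by omega)).2.2.2.1 hi)
      (((hG (n+1) le_rfl).2.2.2.2.1 rfl).trans inter_subset_left) (by
        refine Disjoint.mono ?_ ?_ hUU
        · exact subset_closure.trans ((hG r (by omega)).2.2.2.2.2 rfl)
        · exact (subset_closure.trans ((hG (n+1) le_rfl).2.2.2.2.1 rfl)).trans inter_subset_right)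
    exact absurd ((hG i hi).2.1 a ha b hb) (not_le.2 hab)
  · obtain ⟨l, hl⟩ : ∃ l : List (TopologicalSpace.countableBasis Z),
        l.map (fun V => V.1) = (List.range (n + 2)).map G := by
      refine ⟨(List.range (n+2)).attach.map (fun i => ⟨G i.1, hbas _ (by
        have := List.mem_range.1 i.2; omega)⟩), ?_⟩
      rw [List.map_map]
      conv_rhs => rw [← List.attach_map_subtype_val (List.range (n+2)), List.map_map]
      rfl
    have := hYl' l
    rw [hl] at this
    apply this hsol
    refine Real.mono (iInter_subset _ l) ⟨p z, ?_⟩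
    intro V hV
    simp only [List.mem_map, List.mem_range] at hV
    obtain ⟨i, hi, rfl⟩ := hV
    exact (hG i (by omega)).2.2.1

theorem small_univ {p : Z → X} (hp : Continuous p) (hcount : ∀ x, (p ⁻¹' {x}).Countable) :
    Small p (univ : Set Z) := by
  by_contra hns
  have key : ∀ n (F : {F : ℕ → Set Z // (∀ i ≤ n, F i ∈ TopologicalSpace.countableBasis Z) ∧
      Solid p ((List.range (n + 1)).map F)}),
      ∃ G : {F : ℕ → Set Z // (∀ i ≤ n+1, F i ∈ TopologicalSpace.countableBasis Z) ∧
      Solid p ((List.range (n + 1 + 1)).map F)}, (∀ i ≤ n, closure (G.1 i) ⊆ F.1 i) ∧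
      closure (G.1 (n + 1)) ⊆ F.1 (Nat.unpair n).1 ∧ Disjoint (G.1 (Nat.unpair n).1) (G.1 (n + 1)) ∧
      (∀ i ≤ n + 1, ∀ a ∈ G.1 i, ∀ b ∈ G.1 i, dist a b ≤ (1/2 : ℝ)^n) := by
    rintro n ⟨F, hF, hs⟩
    obtain ⟨G, h1, h2, h3⟩ := step hp n (Nat.unpair n).1 (Nat.unpair_left_le n) F hF hs
      (show (0:ℝ) < (1/2 : ℝ)^n by positivity)
    exact ⟨⟨G, h1, h2⟩, h3⟩
  choose nx hnx using key
  -- start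
  have hstart : ∃ V ∈ TopologicalSpace.countableBasis Z, Solid p [V] := by
    by_contra hcon
    push Not at hcon
    have hcount : Countable (TopologicalSpace.countableBasis Z) :=
      (TopologicalSpace.countable_countableBasis Z).to_subtype
    have : ∀ V : TopologicalSpace.countableBasis Z, ∃ Y, Co p Y ∧ ¬ Real p [V.1] Y := by
      intro V
      have := hcon V.1 V.2
      unfold Solid at this
      push Not at this
      exact this
    choose Y hY hY' using this
    apply hns
    have hsm : Small p (⋃ V, (Y V)ᶜ) := small_iUnion fun V => (hY V).2
    convert! hsm
    symm
    rw [eq_univ_iff_forall]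
    intro z
    obtain ⟨V, hV, hzV, -⟩ := (TopologicalSpace.isBasis_countableBasis Z).mem_nhds_iff.1
      (univ_mem : univ ∈ 𝓝 z)
    refine mem_iUnion.2 ⟨⟨V, hV⟩, fun hz => hY' ⟨V, hV⟩ ⟨p z, ?_⟩⟩
    intro V' hV'
    simp only [List.mem_singleton] at hV'
    subst hV'
    exact ⟨z, ⟨hzV, hz⟩, rfl⟩
  obtain ⟨V0, hV0, hsV0⟩ := hstart
  let S : ∀ n, {F : ℕ → Set Z // (∀ i ≤ n, F i ∈ TopologicalSpace.countableBasis Z) ∧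
      Solid p ((List.range (n + 1)).map F)} := fun n => Nat.rec
      ⟨fun _ => V0, fun _ _ => hV0, by simpa using hsV0⟩ (fun n F => nx n F) n
  have hS : ∀ n, S (n+1) = nx n (S n) := fun n => rfl
  let V : ℕ → ℕ → Set Z := fun n => (S n).1
  have hV1 : ∀ n, ∀ i ≤ n, closure (V (n+1) i) ⊆ V n i := fun n => by
    have := (hnx n (S n)).1; rw [← hS] at this; exact this
  have hV2 : ∀ n, closure (V (n+1) (n+1)) ⊆ V n (Nat.unpair n).1 := fun n => by
    have := (hnx n (S n)).2.1; rw [← hS] at this; exact this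
  have hV3 : ∀ n, Disjoint (V (n+1) (Nat.unpair n).1) (V (n+1) (n+1)) := fun n => by
    have := (hnx n (S n)).2.2.1; rw [← hS] at this; exact this
  have hV4 : ∀ n, ∀ i ≤ n+1, ∀ a ∈ V (n+1) i, ∀ b ∈ V (n+1) i, dist a b ≤ (1/2 : ℝ)^n := fun n => by
    have := (hnx n (S n)).2.2.2; rw [← hS] at this; exact this
  have hco : Co p (univ : Set Z) := ⟨MeasurableSet.univ,
    ⟨fun _ => ∅, fun n => ⟨MeasurableSet.empty, by simp [InjOn]⟩, by simp⟩⟩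
  have hreal : ∀ n, ∃ x, ∀ i, ∃ z, i ≤ n → z ∈ V n i ∧ p z = x := by
    intro n
    obtain ⟨x, hx⟩ := (S n).2.2 _ hco
    obtain ⟨z0, _, _⟩ := hx ((S n).1 0) (by simp only [List.mem_map, List.mem_range]; exact ⟨0, by omega, rfl⟩)
    refine ⟨x, fun i => ?_⟩
    by_cases hi : i ≤ n
    · obtain ⟨z, hz, e⟩ := hx ((S n).1 i) (by
        simp only [List.mem_map, List.mem_range]; exact ⟨i, by omega, rfl⟩)
      exact ⟨z, fun _ => ⟨hz.1, e⟩⟩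
    · exact ⟨z0, fun h => absurd h hi⟩
  choose x w hw using hreal
  have hmono : ∀ i n m, i ≤ n → n ≤ m → V m i ⊆ V n i := by
    intro i n m hin hnm
    induction m, hnm using Nat.le_induction with
    | base => exact subset_rfl
    | succ m hm ih => exact (subset_closure.trans (hV1 m i (by omega))).trans ih
  have hlim : ∀ i, ∃ z, Tendsto (fun n => w n i) atTop (𝓝 z) := by
    intro i
    apply cauchySeq_tendsto_of_complete
    rw [Metric.cauchySeq_iff]
    intro ε hε
    obtain ⟨N, hN⟩ := exists_pow_lt_of_lt_one hε (show (1/2 : ℝ) < 1 by norm_num)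
    refine ⟨N + i + 1, fun m hm n hn => ?_⟩
    have h1 := hmono i (N + i + 1) m (by omega) hm (hw m i (by omega)).1
    have h2 := hmono i (N + i + 1) n (by omega) hn (hw n i (by omega)).1
    refine lt_of_le_of_lt (hV4 (N + i) i (by omega) _ h1 _ h2) (lt_of_le_of_lt ?_ hN)
    exact pow_le_pow_of_le_one (by norm_num) (by norm_num) (by omega)
  choose z hz using hlim
  have hzV : ∀ i n, i ≤ n → z i ∈ V n i := by
    intro i n hin
    apply hV1 n i hin
    refine mem_closure_of_tendsto (hz i) ?_
    filter_upwards [eventually_ge_atTop (n+1)] with m hm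
    exact hmono i (n+1) m (by omega) hm (hw m i (by omega)).1
  have hpz : ∀ i, Tendsto x atTop (𝓝 (p (z i))) := by
    intro i
    refine ((hp.tendsto _).comp (hz i)).congr' ?_
    filter_upwards [eventually_ge_atTop i] with m hm
    exact (hw m i hm).2
  have hpe : ∀ i, p (z i) = p (z 0) := fun i => tendsto_nhds_unique (hpz i) (hpz 0)
  have hsub : closure (range z) ⊆ p ⁻¹' {p (z 0)} := by
    refine closure_minimal ?_ (isClosed_singleton.preimage hp)
    rintro _ ⟨i, rfl⟩
    exact hpe i
  have hpre : Preperfect (range z) := by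
    rw [preperfect_iff_nhds]
    rintro _ ⟨i, rfl⟩ U hU
    obtain ⟨ε, hε, hb⟩ := Metric.mem_nhds_iff.1 hU
    obtain ⟨N, hN⟩ := exists_pow_lt_of_lt_one hε (show (1/2 : ℝ) < 1 by norm_num)
    set n := Nat.pair i (N + i + 1) with hn
    have hn1 : N + i + 1 ≤ n := Nat.right_le_pair _ _
    have hr : (Nat.unpair n).1 = i := by simp [hn]
    have h1 : z (n+1) ∈ V n i := by
      have := hV2 n (subset_closure (hzV (n+1) (n+1) le_rfl))
      rwa [hr] at this
    refine ⟨z (n+1), ⟨hb ?_, mem_range_self _⟩, ?_⟩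
    · rw [Metric.mem_ball]
      have h2 := hzV i n (by omega)
      obtain ⟨k, hk⟩ : ∃ k, n = k + 1 := ⟨n - 1, by omega⟩
      rw [hk] at h1 h2
      rw [hk]
      refine lt_of_le_of_lt (hV4 k i (by omega) _ h1 _ h2) (lt_of_le_of_lt ?_ hN)
      exact pow_le_pow_of_le_one (by norm_num) (by norm_num) (by omega)
    · intro e
      have h3 := hV3 n
      rw [hr, Set.disjoint_left] at h3
      exact h3 (hzV i (n+1) (by omega)) (e ▸ hzV (n+1) (n+1) le_rfl)
  obtain ⟨f, hf, -, hfi⟩ := hpre.perfect_closure.exists_nat_bool_injection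
    ⟨z 0, subset_closure (mem_range_self _)⟩
  have hc : (range f).Countable := (hcount _).mono (hf.trans hsub)
  have : Countable (ℕ → Bool) := by
    have h := hc.to_subtype
    exact Function.Injective.countable (f := fun a => (⟨f a, mem_range_self a⟩ : range f))
      (fun a b h => hfi (by simpa using h))
  obtain ⟨g, hg⟩ := exists_injective_nat (ℕ → Bool)
  exact Function.cantor_injective (fun s : Set ℕ => g (fun n => decide (n ∈ s))) (by
    intro s s' h
    ext n
    simpa using congrFun (hg h) n)

end LN

/-- Borel sets with countable sections are countable unions of Borel partial functions. -/
theorem exists_uniformizing_cover {X Y : Type*} [MeasurableSpace X] [StandardBorelSpace X]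
    [MeasurableSpace Y] [StandardBorelSpace Y] {R : Set (X × Y)} (hR : MeasurableSet R)
    (hc : ∀ x, {y | (x, y) ∈ R}.Countable) :
    ∃ P : ℕ → Set (X × Y), (∀ n, MeasurableSet (P n) ∧ Set.InjOn Prod.fst (P n)) ∧
      R ⊆ ⋃ n, P n := by
  have hsb : StandardBorelSpace R := hR.standardBorel
  let _ := upgradeStandardBorel X
  let iR := upgradeStandardBorel R
  let p : R → X := fun r => r.1.1
  have hpm : Measurable p := measurable_fst.comp measurable_subtype_coe
  obtain ⟨t, ht, hpc, hpol⟩ := hpm.exists_continuous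
  have hbor : @BorelSpace R t _ := by
    constructor
    rw [eq_borel_upgradeStandardBorel R]
    exact (MeasureTheory.borel_eq_borel_of_le (t := t) (t' := iR.toTopologicalSpace) hpol
      iR.toPolishSpace ht).symm
  clear ht
  let _ := t
  let _ := TopologicalSpace.upgradeIsCompletelyMetrizable R
  obtain ⟨P, hP, hcov⟩ := LN.small_univ (Z := R) (p := p) hpc (by
    intro x
    have h1 : ((fun r : R => r.1.2) '' (p ⁻¹' {x})).Countable := by
      refine (hc x).mono ?_
      rintro _ ⟨r, hr, rfl⟩
      have : r.1.1 = x := hr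
      simp only [Set.mem_ofPred_eq, ← this]
      exact r.2
    refine Set.countable_of_injective_of_countable_image ?_ h1
    intro r hr r' hr' e
    apply Subtype.ext
    apply Prod.ext
    · exact (show r.1.1 = x from hr).trans (show r'.1.1 = x from hr').symm
    · exact e)
  refine ⟨fun n => Subtype.val '' P n, fun n => ⟨?_, ?_⟩, ?_⟩
  · exact (MeasurableEmbedding.subtype_coe hR).measurableSet_image' (hP n).1
  · rintro _ ⟨r, hr, rfl⟩ _ ⟨r', hr', rfl⟩ e
    rw [(hP n).2 hr hr' e]
  · intro r hr
    obtain ⟨n, hn⟩ := Set.mem_iUnion.1 (hcov (Set.mem_univ ⟨r, hr⟩))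
    exact Set.mem_iUnion.2 ⟨n, ⟨_, hn, rfl⟩⟩

/-! ### Part 2: the Carlson-Simpson lemma on words -/

namespace CSW

open Filter Set Topology

attribute [local instance] Ultrafilter.mul Ultrafilter.semigroup

/-- nonempty closed left ideals of `β M`. -/
def IsLI {M : Type*} [Semigroup M] (I : Set (Ultrafilter M)) : Prop :=
  IsClosed I ∧ I.Nonempty ∧ ∀ p, ∀ q ∈ I, p * q ∈ I

lemma isLI_range {M : Type*} [Semigroup M] [Nonempty M] (q : Ultrafilter M) :
    IsLI (range (· * q)) := by
  refine ⟨(isCompact_range (Ultrafilter.continuous_mul_left q)).isClosed, range_nonempty _, ?_⟩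
  rintro p _ ⟨r, rfl⟩
  exact ⟨p * r, mul_assoc _ _ _⟩

lemma exists_min_LI {M : Type*} [Semigroup M] [Nonempty M] (q : Ultrafilter M) :
    ∃ I ⊆ range (· * q), Minimal IsLI I := by
  obtain ⟨I, hI, hm⟩ := zorn_superset_nonempty {I : Set (Ultrafilter M) | IsLI I} (by
    intro c hcs hc hcn
    refine ⟨⋂₀ c, ⟨isClosed_sInter fun t ht => (hcs ht).1, ?_, ?_⟩, fun s hs =>
      sInter_subset_of_mem hs⟩
    · convert!
        @IsCompact.nonempty_iInter_of_directed_nonempty_isCompact_isClosed _ _ _ hcn.coe_sort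
          ((↑) : c → Set (Ultrafilter M)) ?_ ?_ ?_ ?_
      · exact Set.sInter_eq_iInter
      · exact DirectedOn.directed_val (IsChain.directedOn hc.symm)
      exacts [fun i => (hcs i.prop).2.1, fun i => (hcs i.prop).1.isCompact,
        fun i => (hcs i.prop).1]
    · intro p r hr
      exact mem_sInter.2 fun t ht => (hcs ht).2.2 p r (mem_sInter.1 hr t ht)) _ (isLI_range q)
  exact ⟨I, hI, hm⟩

lemma map_mul {M N : Type*} [Semigroup M] [Semigroup N] (f : M → N)
    (hf : ∀ a b, f (a * b) = f a * f b) (U V : Ultrafilter M) :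
    (U * V).map f = U.map f * V.map f := by
  apply Ultrafilter.coe_inj.mp
  refine Filter.ext' fun p => ?_
  rw [Ultrafilter.eventually_mul]
  simp only [Ultrafilter.coe_map, eventually_map]
  rw [Ultrafilter.eventually_mul]
  simp only [hf]

lemma right_id {M : Type*} [Semigroup M] [Nonempty M] {I : Set (Ultrafilter M)} (hI : Minimal IsLI I)
    {x y : Ultrafilter M} (hx : x ∈ I) (hy : y ∈ I) (hyy : y * y = y) : x * y = x := by
  have h1 : range (· * y) = I := by
    refine hI.eq_of_subset (isLI_range y) ?_
    rintro _ ⟨r, rfl⟩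
    exact hI.prop.2.2 r y hy
  rw [← h1] at hx
  obtain ⟨z, rfl⟩ := hx
  simp only [mul_assoc, hyy]

variable {L : Type*}

/-- substitution of the letter `a` for the variable `none`. -/
def sub (a : L) : FreeMonoid (Option L) →* FreeMonoid L := FreeMonoid.map (fun o => o.getD a)

/-- the embedding of words into variable words. -/
def emb : FreeMonoid L →* FreeMonoid (Option L) := FreeMonoid.map some

lemma sub_emb (a : L) (w : FreeMonoid L) : sub a (emb w) = w := by
  simp only [sub, emb]
  rw [FreeMonoid.map_map]
  have h : ((fun o : Option L => o.getD a) ∘ some) = id := by funext x; rfl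
  rw [h, FreeMonoid.map_id]
  rfl

lemma exists_e : ∃ e : Ultrafilter (FreeMonoid (Option L)),
    {u | ∃ u', u = FreeMonoid.of none * u'} ∈ e ∧
    ∀ a b : L, e.map (sub a) * e.map (sub b) = e.map (sub a) := by
  obtain ⟨I, -, hI⟩ := exists_min_LI (pure 1 : Ultrafilter (FreeMonoid L))
  obtain ⟨U, hU⟩ := hI.prop.2.1
  obtain ⟨J, hJ, hJm⟩ := exists_min_LI (U.map emb)
  have hJI : ∀ a : L, ∀ q ∈ J, q.map (sub a) ∈ I := by
    intro a q hq
    obtain ⟨r, rfl⟩ := hJ hq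
    simp only
    rw [map_mul _ (fun x y => by simp)]
    apply hI.prop.2.2
    rw [Ultrafilter.map_map]
    have : (sub a : _ → _) ∘ (emb : FreeMonoid L → _) = id := by
      funext w; exact sub_emb a w
    rw [this, Ultrafilter.map_id]
    exact hU
  set B : Set (FreeMonoid (Option L)) := {u | ∃ u', u = FreeMonoid.of none * u'} with hB
  obtain ⟨e, he, hee⟩ := exists_idempotent_in_compact_subsemigroup
    (M := Ultrafilter (FreeMonoid (Option L))) Ultrafilter.continuous_mul_left
    (J ∩ {q | B ∈ q}) (by
      obtain ⟨q, hq⟩ := hJm.prop.2.1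
      refine ⟨pure (FreeMonoid.of none) * q, hJm.prop.2.2 _ _ hq, ?_⟩
      have : ∀ᶠ m in ((pure (FreeMonoid.of none) * q : Ultrafilter (FreeMonoid (Option L))) :
          Filter (FreeMonoid (Option L))), m ∈ B := by
        rw [Ultrafilter.eventually_mul]
        simp only [Ultrafilter.coe_pure, eventually_pure]
        exact Eventually.of_forall fun m => ⟨m, rfl⟩
      exact this) (by
      exact (hJm.prop.1.inter (ultrafilter_isClosed_basic B)).isCompact) (by
      rintro x ⟨hx, hxB⟩ y ⟨hy, hyB⟩
      refine ⟨hJm.prop.2.2 _ _ hy, ?_⟩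
      have : ∀ᶠ m in ((x * y : Ultrafilter (FreeMonoid (Option L))) :
          Filter (FreeMonoid (Option L))), m ∈ B := by
        rw [Ultrafilter.eventually_mul]
        have hx' : ∀ᶠ m in (x : Filter (FreeMonoid (Option L))), m ∈ B := hxB
        filter_upwards [hx'] with m hm
        obtain ⟨u', rfl⟩ := hm
        exact Eventually.of_forall fun m' => ⟨u' * m', by rw [mul_assoc]⟩
      exact this)
  refine ⟨e, he.2, fun a b => ?_⟩
  refine right_id hI (hJI a e he.1) (hJI b e he.1) ?_
  rw [← map_mul _ (fun x y => by simp), hee]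

/-- one colour is persistently extendible. -/
lemma exists_persistent [Finite L] [Nonempty L] (c : List L → Prop) :
    ∃ (b : Prop) (Y : Set (List L)), Y.Nonempty ∧ (∀ w ∈ Y, c w ↔ b) ∧
      ∀ F : Set (List L), F.Finite → F ⊆ Y →
        ∃ u : List (Option L), ∀ w ∈ F, ∀ a : L, w ++ (none :: u).map (fun o => o.getD a) ∈ Y := by
  obtain ⟨e, heB, hee⟩ := exists_e (L := L)
  have a0 : L := Classical.arbitrary L
  obtain ⟨b, hb⟩ : ∃ b : Prop, ∀ᶠ w : FreeMonoid L in (e.map (sub a0) : Filter (FreeMonoid L)),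
      (c (FreeMonoid.toList w) ↔ b) := by
    rcases Ultrafilter.em (e.map (sub a0)) (fun w => c (FreeMonoid.toList w)) with h | h
    · exact ⟨True, h.mono fun w hw => by simpa using hw⟩
    · exact ⟨False, h.mono fun w hw => by simpa using hw⟩
  let X : Set (FreeMonoid L) := {w | c (FreeMonoid.toList w) ↔ b}
  let Y : Set (FreeMonoid L) :=
    {w | w ∈ X ∧ ∀ a : L, ∀ᶠ u in (e.map (sub a) : Filter (FreeMonoid L)), w * u ∈ X}
  have hX : ∀ᶠ w in (e.map (sub a0) : Filter (FreeMonoid L)), w ∈ X := hb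
  have hY : ∀ᶠ w in (e.map (sub a0) : Filter (FreeMonoid L)), w ∈ Y := by
    refine hX.and ?_
    rw [eventually_all]
    intro a
    have := hX
    rw [← hee a0 a, Ultrafilter.eventually_mul] at this
    exact this
  have hext : ∀ w ∈ Y, ∀ a : L, ∀ᶠ u in (e : Filter (FreeMonoid (Option L))), w * sub a u ∈ Y := by
    intro w hw a
    have h1 : ∀ᶠ u in (e.map (sub a) : Filter (FreeMonoid L)), w * u ∈ Y := by
      refine (hw.2 a).and ?_
      rw [eventually_all]
      intro a'
      have := hw.2 a
      rw [← hee a a', Ultrafilter.eventually_mul] at this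
      simpa [mul_assoc] using this
    exact h1
  refine ⟨b, Y, hY.exists, fun w hw => hw.1, ?_⟩
  intro F hF hFY
  have h1 : ∀ᶠ u in (e : Filter (FreeMonoid (Option L))), ∀ w ∈ F, ∀ a : L,
      (show FreeMonoid L from w) * sub a u ∈ Y := by
    rw [eventually_all_finite hF]
    intro w hw
    rw [eventually_all]
    intro a
    exact hext w (hFY hw) a
  have h2 : ∀ᶠ u in (e : Filter (FreeMonoid (Option L))), ∃ u', u = FreeMonoid.of none * u' := heB
  obtain ⟨u, hu, u', rfl⟩ := (h1.and h2).exists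
  exact ⟨u', hu⟩

/-- The Carlson-Simpson lemma. `H` codes an infinite word in letters `inl a` and variables,
a variable being named by its first position. -/
theorem carlson_simpson [Finite L] [Nonempty L] (c : List L → Prop) :
    ∃ (b : Prop) (H : ℕ → L ⊕ ℕ),
      (∀ k m, H k = Sum.inr m → m ≤ k ∧ H m = Sum.inr m) ∧
      (∀ n, ∃ m ≥ n, H m = Sum.inr m) ∧
      ∀ φ : ℕ → L, ∀ N, H N = Sum.inr N →
        (c ((List.range N).map (fun k => Sum.elim id φ (H k))) ↔ b) := by
  obtain ⟨b, Y, ⟨w0, hw0⟩, hYc, hY⟩ := exists_persistent c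
  -- prefixes
  have key : ∀ G : {G : List (L ⊕ ℕ) // ∀ φ : ℕ → L, G.map (Sum.elim id φ) ∈ Y},
      ∃ u : List (Option L), ∀ φ : ℕ → L,
        (G.1 ++ (none :: u).map (fun o => o.elim (Sum.inr G.1.length) Sum.inl)).map
          (Sum.elim id φ) ∈ Y := by
    intro G
    obtain ⟨u, hu⟩ := hY {w | ∃ φ : ℕ → L, w = G.1.map (Sum.elim id φ)}
      ((List.finite_length_eq L G.1.length).subset (by
        rintro w ⟨φ, rfl⟩; simp)) (by
        rintro w ⟨φ, rfl⟩; exact G.2 φ)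
    refine ⟨u, fun φ => ?_⟩
    have := hu _ ⟨φ, rfl⟩ (φ G.1.length)
    rw [List.map_append, List.map_map]
    convert this using 3
    funext o
    cases o <;> rfl
  choose u hu using key
  let S : ℕ → {G : List (L ⊕ ℕ) // ∀ φ : ℕ → L, G.map (Sum.elim id φ) ∈ Y} := fun n => Nat.rec
    ⟨w0.map Sum.inl, fun φ => by simpa [List.map_map] using hw0⟩ (fun _ G => ⟨_, hu G⟩) n
  let G : ℕ → List (L ⊕ ℕ) := fun n => (S n).1
  have hG : ∀ n, G (n+1) = G n ++
      (none :: u (S n)).map (fun o => o.elim (Sum.inr (G n).length) Sum.inl) := fun n => rfl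
  have hGY : ∀ n (φ : ℕ → L), (G n).map (Sum.elim id φ) ∈ Y := fun n => (S n).2
  have hlen : ∀ n, (G n).length < (G (n+1)).length := fun n => by
    rw [hG]; simp
  have hmono : StrictMono (fun n => (G n).length) := strictMono_nat_of_lt_succ hlen
  have hge : ∀ n, n ≤ (G n).length := fun n => hmono.id_le n
  have hpre : ∀ n m, n ≤ m → G n <+: G m := by
    intro n m h
    induction m, h using Nat.le_induction with
    | base => exact List.prefix_rfl
    | succ m hm ih => exact ih.trans (by rw [hG]; exact List.prefix_append _ _)
  let H : ℕ → L ⊕ ℕ := fun k => (G (k+1))[k]'(lt_of_lt_of_le (Nat.lt_succ_self k) (hge _))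
  have hH : ∀ n k (h : k < (G n).length), (G n)[k] = H k := by
    intro n k h
    have hk : k < (G (k+1)).length := lt_of_lt_of_le (Nat.lt_succ_self k) (hge _)
    rcases le_total n (k+1) with h' | h'
    · exact (hpre _ _ h').getElem h
    · exact ((hpre _ _ h').getElem hk).symm
  have hHlen : ∀ n, H (G n).length = Sum.inr (G n).length := by
    intro n
    rw [← hH (n+1) _ (hlen n)]
    simp [hG]
  have hloc : ∀ n k m, k < (G n).length → H k = Sum.inr m → m ≤ k ∧ ∃ n', m = (G n').length := by
    intro n
    induction n with
    | zero =>
      intro k m hk hm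
      rw [← hH 0 k hk] at hm
      have : (G 0)[k] = ((w0.map Sum.inl : List (L ⊕ ℕ)))[k]'hk := rfl
      rw [this, List.getElem_map] at hm
      exact absurd hm (by simp)
    | succ n ih =>
      intro k m hk hm
      by_cases hkn : k < (G n).length
      · exact ih k m hkn hm
      · have h0 := hH (n+1) k hk
        simp only [hG] at h0
        rw [List.getElem_append_right (by omega), List.getElem_map, hm] at h0
        revert h0
        generalize ((none :: u (S n))[k - (G n).length]'_) = o
        cases o with
        | none =>
          intro h0
          simp only [Option.elim_none, Sum.inr.injEq] at h0
          exact ⟨by omega, n, h0.symm⟩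
        | some a => intro h0; simp at h0
  refine ⟨b, H, ?_, ?_, ?_⟩
  · intro k m h
    obtain ⟨h1, n', rfl⟩ := hloc (k+1) k m (lt_of_lt_of_le (Nat.lt_succ_self k) (hge _)) h
    exact ⟨h1, hHlen n'⟩
  · intro n
    exact ⟨(G n).length, hge n, hHlen n⟩
  · intro φ N hN
    obtain ⟨-, n', rfl⟩ := hloc (N+1) N N (lt_of_lt_of_le (Nat.lt_succ_self N) (hge _)) hN
    have : (List.range (G n').length).map (fun k => Sum.elim id φ (H k)) =
        (G n').map (Sum.elim id φ) := by
      apply List.ext_getElem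
      · simp
      · intro i h1 h2
        simp only [List.length_map] at h2
        simp [hH n' i h2]
    rw [this]
    exact hYc _ (hGY n' φ)

end CSW

/-! ### Part 3: combinatorics of the cubes of `𝓔_∞` -/

namespace EM

open Set

/-- `l` is the least element of its `A`-class. -/
def IsM (A : Einf) (l : ℕ) : Prop := ∀ m, A.1 m l → l ≤ m

/-- the least element of the `A`-class of `x`. -/
noncomputable def mn (A : Einf) (x : ℕ) : ℕ := sInf {m | A.1 m x}

lemma rf (A : Einf) (x : ℕ) : A.1 x x := A.1.refl' x
lemma sy {A : Einf} {x y : ℕ} (h : A.1 x y) : A.1 y x := A.1.symm' h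
lemma tr {A : Einf} {x y z : ℕ} (h : A.1 x y) (h' : A.1 y z) : A.1 x z := A.1.trans' h h'

lemma mn_rel (A : Einf) (x : ℕ) : A.1 (mn A x) x :=
  Nat.sInf_mem (s := {m | A.1 m x}) ⟨x, rf A x⟩

lemma mn_le_of_rel {A : Einf} {m x : ℕ} (h : A.1 m x) : mn A x ≤ m := Nat.sInf_le h

lemma mn_le (A : Einf) (x : ℕ) : mn A x ≤ x := mn_le_of_rel (rf A x)

lemma mn_eq_iff {A : Einf} {x y : ℕ} : mn A x = mn A y ↔ A.1 x y := by
  constructor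
  · intro h
    have := mn_rel A x
    rw [h] at this
    exact tr (sy this) (mn_rel A y)
  · intro h
    exact le_antisymm (mn_le_of_rel (tr (mn_rel A y) (sy h))) (mn_le_of_rel (tr (mn_rel A x) h))

lemma mn_mn (A : Einf) (x : ℕ) : mn A (mn A x) = mn A x := mn_eq_iff.2 (mn_rel A x)

lemma isM_iff {A : Einf} {l : ℕ} : IsM A l ↔ mn A l = l := by
  constructor
  · intro h
    exact le_antisymm (mn_le A l) (h _ (mn_rel A l))
  · intro h m hm
    rw [← h]
    exact mn_le_of_rel hm

lemma isM_mn (A : Einf) (x : ℕ) : IsM A (mn A x) := isM_iff.2 (mn_mn A x)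

lemma exists_isM_ge (A : Einf) (n : ℕ) : ∃ l, n ≤ l ∧ IsM A l := by
  by_contra hcon
  push Not at hcon
  have hlt : ∀ x, mn A x < n := fun x => by
    by_contra h
    exact hcon _ (not_lt.1 h) (isM_mn A x)
  have : Infinite (Quotient A.1) := A.2
  let f : Quotient A.1 → Fin n := fun q => ⟨mn A q.out, hlt _⟩
  have hf : Function.Injective f := by
    intro q r h
    have h1 : mn A q.out = mn A r.out := congrArg Fin.val h
    have h2 := mn_eq_iff.1 h1
    rw [← Quotient.out_eq q, ← Quotient.out_eq r]
    exact Quotient.sound h2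
  exact not_injective_infinite_finite f hf

/-- The next minimum. -/
lemma exists_next (A : Einf) (l : ℕ) :
    ∃ l', l < l' ∧ IsM A l' ∧ ∀ k, l < k → k < l' → ¬ IsM A k := by
  have h : ∃ l', l < l' ∧ IsM A l' := by
    obtain ⟨m, h1, h2⟩ := exists_isM_ge A (l + 1)
    exact ⟨m, h1, h2⟩
  refine ⟨Nat.find h, (Nat.find_spec h).1, (Nat.find_spec h).2, ?_⟩
  intro k hk hk' hM
  exact Nat.find_min h hk' ⟨hk, hM⟩

lemma infinite_of (S : Setoid ℕ) (h : ∀ n, ∃ l, n ≤ l ∧ ∀ m, S m l → l ≤ m) :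
    Infinite (Quotient S) := by
  have hinf : {l | ∀ m, S m l → l ≤ m}.Infinite := by
    rw [Set.infinite_iff_exists_gt]
    intro n
    obtain ⟨l, hl, hm⟩ := h (n + 1)
    exact ⟨l, hm, hl⟩
  have := hinf.to_subtype
  refine Infinite.of_injective
    (fun l : {l | ∀ m, S m l → l ≤ m} => (Quotient.mk S l.1)) ?_
  intro a b hab
  have hab' : S a.1 b.1 := Quotient.exact hab
  exact Subtype.ext (le_antisymm (a.2 _ (S.symm' hab')) (b.2 _ hab'))

/-- A partition from a canonical label function. -/
def ofLab (f : ℕ → ℕ) (h1 : ∀ x, f x ≤ x) (h3 : ∀ n, ∃ l, n ≤ l ∧ f l = l) : Einf :=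
  ⟨Setoid.ker f, infinite_of _ (fun n => by
    obtain ⟨l, hl, hf⟩ := h3 n
    refine ⟨l, hl, fun m hm => ?_⟩
    have : f m = f l := hm
    rw [← hf, ← this]
    exact h1 m)⟩

lemma ofLab_rel {f : ℕ → ℕ} {h1 h3} {x y : ℕ} : (ofLab f h1 h3).1 x y ↔ f x = f y := Iff.rfl

lemma ofLab_isM {f : ℕ → ℕ} {h1 h3} {l : ℕ} (h : f l = l) : IsM (ofLab f h1 h3) l := by
  intro m hm
  have : f m = f l := hm
  rw [← h, ← this]
  exact h1 m

lemma mn_ofLab {f : ℕ → ℕ} {h1 h3} (h2 : ∀ x, f (f x) = f x) (x : ℕ) :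
    mn (ofLab f h1 h3) x = f x := by
  rw [← isM_iff.1 (ofLab_isM (h1 := h1) (h3 := h3) (h2 x)), mn_eq_iff]
  exact (h2 x).symm

lemma ext' {A B : Einf} (h : ∀ i j, A.1 i j ↔ B.1 i j) : A = B :=
  Subtype.ext (Setoid.ext h)

lemma co_refl (A : Einf) : Coarsen A A := fun _ _ h => h

lemma co_trans {A B C : Einf} (h : Coarsen A B) (h' : Coarsen B C) : Coarsen A C :=
  fun i j hh => h i j (h' i j hh)

lemma isM_co {A B : Einf} {l : ℕ} (h : Coarsen A B) (hl : IsM A l) : IsM B l :=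
  fun m hm => hl m (h _ _ hm)

lemma co_mn {A B : Einf} (h : Coarsen A B) (x : ℕ) : mn A (mn B x) = mn A x :=
  mn_eq_iff.2 (h _ _ (mn_rel B x))

lemma mn_co {A B : Einf} (h : Coarsen A B) (x : ℕ) : mn B (mn A x) = mn A x :=
  isM_iff.1 (isM_co h (isM_mn A x))

/-- to be coarser than a labelled partition -/
lemma co_ofLab {D : Einf} {f : ℕ → ℕ} {h1 h3} (h : ∀ x, D.1 x (f x)) :
    Coarsen D (ofLab f h1 h3) := by
  intro i j hij
  have : f i = f j := hij
  have h2 := h i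
  rw [this] at h2
  exact tr h2 (sy (h j))

lemma ofLab_co {B : Einf} {f : ℕ → ℕ} {h1 h3} (h : ∀ x, f (mn B x) = f x) :
    Coarsen (ofLab f h1 h3) B := by
  intro i j hij
  show f i = f j
  rw [← h i, ← h j, mn_eq_iff.2 hij]

/-- agreement below `l` -/
def Agr (l : ℕ) (A D : Einf) : Prop := ∀ i j, i < l → j < l → (D.1 i j ↔ A.1 i j)

lemma Agr.rfl' {l : ℕ} {A : Einf} : Agr l A A := fun _ _ _ _ => Iff.rfl
lemma Agr.symm {l : ℕ} {A B : Einf} (h : Agr l A B) : Agr l B A :=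
  fun i j hi hj => (h i j hi hj).symm
lemma Agr.trans {l : ℕ} {A B C : Einf} (h : Agr l A B) (h' : Agr l B C) : Agr l A C :=
  fun i j hi hj => (h' i j hi hj).trans (h i j hi hj)
lemma Agr.mono {l l' : ℕ} {A B : Einf} (h : Agr l A B) (hl : l' ≤ l) : Agr l' A B :=
  fun i j hi hj => h i j (hi.trans_le hl) (hj.trans_le hl)

/-- The cube `[A ↾ l, B]`. -/
def Cu (l : ℕ) (A B : Einf) : Set Einf := {D | Coarsen D B ∧ IsM D l ∧ Agr l A D}

lemma Cu_agr {l : ℕ} {A A' B : Einf} (h : Agr l A A') : Cu l A B = Cu l A' B := by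
  ext D
  exact ⟨fun hD => ⟨hD.1, hD.2.1, h.symm.trans hD.2.2⟩, fun hD => ⟨hD.1, hD.2.1, h.trans hD.2.2⟩⟩

lemma Cu_co {l : ℕ} {A B B' : Einf} (h : Coarsen B' B) : Cu l A B' ⊆ Cu l A B :=
  fun _ hD => ⟨co_trans hD.1 h, hD.2⟩

lemma self_mem {l : ℕ} {A : Einf} (h : IsM A l) : A ∈ Cu l A A := ⟨co_refl A, h, Agr.rfl'⟩

lemma Cu_trans {l : ℕ} {A B D G : Einf} (h : D ∈ Cu l A B) (h' : G ∈ Cu l D D) : G ∈ Cu l A B :=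
  ⟨co_trans h'.1 h.1, h'.2.1, h.2.2.trans h'.2.2⟩

lemma meet {l : ℕ} {A B : Einf} (hAB : Coarsen A B) (hA : IsM A l) :
    ∃ D₀ ∈ Cu l A B, Cu l A B ⊆ Cu l D₀ D₀ := by
  have hB := isM_iff.1 (isM_co hAB hA)
  let f : ℕ → ℕ := fun x => if mn B x < l then mn A (mn B x) else mn B x
  have h1 : ∀ x, f x ≤ x := by
    intro x
    simp only [f]
    split_ifs
    · exact (mn_le _ _).trans (mn_le _ _)
    · exact mn_le _ _
  have h3 : ∀ n, ∃ k, n ≤ k ∧ f k = k := by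
    intro n
    obtain ⟨k, hk, hM⟩ := exists_isM_ge B (max n l)
    refine ⟨k, (le_max_left _ _).trans hk, ?_⟩
    have := isM_iff.1 hM
    simp only [f, this]
    rw [if_neg (not_lt.2 ((le_max_right _ _).trans hk))]
  have hmem : ofLab f h1 h3 ∈ Cu l A B := by
    refine ⟨ofLab_co (fun x => by simp only [f, mn_mn]), ofLab_isM (by simp [f, hB]), ?_⟩
    intro i j hi hj
    rw [ofLab_rel]
    simp only [f, if_pos ((mn_le B i).trans_lt hi), if_pos ((mn_le B j).trans_lt hj), co_mn hAB,
      mn_eq_iff]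
  refine ⟨ofLab f h1 h3, hmem, ?_⟩
  intro D hD
  refine ⟨co_ofLab fun x => ?_, hD.2.1, hmem.2.2.symm.trans hD.2.2⟩
  have hx : D.1 x (mn B x) := hD.1 _ _ (sy (mn_rel B x))
  simp only [f]
  split_ifs with h
  · refine tr hx ((hD.2.2 _ _ h ((mn_le _ _).trans_lt h)).2 (sy (mn_rel A _)))
  · exact hx

lemma lift' {l : ℕ} {A B D : Einf} (hD : D ∈ Cu l A B) :
    ∃ B' ∈ Cu l B B, Cu l A B' ⊆ Cu l A D := by
  have hDl := isM_iff.1 hD.2.1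
  have hBl := isM_iff.1 (isM_co hD.1 hD.2.1)
  let f : ℕ → ℕ := fun x => if mn B x < l then mn B x else mn D x
  have h1 : ∀ x, f x ≤ x := by
    intro x
    simp only [f]
    split_ifs <;> exact mn_le _ _
  have h3 : ∀ n, ∃ k, n ≤ k ∧ f k = k := by
    intro n
    obtain ⟨k, hk, hM⟩ := exists_isM_ge D (max n l)
    refine ⟨k, (le_max_left _ _).trans hk, ?_⟩
    have := isM_iff.1 hM
    have := isM_iff.1 (isM_co hD.1 hM)
    simp only [f, *]
    simp
  have hmem : ofLab f h1 h3 ∈ Cu l B B := by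
    refine ⟨ofLab_co (fun x => by simp only [f, mn_mn, co_mn hD.1]),
      ofLab_isM (by simp [f, hBl, hDl]), ?_⟩
    intro i j hi hj
    rw [ofLab_rel]
    simp only [f, if_pos ((mn_le B i).trans_lt hi), if_pos ((mn_le B j).trans_lt hj), mn_eq_iff]
  refine ⟨ofLab f h1 h3, hmem, ?_⟩
  intro G hG
  refine ⟨?_, hG.2⟩
  have key : ∀ x, G.1 x (mn D x) := by
    intro x
    by_cases h : mn B x < l
    · have h2 : G.1 x (mn B x) := co_trans hG.1 hmem.1 _ _ (sy (mn_rel B x))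
      have h4 : mn D x ≤ mn B x := by rw [← co_mn hD.1]; exact mn_le _ _
      have h5 : D.1 (mn B x) (mn D x) := tr (hD.1 _ _ (mn_rel B x)) (sy (mn_rel D x))
      refine tr h2 ?_
      rw [hG.2.2 _ _ h (h4.trans_lt h), ← hD.2.2 _ _ h (h4.trans_lt h)]
      exact h5
    · apply hG.1
      rw [ofLab_rel]
      simp only [f, if_neg h, mn_co hD.1, mn_mn]
      simp
  intro i j hij
  have := key i
  rw [mn_eq_iff.2 hij] at this
  exact tr this (sy (key j))

/-- The fusion lemma. -/
lemma fusion (Bs : Einf) (R : ℕ → Einf → Prop)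
    (anti : ∀ l B' B'', B'' ∈ Cu l B' B' → R l B' → R l B'')
    (dense : ∀ l B, Coarsen B Bs → IsM B l → ∃ B' ∈ Cu l B B, R l B')
    {B : Einf} {l₀ : ℕ} (hB : Coarsen B Bs) (hl₀ : IsM B l₀) :
    ∃ B' ∈ Cu l₀ B B, ∀ l, l₀ ≤ l → IsM B' l → R l B' := by
  have step : ∀ s : {s : Einf × ℕ // Coarsen s.1 Bs ∧ IsM s.1 s.2},
      ∃ t : {s : Einf × ℕ // Coarsen s.1 Bs ∧ IsM s.1 s.2},
        t.1.1 ∈ Cu s.1.2 s.1.1 s.1.1 ∧ R s.1.2 t.1.1 ∧ s.1.2 < t.1.2 ∧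
          ∀ k, s.1.2 < k → k < t.1.2 → ¬ IsM t.1.1 k := by
    rintro ⟨⟨B, l⟩, h1, h2⟩
    obtain ⟨B', hB', hR⟩ := dense l B h1 h2
    obtain ⟨l', hl', hM, hn⟩ := exists_next B' l
    exact ⟨⟨⟨B', l'⟩, co_trans hB'.1 h1, hM⟩, hB', hR, hl', hn⟩
  choose F hF using step
  let S : ℕ → {s : Einf × ℕ // Coarsen s.1 Bs ∧ IsM s.1 s.2} :=
    fun n => Nat.rec ⟨⟨B, l₀⟩, hB, hl₀⟩ (fun _ s => F s) n
  let b : ℕ → Einf := fun n => (S n).1.1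
  let e : ℕ → ℕ := fun n => (S n).1.2
  have hb : ∀ n, b (n + 1) ∈ Cu (e n) (b n) (b n) := fun n => (hF (S n)).1
  have hR : ∀ n, R (e n) (b (n + 1)) := fun n => (hF (S n)).2.1
  have he : ∀ n, e n < e (n + 1) := fun n => (hF (S n)).2.2.1
  have hn : ∀ n k, e n < k → k < e (n + 1) → ¬ IsM (b (n + 1)) k := fun n => (hF (S n)).2.2.2
  have hM : ∀ n, IsM (b n) (e n) := fun n => (S n).2.2
  have hmono : StrictMono e := strictMono_nat_of_lt_succ he
  have hbm : ∀ n m, n ≤ m → b m ∈ Cu (e n) (b n) (b n) := by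
    intro n m h
    induction m, h using Nat.le_induction with
    | base => exact self_mem (hM n)
    | succ m h ih =>
      refine ⟨co_trans (hb m).1 ih.1, ?_, ih.2.2.trans ((hb m).2.2.mono (hmono.monotone h))⟩
      intro k hk
      by_contra hlt
      rcases h.eq_or_lt with rfl | h'
      · exact hlt ((hb n).2.1 k hk)
      have h1 : e n < e m := hmono h'
      exact hlt (ih.2.1 k (((hb m).2.2 _ _ (by omega) h1).1 hk))
  let T : Setoid ℕ := {
    r := fun x y => ∃ n, (b n).1 x y
    iseqv := ⟨fun x => ⟨0, rf _ _⟩, fun ⟨n, h⟩ => ⟨n, sy h⟩, fun {x y z} ⟨n, h⟩ ⟨m, h'⟩ =>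
      ⟨max n m, tr ((hbm n _ (le_max_left _ _)).1 _ _ h)
        ((hbm m _ (le_max_right _ _)).1 _ _ h')⟩⟩ }
  have hTM : ∀ n m, T m (e n) → e n ≤ m := by
    rintro n m ⟨k, hk⟩
    exact (hbm n (max n k) (le_max_left _ _)).2.1 m ((hbm k _ (le_max_right _ _)).1 _ _ hk)
  let Bi : Einf := ⟨T, infinite_of T (fun n => ⟨e n, hmono.id_le n, hTM n⟩)⟩
  have hBi : ∀ n, Bi ∈ Cu (e n) (b n) (b n) := by
    intro n
    refine ⟨fun i j h => ⟨n, h⟩, hTM n, fun i j hi hj => ⟨?_, fun h => ⟨n, h⟩⟩⟩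
    rintro ⟨k, hk⟩
    exact ((hbm n (max n k) (le_max_left _ _)).2.2 i j hi hj).1
      ((hbm k _ (le_max_right _ _)).1 _ _ hk)
  refine ⟨Bi, hBi 0, ?_⟩
  intro l hl hlM
  have hex : ∃ n, l < e (n + 1) := ⟨l, hmono.id_le (l + 1)⟩
  obtain ⟨n, hn1, hn2⟩ : ∃ n, e n ≤ l ∧ l < e (n + 1) := by
    refine ⟨Nat.find hex, ?_, Nat.find_spec hex⟩
    rcases hk : Nat.find hex with _ | k
    · exact hl
    · exact not_lt.1 (Nat.find_min hex (m := k) (by omega))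
  have hBn : Bi ∈ Cu (e n) (b (n + 1)) (b (n + 1)) :=
    ⟨(hBi (n + 1)).1, hTM n, (hBi (n + 1)).2.2.mono (he n).le⟩
  rcases hn1.eq_or_lt with rfl | hlt
  · exact anti _ _ _ hBn (hR n)
  · exact absurd (isM_co hBn.1 hlM) (hn n l hlt hn2)

lemma finite_dense {ι : Type*} [Finite ι] (Bs : Einf) (l : ℕ) (R : ι → Einf → Prop)
    (anti : ∀ i B' B'', B'' ∈ Cu l B' B' → R i B' → R i B'')
    (dense : ∀ i B, Coarsen B Bs → IsM B l → ∃ B' ∈ Cu l B B, R i B')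
    {B : Einf} (hB : Coarsen B Bs) (hl : IsM B l) : ∃ B' ∈ Cu l B B, ∀ i, R i B' := by
  have := Fintype.ofFinite ι
  have key : ∀ s : Finset ι, ∃ B' ∈ Cu l B B, ∀ i ∈ s, R i B' := by
    intro s
    induction s using Finset.induction_on with
    | empty => exact ⟨B, self_mem hl, by simp⟩
    | insert a s _ ih =>
      obtain ⟨B', hB', h'⟩ := ih
      obtain ⟨B'', hB'', h''⟩ := dense a B' (co_trans hB'.1 hB) hB'.2.1
      refine ⟨B'', Cu_trans hB' hB'', ?_⟩
      intro i hi
      rcases Finset.mem_insert.1 hi with rfl | hi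
      · exact h''
      · exact anti _ _ _ hB'' (h' i hi)
  obtain ⟨B', h, h'⟩ := key Finset.univ
  exact ⟨B', h, fun i => h' i (Finset.mem_univ i)⟩

/-- the restriction of `A` below `l` -/
def key (l : ℕ) (A : Einf) : Set (Fin l × Fin l) := {p | A.1 p.1 p.2}

lemma agr_of_key {l : ℕ} {A A' : Einf} (h : key l A = key l A') : Agr l A A' := by
  intro i j hi hj
  have : ((⟨i, hi⟩, ⟨j, hj⟩) : Fin l × Fin l) ∈ key l A' ↔
    ((⟨i, hi⟩, ⟨j, hj⟩) : Fin l × Fin l) ∈ key l A := by rw [h]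
  exact this

lemma key_dense (Bs : Einf) (l : ℕ) (T : Einf → Einf → Prop)
    (hkey : ∀ A A₀ B, Agr l A₀ A → T A₀ B → T A B)
    (anti : ∀ A B' B'', B'' ∈ Cu l B' B' → T A B' → T A B'')
    (dense : ∀ A B, Coarsen B Bs → Coarsen A B → IsM A l → ∃ B' ∈ Cu l B B, T A B')
    {B : Einf} (hB : Coarsen B Bs) (hl : IsM B l) :
    ∃ B' ∈ Cu l B B, ∀ A, Coarsen A B' → IsM A l → T A B' := by
  obtain ⟨B', h, h'⟩ := finite_dense Bs l
    (fun (κ : Set (Fin l × Fin l)) C => ∀ A, Coarsen A C → IsM A l → key l A = κ → T A C)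
    (fun κ C C' hC' hR A hA hAl hAκ => anti _ _ _ hC' (hR A (co_trans hA hC'.1) hAl hAκ))
    (by
      intro κ C hC hCl
      by_cases hex : ∃ A, Coarsen A C ∧ IsM A l ∧ key l A = κ
      · obtain ⟨A, hA, hAl, rfl⟩ := hex
        obtain ⟨C', hC', hT⟩ := dense A C hC hA hAl
        exact ⟨C', hC', fun A' _ _ hk => hkey _ _ _ (agr_of_key hk.symm) hT⟩
      · push Not at hex
        exact ⟨C, self_mem hCl, fun A hA hAl hk => absurd hk (hex A hA hAl)⟩) hB hl
  exact ⟨B', h, fun A hA hAl => h' _ A hA hAl rfl⟩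

lemma Q_fusion (Q : ℕ → Set Einf → Prop) (anti : ∀ l S S', S' ⊆ S → Q l S → Q l S')
    (dense : ∀ l D, IsM D l → ∃ D' ∈ Cu l D D, Q l (Cu l D' D'))
    {B : Einf} {l₀ : ℕ} (hl₀ : IsM B l₀) :
    ∃ B' ∈ Cu l₀ B B, ∀ l, l₀ ≤ l → ∀ A, Coarsen A B' → IsM A l → Q l (Cu l A B') := by
  obtain ⟨B', hB', h⟩ := fusion B
    (fun l C => ∀ A, Coarsen A C → IsM A l → Q l (Cu l A C))
    (fun l C C' hC' hR A hA hAl => anti _ _ _ (Cu_co hC'.1) (hR A (co_trans hA hC'.1) hAl))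
    (by
      intro l C hC hCl
      refine key_dense B l (fun A C => Q l (Cu l A C)) ?_ ?_ ?_ hC hCl
      · intro A A₀ C h hQ
        rwa [← Cu_agr h]
      · intro A C C' hC' hQ
        exact anti _ _ _ (Cu_co hC'.1) hQ
      · intro A C _ hAC hAl
        obtain ⟨D₀, hD₀, -⟩ := meet hAC hAl
        obtain ⟨D, hD, hQ⟩ := dense l D₀ hD₀.2.1
        have hDC := Cu_trans hD₀ hD
        obtain ⟨C', hC', hsub⟩ := lift' hDC
        refine ⟨C', hC', anti _ _ _ hsub ?_⟩
        rwa [Cu_agr hDC.2.2])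
    (co_refl B) hl₀
  exact ⟨B', hB', fun l hl A hA hAl => h l hl (isM_co hA hAl) A hA hAl⟩

end EM

/-! ### Part 4: the pigeonhole principle for `𝓔_∞` -/

namespace EM

open Set

/-- conditions on a pattern -/
def GoodP {L : Type*} (G : ℕ → L ⊕ ℕ) : Prop :=
  (∀ k m, G k = Sum.inr m → m ≤ k ∧ G m = Sum.inr m) ∧ ∀ n, ∃ m, n ≤ m ∧ G m = Sum.inr m

lemma exists_enum (D₀ : Einf) (l : ℕ) :
    ∃ p : ℕ → ℕ, StrictMono p ∧ ∀ y, (∃ k, p k = y) ↔ (l < y ∧ IsM D₀ y) := by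
  have hinf : {k | l < k ∧ IsM D₀ k}.Infinite := by
    rw [Set.infinite_iff_exists_gt]
    intro n
    obtain ⟨k, hk, hM⟩ := exists_isM_ge D₀ (max n l + 1)
    refine ⟨k, ⟨?_, hM⟩, ?_⟩
    · exact lt_of_le_of_lt (le_max_right n l) hk
    · exact lt_of_le_of_lt (le_max_left n l) hk
  refine ⟨Nat.nth (fun k => l < k ∧ IsM D₀ k), Nat.nth_strictMono hinf, fun y => ?_⟩
  have := Nat.range_nth_of_infinite hinf
  have h2 : y ∈ range (Nat.nth (fun k => l < k ∧ IsM D₀ k)) ↔ y ∈ {k | l < k ∧ IsM D₀ k} := by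
    rw [this]
  exact h2

/-- The value of a pattern symbol. -/
noncomputable def pval (D₀ : Einf) (l : ℕ) (p : ℕ → ℕ) : Fin (l + 1) ⊕ ℕ → ℕ :=
  Sum.elim (fun a => mn D₀ a.1) p

lemma exists_sub (D₀ : Einf) {l : ℕ} (hl : IsM D₀ l) {p : ℕ → ℕ} (hp : StrictMono p)
    (hpr : ∀ y, (∃ k, p k = y) ↔ (l < y ∧ IsM D₀ y))
    (G : ℕ → Fin (l + 1) ⊕ ℕ) (hG : GoodP G) :
    ∃ D ∈ Cu l D₀ D₀, ∃ f : ℕ → ℕ, (∀ x y, D.1 x y ↔ f x = f y) ∧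
      (∀ x, mn D₀ x ≤ l → f x = mn D₀ x) ∧
      (∀ x k, mn D₀ x = p k → f x = pval D₀ l p (G k)) ∧
      (∀ k, D.1 (p k) (pval D₀ l p (G k))) := by
  have hpl : ∀ k, l < p k := fun k => ((hpr _).1 ⟨k, rfl⟩).1
  have hpM : ∀ k, mn D₀ (p k) = p k := fun k => isM_iff.1 ((hpr _).1 ⟨k, rfl⟩).2
  have hq : ∀ k, Function.invFun p (p k) = k := Function.leftInverse_invFun hp.injective
  let f : ℕ → ℕ := fun x =>
    if mn D₀ x ≤ l then mn D₀ x else pval D₀ l p (G (Function.invFun p (mn D₀ x)))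
  have f1 : ∀ x, mn D₀ x ≤ l → f x = mn D₀ x := fun x hx => by simp only [f, if_pos hx]
  have f2 : ∀ x k, mn D₀ x = p k → f x = pval D₀ l p (G k) := fun x k hx => by
    simp only [f, hx, hq]
    rw [if_neg (not_le.2 (hpl k))]
  have hcase : ∀ x, mn D₀ x ≤ l ∨ ∃ k, mn D₀ x = p k := by
    intro x
    rcases le_or_gt (mn D₀ x) l with h | h
    · exact Or.inl h
    · obtain ⟨k, hk⟩ := (hpr (mn D₀ x)).2 ⟨h, isM_mn _ _⟩
      exact Or.inr ⟨k, hk.symm⟩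
  have hval : ∀ k, pval D₀ l p (G k) ≤ p k := by
    intro k
    rcases h : G k with a | m
    · have h1 : mn D₀ a.1 ≤ a.1 := mn_le _ _
      have h2 := a.2
      have h3 := hpl k
      show mn D₀ a.1 ≤ p k
      omega
    · exact hp.monotone (hG.1 k m h).1
  have h1 : ∀ x, f x ≤ x := by
    intro x
    rcases hcase x with h | ⟨k, h⟩
    · rw [f1 x h]
      exact mn_le _ _
    · rw [f2 x k h]
      refine (hval k).trans ?_
      rw [← h]
      exact mn_le _ _
  have h3 : ∀ n, ∃ k, n ≤ k ∧ f k = k := by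
    intro n
    obtain ⟨m, hm, hGm⟩ := hG.2 n
    refine ⟨p m, hm.trans (hp.id_le m), ?_⟩
    rw [f2 _ _ (hpM m), hGm]
    rfl
  refine ⟨ofLab f h1 h3, ⟨ofLab_co fun x => ?_, ofLab_isM ?_, ?_⟩, f, fun x y => Iff.rfl, f1, f2, ?_⟩
  · simp only [f, mn_mn]
  · have := isM_iff.1 hl
    rw [f1 _ this.le, this]
  · intro i j hi hj
    rw [ofLab_rel, f1 _ ((mn_le _ _).trans hi.le), f1 _ ((mn_le _ _).trans hj.le), mn_eq_iff]
  · intro k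
    rw [ofLab_rel, f2 _ _ (hpM k)]
    rcases h : G k with a | m
    · have h4 : mn D₀ (mn D₀ a.1) ≤ l := by
        have h1 : mn D₀ a.1 ≤ a.1 := mn_le _ _
        have h2 := a.2
        rw [mn_mn]
        omega
      show mn D₀ a.1 = f (mn D₀ a.1)
      rw [f1 _ h4, mn_mn]
    · show p m = f (p m)
      rw [f2 _ _ (hpM m), (hG.1 k m h).2]
      rfl

/-- the pattern of a finite word -/
def wpat {L : Type*} (w : List L) : ℕ → L ⊕ ℕ := fun k => (w[k]?).elim (Sum.inr k) Sum.inl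

lemma wpat_good {L : Type*} (w : List L) : GoodP (wpat w) := by
  constructor
  · intro k m h
    unfold wpat at h
    rcases hk : w[k]? with _ | a
    · rw [hk] at h
      have : k = m := by simpa using h
      subst this
      exact ⟨le_rfl, by simp [wpat, hk]⟩
    · rw [hk] at h
      simp at h
  · intro n
    refine ⟨max n w.length, le_max_left _ _, ?_⟩
    have : w[max n w.length]? = none := List.getElem?_eq_none (le_max_right _ _)
    simp [wpat, this]

/-- Next minimum after `l`. -/
def Nxt (A : Einf) (l l' : ℕ) : Prop := l < l' ∧ IsM A l' ∧ ∀ k, l < k → k < l' → ¬ IsM A k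

theorem pigeon {D₀ : Einf} {l : ℕ} (hl : IsM D₀ l) (Acc : ℕ → Einf → Prop)
    (hAcc : ∀ l' A A', Agr l' A A' → Acc l' A → Acc l' A') :
    ∃ D ∈ Cu l D₀ D₀, (∀ A ∈ Cu l D D, ∀ l', Nxt A l l' → Acc l' A) ∨
      (∀ A ∈ Cu l D D, ∀ l', Nxt A l l' → ¬ Acc l' A) := by
  obtain ⟨p, hp, hpr⟩ := exists_enum D₀ l
  have hpl : ∀ k, l < p k := fun k => ((hpr _).1 ⟨k, rfl⟩).1
  choose Aw hAw fw fw0 fw1 fw2 _ using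
    fun w : List (Fin (l + 1)) => exists_sub D₀ hl hp hpr (wpat w) (wpat_good w)
  obtain ⟨b, H, hH1, hH2, hH3⟩ :=
    CSW.carlson_simpson (L := Fin (l + 1)) (fun w => Acc (p w.length) (Aw w))
  have hGood : GoodP H := ⟨hH1, fun n => by obtain ⟨m, h, h'⟩ := hH2 n; exact ⟨m, h, h'⟩⟩
  obtain ⟨D, hD, f, f0, f1, f2, f3⟩ := exists_sub D₀ hl hp hpr H hGood
  have main : ∀ A ∈ Cu l D D, ∀ l', Nxt A l l' → (Acc l' A ↔ b) := by
    intro A hA l' hl'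
    have hA0 : A ∈ Cu l D₀ D₀ := Cu_trans hD hA
    have hDM : IsM D l' := isM_co hA.1 hl'.2.1
    obtain ⟨N, rfl⟩ := (hpr l').2 ⟨hl'.1, isM_co hD.1 hDM⟩
    have hN : H N = Sum.inr N := by
      have h := hDM _ (sy (f3 N))
      rcases hN : H N with a | m
      · rw [hN] at h
        have h' : p N ≤ mn D₀ a.1 := h
        have h1 : mn D₀ a.1 ≤ a.1 := mn_le _ _
        have h2 := a.2
        have h3 := hpl N
        omega
      · rw [hN] at h
        have h' : p N ≤ p m := h
        have h1 := hp.le_iff_le.1 h'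
        rw [le_antisymm (hH1 _ _ hN).1 h1]
    let φ : ℕ → Fin (l + 1) := fun m => ⟨min (mn A (p m)) l, by omega⟩
    have hφ : ∀ m, m < N → (φ m).1 = mn A (p m) := by
      intro m hm
      apply min_eq_left
      by_contra hlt
      exact hl'.2.2 _ (not_le.1 hlt) ((mn_le _ _).trans_lt (hp hm)) (isM_mn _ _)
    have fact : ∀ y, y ≤ l → mn A y = mn D₀ y := by
      intro y hy
      rcases hy.eq_or_lt with rfl | hy
      · rw [isM_iff.1 hl, isM_iff.1 hA.2.1]
      · apply le_antisymm
        · exact mn_le_of_rel (hA0.1 _ _ (mn_rel _ _))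
        · exact mn_le_of_rel ((hA0.2.2 _ _ ((mn_le _ _).trans_lt hy) hy).1 (mn_rel _ _))
    have hc := hH3 φ N hN
    set w : List (Fin (l + 1)) := (List.range N).map (fun k => Sum.elim id φ (H k)) with hw
    have hlen : w.length = N := by simp [hw]
    rw [hlen] at hc
    have hfw : ∀ x, x < p N → fw w x = mn A x := by
      intro x hx
      rcases le_or_gt (mn D₀ x) l with h | h
      · rw [fw1 w x h, ← co_mn hA0.1, fact _ h, mn_mn]
      · obtain ⟨k, hk⟩ := (hpr (mn D₀ x)).2 ⟨h, isM_mn _ _⟩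
        have hkN : k < N := by
          rw [← hp.lt_iff_lt, hk]
          exact (mn_le _ _).trans_lt hx
        have hwk : w[k]? = some (Sum.elim id φ (H k)) := by
          simp [hw, hkN]
        have hpat : wpat w k = Sum.inl (Sum.elim id φ (H k)) := by simp [wpat, hwk]
        rw [fw2 w x k hk.symm, hpat, ← co_mn hA0.1 x, ← hk]
        have h5 : mn A (p k) = mn A (pval D₀ l p (H k)) := mn_eq_iff.2 (hA.1 _ _ (f3 k))
        rw [h5]
        show mn D₀ (Sum.elim id φ (H k)).1 = _
        rcases hHk : H k with a | m
        · show mn D₀ a.1 = mn A (mn D₀ a.1)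
          rw [co_mn hA0.1, fact _ (Nat.lt_succ_iff.1 a.2)]
        · show mn D₀ (φ m).1 = mn A (p m)
          rw [← fact _ (Nat.lt_succ_iff.1 (φ m).2), hφ m ((hH1 _ _ hHk).1.trans_lt hkN), mn_mn]
    have hagr : Agr (p N) (Aw w) A := by
      intro i j hi hj
      rw [fw0, hfw i hi, hfw j hj, mn_eq_iff]
    exact ⟨fun h => hc.1 (hAcc _ _ _ hagr.symm h), fun h => hAcc _ _ _ hagr (hc.2 h)⟩
  refine ⟨D, hD, ?_⟩
  by_cases hb : b
  · exact Or.inl fun A hA l' hl' => (main A hA l' hl').2 hb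
  · exact Or.inr fun A hA l' hl' h => hb ((main A hA l' hl').1 h)

end EM

/-! ### Part 5: completely Ramsey sets -/

namespace EM

open Set MeasureTheory

lemma mn_fact {D A : Einf} {l : ℕ} (hl : IsM D l) (hA : A ∈ Cu l D D) {y : ℕ} (hy : y ≤ l) :
    mn A y = mn D y := by
  rcases hy.eq_or_lt with rfl | hy
  · rw [isM_iff.1 hl, isM_iff.1 hA.2.1]
  · apply le_antisymm
    · exact mn_le_of_rel (hA.1 _ _ (mn_rel _ _))
    · exact mn_le_of_rel ((hA.2.2 _ _ ((mn_le _ _).trans_lt hy) hy).1 (mn_rel _ _))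

/-- completely Ramsey sets -/
def CR (X : Set Einf) : Prop :=
  ∀ l B, IsM B l → ∃ B' ∈ Cu l B B, Cu l B' B' ⊆ X ∨ ∀ D ∈ Cu l B' B', D ∉ X

lemma CR.compl {X : Set Einf} (h : CR X) : CR Xᶜ := by
  intro l B hl
  obtain ⟨B', hB', h1 | h1⟩ := h l B hl
  · exact ⟨B', hB', Or.inr fun D hD hn => hn (h1 hD)⟩
  · exact ⟨B', hB', Or.inl fun D hD => h1 D hD⟩

lemma CR_empty : CR ∅ := fun _ B hl => ⟨B, self_mem hl, Or.inr fun _ _ h => h⟩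

lemma CR_rel (i j : ℕ) : CR {A | A.1 i j} := by
  intro l B hl
  let m := max i j
  let f : ℕ → ℕ := fun x => if l < mn B x ∧ mn B x ≤ m then l else mn B x
  have h1 : ∀ x, f x ≤ x := by
    intro x
    simp only [f]
    split_ifs with h
    · exact h.1.le.trans (mn_le _ _)
    · exact mn_le _ _
  have h3 : ∀ n, ∃ k, n ≤ k ∧ f k = k := by
    intro n
    obtain ⟨k, hk, hM⟩ := exists_isM_ge B (max n m + 1)
    have h1 := le_max_left n m
    have h2 := le_max_right n m
    refine ⟨k, by omega, ?_⟩
    have := isM_iff.1 hM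
    simp only [f, this]
    rw [if_neg (by omega)]
  have hBl := isM_iff.1 hl
  have hmem : ofLab f h1 h3 ∈ Cu l B B := by
    refine ⟨ofLab_co (fun x => by simp only [f, mn_mn]), ofLab_isM (by simp [f, hBl]), ?_⟩
    intro a c ha hc
    have h4 := (mn_le B a).trans_lt ha
    have h5 := (mn_le B c).trans_lt hc
    rw [ofLab_rel]
    simp only [f]
    rw [if_neg (by omega), if_neg (by omega), mn_eq_iff]
  have hff : ∀ x, f (f x) = f x := by
    intro x
    by_cases h : l < mn B x ∧ mn B x ≤ m
    · have : f x = l := by simp only [f, if_pos h]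
      rw [this]
      simp [f, hBl]
    · have : f x = mn B x := by simp only [f, if_neg h]
      rw [this]
      simp only [f, mn_mn, if_neg h]
  set D := ofLab f h1 h3 with hD
  have hle : ∀ x, x ≤ m → f x ≤ l := by
    intro x hx
    have h4 := (mn_le B x).trans hx
    simp only [f]
    split_ifs with h
    · exact le_rfl
    · omega
  have key : ∀ A ∈ Cu l D D, (A.1 i j ↔ D.1 i j) := by
    intro A hA
    have hx : ∀ x, x ≤ m → mn A x = mn D x := by
      intro x hx
      have h5 : D.1 x (f x) := (hff x).symm
      rw [mn_eq_iff.2 h5, ← mn_fact hmem.2.1 hA (hle x hx)]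
      exact mn_eq_iff.2 (hA.1 _ _ h5)
    rw [← mn_eq_iff, ← mn_eq_iff, hx i (le_max_left _ _), hx j (le_max_right _ _)]
  refine ⟨D, hmem, ?_⟩
  by_cases hij : D.1 i j
  · exact Or.inl fun A hA => (key A hA).2 hij
  · exact Or.inr fun A hA h => hij ((key A hA).1 h)

lemma exists_prev {A : Einf} {l₀ l : ℕ} (h₀ : IsM A l₀) (h : IsM A l) (hlt : l₀ < l) :
    ∃ l₁, l₀ ≤ l₁ ∧ IsM A l₁ ∧ Nxt A l₁ l := by
  refine ⟨Nat.findGreatest (IsM A) (l - 1), Nat.le_findGreatest (by omega) h₀,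
    Nat.findGreatest_spec (P := IsM A) (show l₀ ≤ l - 1 by omega) h₀, ?_, h, ?_⟩
  · have := Nat.findGreatest_le (P := IsM A) (l - 1)
    omega
  · intro k hk hkl
    exact Nat.findGreatest_is_greatest hk (by omega)

lemma CR_iUnion {X : ℕ → Set Einf} (hX : ∀ n, CR (X n)) : CR (⋃ n, X n) := by
  intro l₀ B hl₀
  -- first fusion: decide all sets
  obtain ⟨B₁, hB₁, h₁⟩ := Q_fusion
    (fun l S => ∀ n : Fin (l + 1), S ⊆ X n ∨ ∀ D ∈ S, D ∉ X n)
    (fun l S S' hS h n => (h n).imp (fun h => hS.trans h) (fun h D hD => h D (hS hD)))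
    (by
      intro l D hl
      refine finite_dense D l (fun (n : Fin (l + 1)) D' =>
        Cu l D' D' ⊆ X n ∨ ∀ G ∈ Cu l D' D', G ∉ X n) ?_ ?_ (co_refl D) hl
      · intro n B' B'' hB'' h
        have hs : Cu l B'' B'' ⊆ Cu l B' B' := fun G hG => Cu_trans hB'' hG
        exact h.imp (fun h => hs.trans h) (fun h D hD => h D (hs hD))
      · intro n B' _ hB'
        exact hX n l B' hB') hl₀
  -- second fusion: decide acceptance
  obtain ⟨B₂, hB₂, h₂⟩ := Q_fusion
    (fun l S => S ⊆ (⋃ n, X n) ∨ ∀ D ∈ S, ¬ Cu l D D ⊆ ⋃ n, X n)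
    (fun l S S' hS h => h.imp (fun h => hS.trans h) (fun h D hD => h D (hS hD)))
    (by
      intro l D hl
      by_cases hex : ∃ D' ∈ Cu l D D, Cu l D' D' ⊆ ⋃ n, X n
      · obtain ⟨D', hD', h⟩ := hex
        exact ⟨D', hD', Or.inl h⟩
      · push Not at hex
        exact ⟨D, self_mem hl, Or.inr hex⟩) hB₁.2.1
  have hB2B := Cu_trans hB₁ hB₂
  rcases h₂ l₀ le_rfl B₂ (co_refl _) hB₂.2.1 with hacc | hrej
  · exact ⟨B₂, hB2B, Or.inl hacc⟩
  let rej : ℕ → Einf → Prop := fun l A => ∀ D ∈ Cu l A B₂, ¬ Cu l D D ⊆ ⋃ n, X n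
  have hrej0 : rej l₀ B₂ := hrej
  have rej_agr : ∀ l A A', Agr l A A' → rej l A → rej l A' := by
    intro l A A' h hr D hD
    rw [← Cu_agr h] at hD
    exact hr D hD
  obtain ⟨B₃, hB₃, h₃⟩ := fusion B₂
    (fun l C => ∀ A, Coarsen A C → IsM A l → (l₀ ≤ l → rej l A →
      ∀ A' ∈ Cu l A C, ∀ l', Nxt A' l l' → rej l' A'))
    (fun l C C' hC' hR A hA hAl hl hr A' hA' l' hl' =>
      hR A (co_trans hA hC'.1) hAl hl hr A' (Cu_co hC'.1 hA') l' hl')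
    (by
      intro l C hC hCl
      refine key_dense B₂ l (fun A C => l₀ ≤ l → rej l A →
        ∀ A' ∈ Cu l A C, ∀ l', Nxt A' l l' → rej l' A') ?_ ?_ ?_ hC hCl
      · intro A A₀ C h hT hl hr A' hA' l' hl'
        rw [← Cu_agr h] at hA'
        exact hT hl (rej_agr _ _ _ h.symm hr) A' hA' l' hl'
      · intro A C C' hC' hT hl hr A' hA' l' hl'
        exact hT hl hr A' (Cu_co hC'.1 hA') l' hl'
      · intro A C hC hAC hAl
        by_cases hgood : l₀ ≤ l ∧ rej l A
        swap
        · exact ⟨C, self_mem (isM_co hAC hAl), fun h h' => absurd ⟨h, h'⟩ hgood⟩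
        obtain ⟨hl, hr⟩ := hgood
        obtain ⟨M, hM, -⟩ := meet hAC hAl
        obtain ⟨D, hD, hor⟩ := pigeon hM.2.1 (fun l' A => Cu l' A B₂ ⊆ ⋃ n, X n)
          (fun l' A A' h hs => by rwa [← Cu_agr h])
        have hDC := Cu_trans hM hD
        rcases hor with hacc | hnacc
        · exfalso
          refine hr D (Cu_co hC hDC) ?_
          intro A' hA'
          obtain ⟨l', h1, h2, h3⟩ := exists_next A' l
          exact hacc A' hA' l' ⟨h1, h2, h3⟩
            ⟨co_trans hA'.1 (co_trans hDC.1 hC), h2, Agr.rfl'⟩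
        · obtain ⟨C', hC', hsub⟩ := lift' hDC
          refine ⟨C', hC', fun _ _ A' hA' l' hl' => ?_⟩
          have hA'D : A' ∈ Cu l D D := by
            rw [← Cu_agr hDC.2.2]
            exact hsub hA'
          have hn := hnacc A' hA'D l' hl'
          exact (h₂ l' (hl.trans hl'.1.le) A' (co_trans hA'.1 (co_trans hC'.1 hC))
            hl'.2.1).resolve_left hn)
    (co_refl _) hB₂.2.1
  refine ⟨B₃, Cu_trans hB2B hB₃, Or.inr ?_⟩
  intro A hA hAX
  have hAB2 : Coarsen A B₂ := co_trans hA.1 hB₃.1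
  have hall : ∀ l, l₀ ≤ l → IsM A l → rej l A := by
    intro l
    induction l using Nat.strong_induction_on with
    | _ l ih =>
      intro hl hAl
      rcases hl.eq_or_lt with rfl | hlt
      · exact rej_agr _ _ _ (hB₃.2.2.trans hA.2.2) hrej0
      · obtain ⟨l₁, h1, h2, h3⟩ := exists_prev hA.2.1 hAl hlt
        exact h₃ l₁ h1 (isM_co hA.1 h2) A hA.1 h2 h1 (ih l₁ h3.1 h1 h2) A ⟨hA.1, h2, Agr.rfl'⟩ l h3
  obtain ⟨n, hn⟩ := mem_iUnion.1 hAX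
  obtain ⟨l, hl, hAl⟩ := exists_isM_ge A (max n l₀)
  have hnl := (le_max_left _ _).trans hl
  have hll := (le_max_right _ _).trans hl
  have hA1 : Coarsen A B₁ := co_trans hAB2 hB₂.1
  rcases h₁ l hll A hA1 hAl ⟨n, by omega⟩ with h | h
  · refine hall l hll hAl A ⟨hAB2, hAl, Agr.rfl'⟩ ?_
    exact ((Cu_co hA1).trans h).trans (subset_iUnion X n)
  · exact h A ⟨hA1, hAl, Agr.rfl'⟩ hn

/-- The σ-algebra of completely Ramsey sets. -/
@[reducible] def crSpace : MeasurableSpace Einf where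
  MeasurableSet' := CR
  measurableSet_empty := CR_empty
  measurableSet_compl _ h := h.compl
  measurableSet_iUnion _ h := CR_iUnion h

lemma infinite_isM (A : Einf) : {k | IsM A k}.Infinite := by
  rw [Set.infinite_iff_exists_gt]
  intro n
  obtain ⟨k, hk, hM⟩ := exists_isM_ge A (n + 1)
  exact ⟨k, hM, hk⟩

lemma mu_eq_iff {A : Einf} {n k : ℕ} : A.mu n = k ↔ IsM A k ∧ Nat.count (IsM A) k = n := by
  have hmu : A.mu n = Nat.nth (IsM A) n := rfl
  rw [hmu]
  constructor
  · rintro rfl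
    exact ⟨Nat.nth_mem_of_infinite (infinite_isM A) n, Nat.count_nth_of_infinite (infinite_isM A) n⟩
  · rintro ⟨h1, rfl⟩
    exact Nat.nth_count h1

lemma measurable_toCS (m : MeasurableSpace Einf)
    (hm : ∀ i j, MeasurableSet[m] {A : Einf | A.1 i j}) : Measurable[m] toCS := by
  have hM : ∀ k, MeasurableSet[m] {A : Einf | IsM A k} := by
    intro k
    have : {A : Einf | IsM A k} = ⋂ i, ({A : Einf | A.1 i k}ᶜ ∪ {_A : Einf | k ≤ i}) := by
      ext A
      simp only [mem_ofPred_eq, IsM, mem_iInter, mem_union, mem_compl_iff]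
      exact forall_congr' fun i => imp_iff_not_or
    rw [this]
    exact MeasurableSet.iInter fun i => (hm i k).compl.union (MeasurableSet.const _)
  have hC : ∀ k, Measurable[m] (fun A : Einf => Nat.count (IsM A) k) := by
    intro k
    induction k with
    | zero => simp
    | succ k ih =>
      simp only [Nat.count_succ]
      exact ih.add (Measurable.ite (hM k) measurable_const measurable_const)
  refine measurable_pi_iff.2 fun n => measurable_pi_iff.2 fun i => measurable_to_bool ?_
  have : (fun A : Einf => toCS A n i) ⁻¹' {true} =
      ⋃ k, ({A : Einf | IsM A k} ∩ ((fun A : Einf => Nat.count (IsM A) k) ⁻¹' {n})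
        ∩ {A : Einf | A.1 i k}) := by
    ext A
    simp only [mem_preimage, mem_singleton_iff, toCS, decide_eq_true_eq, mem_iUnion, mem_inter_iff,
      mem_ofPred_eq, ← mu_eq_iff]
    simp
  rw [this]
  exact MeasurableSet.iUnion fun k =>
    ((hM k).inter (hC k (measurableSet_singleton n))).inter (hm i k)

lemma measurable_CR {X : Set Einf} (hX : MeasurableSet X) : CR X := by
  have h : (inferInstance : MeasurableSpace Einf) ≤ crSpace :=
    (measurable_toCS crSpace CR_rel).comap_le
  exact h X hX

lemma measurableSet_rel (i j : ℕ) : MeasurableSet {A : Einf | A.1 i j} := by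
  have hcs : Measurable (toCS : Einf → _) := comap_measurable _
  have : {A : Einf | A.1 i j} =
      ⋃ n, ((fun A : Einf => toCS A n i) ⁻¹' {true} ∩ (fun A : Einf => toCS A n j) ⁻¹' {true}) := by
    ext A
    simp only [mem_ofPred_eq, mem_iUnion, mem_inter_iff, mem_preimage, mem_singleton_iff, toCS,
      decide_eq_true_eq]
    constructor
    · intro h
      refine ⟨Nat.count (IsM A) (mn A i), ?_⟩
      rw [mu_eq_iff.2 ⟨isM_mn A i, rfl⟩]
      exact ⟨sy (mn_rel A i), sy (tr (mn_rel A i) h)⟩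
    · rintro ⟨n, h1, h2⟩
      exact tr h1 (sy h2)
  rw [this]
  have hc : ∀ n k, Measurable (fun A : Einf => toCS A n k) := fun n k =>
    (measurable_pi_apply k).comp ((measurable_pi_apply n).comp hcs)
  exact MeasurableSet.iUnion fun n =>
    (hc n i (measurableSet_singleton _)).inter (hc n j (measurableSet_singleton _))

/-- the matrix of a relation -/
noncomputable def rho (A : Einf) : ℕ → ℕ → Bool := fun i j => decide (A.1 i j)

lemma measurable_rho : Measurable rho := by
  refine measurable_pi_iff.2 fun i => measurable_pi_iff.2 fun j => measurable_to_bool ?_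
  convert measurableSet_rel i j using 1
  ext A
  simp [rho]

lemma rho_range : range rho = {r : ℕ → ℕ → Bool | (∀ i, r i i = true) ∧
    (∀ i j, r i j = true → r j i = true) ∧
    (∀ i j k, r i j = true → r j k = true → r i k = true) ∧
    ∀ n, ∃ l, n ≤ l ∧ ∀ m, r m l = true → l ≤ m} := by
  ext r
  constructor
  · rintro ⟨A, rfl⟩
    simp only [rho, decide_eq_true_eq, mem_ofPred_eq]
    exact ⟨rf A, fun i j => sy, fun i j k => tr, exists_isM_ge A⟩
  · rintro ⟨h1, h2, h3, h4⟩
    let S : Setoid ℕ := ⟨fun i j => r i j = true, ⟨h1, fun {i j} => h2 i j, fun {i j k} => h3 i j k⟩⟩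
    refine ⟨⟨S, infinite_of S h4⟩, ?_⟩
    funext i j
    simp only [rho]
    have : S i j ↔ r i j = true := Iff.rfl
    rw [Bool.eq_iff_iff, decide_eq_true_eq]
    exact this

lemma measurableSet_entry (i j : ℕ) : MeasurableSet {r : ℕ → ℕ → Bool | r i j = true} := by
  have h : Measurable (fun r : ℕ → ℕ → Bool => r i j) :=
    (measurable_pi_apply j).comp (measurable_pi_apply i)
  exact h (measurableSet_singleton true)

lemma measurableSet_rho_range : MeasurableSet (range rho) := by
  rw [rho_range]
  have he : ∀ i j, Measurable (fun r : ℕ → ℕ → Bool => r i j = true) := fun i j => by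
    rw [← measurableSet_setOfPred]
    exact measurableSet_entry i j
  have h1 : Measurable (fun r : ℕ → ℕ → Bool => ∀ i, r i i = true) :=
    Measurable.forall fun i => he i i
  have h2 : Measurable (fun r : ℕ → ℕ → Bool => ∀ i j, r i j = true → r j i = true) :=
    Measurable.forall fun i => Measurable.forall fun j => (he i j).imp (he j i)
  have h3 : Measurable (fun r : ℕ → ℕ → Bool =>
      ∀ i j k, r i j = true → r j k = true → r i k = true) :=
    Measurable.forall fun i => Measurable.forall fun j => Measurable.forall fun k =>
      (he i j).imp ((he j k).imp (he i k))
  have h4 : Measurable (fun r : ℕ → ℕ → Bool => ∀ n, ∃ l, n ≤ l ∧ ∀ m, r m l = true → l ≤ m) :=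
    Measurable.forall fun n => Measurable.exists fun l =>
      measurable_const.and (Measurable.forall fun m => (he m l).imp measurable_const)
  exact measurableSet_setOfPred.2 (h1.and (h2.and (h3.and h4)))

lemma rho_embedding : MeasurableEmbedding rho := by
  rw [MeasurableEmbedding.iff_comap_eq]
  refine ⟨?_, ?_, measurableSet_rho_range⟩
  · intro A B h
    refine ext' fun i j => ?_
    have := congrFun (congrFun h i) j
    simpa [rho] using this
  · apply le_antisymm measurable_rho.comap_le
    refine (measurable_toCS (MeasurableSpace.comap rho inferInstance) fun i j => ?_).comap_le
    refine ⟨{r | r i j = true}, ?_, ?_⟩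
    · exact measurableSet_entry i j
    · ext A
      simp [rho]

lemma standardBorel_of_equiv {α β : Type*} [MeasurableSpace α] [MeasurableSpace β]
    [h : StandardBorelSpace β] (e : α ≃ᵐ β) : StandardBorelSpace α := by
  obtain ⟨τ, hb, hp⟩ := h.polish
  let _ : TopologicalSpace α := TopologicalSpace.induced e τ
  have hp' : PolishSpace α := e.toEquiv.polishSpace_induced
  have hb' : BorelSpace α := ⟨by
    rw [borel_comap, ← BorelSpace.measurable_eq (α := β)]
    exact e.measurableEmbedding.comap_eq.symm⟩
  infer_instance

instance : StandardBorelSpace Einf := by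
  have := measurableSet_rho_range.standardBorel
  exact standardBorel_of_equiv rho_embedding.equivRange

end EM

/-! ### Part 6: the canonization argument -/

namespace EM

open Set MeasureTheory

lemma merge {M : Einf} {l p i : ℕ} (hl : IsM M l) (hp : IsM M p) (hlp : l < p) (hi : i < l) :
    ∃ M' ∈ Cu l M M, M'.1 p i ∧ ∀ G : Einf, Coarsen G M → G.1 p i → Coarsen G M' := by
  let f : ℕ → ℕ := fun x => if mn M x = p then mn M i else mn M x
  have hil := (mn_le M i).trans_lt hi
  have h1 : ∀ x, f x ≤ x := by
    intro x
    have := mn_le M x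
    simp only [f]
    split_ifs with h
    · omega
    · exact this
  have h3 : ∀ n, ∃ k, n ≤ k ∧ f k = k := by
    intro n
    obtain ⟨k, hk, hM⟩ := exists_isM_ge M (max n p + 1)
    have h1 := le_max_left n p
    have h2 := le_max_right n p
    refine ⟨k, by omega, ?_⟩
    have := isM_iff.1 hM
    simp only [f, this]
    rw [if_neg (by omega)]
  have hMl := isM_iff.1 hl
  have hMp := isM_iff.1 hp
  refine ⟨ofLab f h1 h3, ⟨ofLab_co (fun x => by simp only [f, mn_mn]), ofLab_isM ?_, ?_⟩, ?_, ?_⟩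
  · simp only [f, hMl]
    rw [if_neg (by omega)]
  · intro a c ha hc
    have h4 := (mn_le M a).trans_lt ha
    have h5 := (mn_le M c).trans_lt hc
    rw [ofLab_rel]
    simp only [f]
    rw [if_neg (by omega), if_neg (by omega), mn_eq_iff]
  · rw [ofLab_rel]
    simp only [f, hMp, if_true]
    rw [if_neg (by omega)]
  · intro G hG hpi
    refine co_ofLab fun x => ?_
    have hx : G.1 x (mn M x) := hG _ _ (sy (mn_rel M x))
    simp only [f]
    split_ifs with h
    · rw [h] at hx
      exact tr hx (tr hpi (hG _ _ (sy (mn_rel M i))))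
    · exact hx

lemma local_lemma {P : Set (Einf × Einf)} (hP : MeasurableSet P) (hinj : InjOn Prod.fst P)
    {C A₀ : Einf} {l i j : ℕ} (hA : Coarsen A₀ C) (hl : IsM A₀ l) (hi : i < l) (hj : j < l)
    (hij : A₀.1 i j) :
    ∃ C' ∈ Cu l C C, ∀ A ∈ Cu l A₀ C', ∀ A', (A, A') ∈ P → Coarsen A' C' → A'.1 i j := by
  obtain ⟨M, hM, -⟩ := meet hA hl
  obtain ⟨p, hlp, hMp⟩ := exists_isM_ge M (l + 1)
  have hCp := isM_co hM.1 hMp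
  have hCl := isM_co hA hl
  obtain ⟨Mp, hMpm, hpi, -⟩ := merge hM.2.1 hMp hlp hi
  have hMpC := Cu_trans hM hMpm
  have hpj : Mp.1 p j := tr hpi ((hMpC.2.2 _ _ hi hj).2 hij)
  let Z : Set Einf := Prod.fst '' (P ∩ Prod.snd ⁻¹' {A' : Einf | A'.1 p i})
  have hZ : CR Z := by
    apply measurable_CR
    apply MeasurableSet.image_of_measurable_injOn (hP.inter (measurable_snd (measurableSet_rel p i)))
      measurable_fst
    exact hinj.mono inter_subset_left
  obtain ⟨D, hD, hor⟩ := hZ l Mp hMpm.2.1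
  have hDC := Cu_trans hMpC hD
  -- lifting below a merge of `C`
  have lft : ∀ k, k < l → D.1 p k → ∃ C' ∈ Cu l C C, C'.1 p k ∧ Cu l A₀ C' ⊆ Cu l D D := by
    intro k hk hpk
    obtain ⟨Ck, hCk, hCpk, huniv⟩ := merge hCl hCp hlp hk
    have hDk : D ∈ Cu l A₀ Ck := ⟨huniv D hDC.1 hpk, hDC.2⟩
    obtain ⟨C', hC', hsub⟩ := lift' hDk
    refine ⟨C', Cu_trans hCk hC', hC'.1 _ _ hCpk, ?_⟩
    rw [← Cu_agr hDC.2.2 (B := D)]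
    exact hsub
  rcases hor with hin | hout
  · obtain ⟨C', hC', hC'p, hsub⟩ := lft j hj (hD.1 _ _ hpj)
    refine ⟨C', hC', ?_⟩
    intro A hA' A' hAP hA'C
    obtain ⟨⟨A1, A2⟩, ⟨hq1, hq2⟩, hq3⟩ := hin (hsub hA')
    have hq3' : A1 = A := hq3
    subst hq3'
    have heq : (A1, A2) = (A1, A') := hinj hq1 hAP rfl
    have heq' : A2 = A' := congrArg Prod.snd heq
    subst heq'
    have h6 : A2.1 p i := hq2
    exact tr (sy h6) (hA'C _ _ hC'p)
  · obtain ⟨C', hC', hC'p, hsub⟩ := lft i hi (hD.1 _ _ hpi)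
    refine ⟨C', hC', ?_⟩
    intro A hA' A' hAP hA'C
    exact absurd ⟨(A, A'), ⟨hAP, hA'C _ _ hC'p⟩, rfl⟩ (hout A (hsub hA'))

lemma main_fusion {P : ℕ → Set (Einf × Einf)}
    (hP : ∀ n, MeasurableSet (P n) ∧ InjOn Prod.fst (P n)) {B : Einf} {l₀ : ℕ} (hl₀ : IsM B l₀) :
    ∃ C ∈ Cu l₀ B B, ∀ n A A', (A, A') ∈ P n → Coarsen A C → Coarsen A' C →
      ∀ i j, A.1 i j → A'.1 i j := by
  obtain ⟨C, hC, h⟩ := fusion B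
    (fun l C => ∀ q : Fin (l + 1) × Fin l × Fin l, ∀ A, Coarsen A C → IsM A l →
      (A.1 q.2.1 q.2.2 → ∀ A₁ ∈ Cu l A C, ∀ A', (A₁, A') ∈ P q.1 → Coarsen A' C →
        A'.1 q.2.1 q.2.2))
    (fun l C C' hC' hR q A hA hAl hq A₁ hA₁ A' hA' hA'C =>
      hR q A (co_trans hA hC'.1) hAl hq A₁ (Cu_co hC'.1 hA₁) A' hA' (co_trans hA'C hC'.1))
    (by
      intro l C hC hCl
      refine finite_dense B l (fun (q : Fin (l + 1) × Fin l × Fin l) C => ∀ A, Coarsen A C →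
        IsM A l → (A.1 q.2.1 q.2.2 → ∀ A₁ ∈ Cu l A C, ∀ A', (A₁, A') ∈ P q.1 → Coarsen A' C →
        A'.1 q.2.1 q.2.2)) ?_ ?_ hC hCl
      · intro q C C' hC' hR A hA hAl hq A₁ hA₁ A' hA' hA'C
        exact hR A (co_trans hA hC'.1) hAl hq A₁ (Cu_co hC'.1 hA₁) A' hA' (co_trans hA'C hC'.1)
      · intro q C hC hCl
        refine key_dense B l (fun A C => A.1 q.2.1 q.2.2 → ∀ A₁ ∈ Cu l A C, ∀ A',
          (A₁, A') ∈ P q.1 → Coarsen A' C → A'.1 q.2.1 q.2.2) ?_ ?_ ?_ hC hCl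
        · intro A A₀ C hag hT hq A₁ hA₁
          rw [← Cu_agr hag] at hA₁
          exact hT ((hag _ _ q.2.1.2 q.2.2.2).1 hq) A₁ hA₁
        · intro A C C' hC' hT hq A₁ hA₁ A' hA' hA'C
          exact hT hq A₁ (Cu_co hC'.1 hA₁) A' hA' (co_trans hA'C hC'.1)
        · intro A C _ hA hAl
          by_cases hq : A.1 q.2.1 q.2.2
          · obtain ⟨C', hC', h⟩ := local_lemma (hP q.1).1 (hP q.1).2 hA hAl q.2.1.2 q.2.2.2 hq
            exact ⟨C', hC', fun _ => h⟩
          · exact ⟨C, self_mem (isM_co hA hAl), fun h => absurd h hq⟩)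
    (co_refl B) hl₀
  refine ⟨C, hC, ?_⟩
  intro n A A' hAA' hA hA' i j hij
  obtain ⟨l, hl, hAl⟩ := exists_isM_ge A (l₀ + n + i + j + 1)
  exact h l (by omega) (isM_co hA hAl) (⟨n, by omega⟩, ⟨i, by omega⟩, ⟨j, by omega⟩) A hA hAl hij A
    ⟨hA, hAl, Agr.rfl'⟩ A' hAA' hA'

lemma rn_eq {A : Einf} {n k : ℕ} (h : A.mu n = k) :
    rn A n = ⟨k, Setoid.comap (fun i : Fin k => (i : ℕ)) A.1⟩ := by
  subst h
  rfl

end EM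


/-- Theorem (Main): every countable Borel equivalence relation on `𝓔_∞` coincides with
equality below every element of some Ramsey conull set. -/
theorem einf_canonizes_CBER_to_equality
    (E : Einf → Einf → Prop) (hEquiv : Equivalence E)
    (hBorel : MeasurableSet {p : Einf × Einf | E p.1 p.2})
    (hCount : ∀ A : Einf, {A' : Einf | E A A'}.Countable) :
    ∃ D : Set Einf, RamseyConull D ∧
      ∀ B ∈ D, ∀ A A' : Einf, Coarsen A B → Coarsen A' B → (E A A' ↔ A = A') := by
  obtain ⟨P, hP, hcov⟩ := exists_uniformizing_cover hBorel hCount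
  refine ⟨{B | ∀ A A' : Einf, Coarsen A B → Coarsen A' B → (E A A' ↔ A = A')}, ?_,
    fun B hB => hB⟩
  rintro s A ⟨A₁, ⟨n, hn⟩, hA₁⟩
  have hl₀ : EM.IsM A₁ (A₁.mu n) := (EM.mu_eq_iff.1 rfl).1
  obtain ⟨C, hC, h⟩ := EM.main_fusion hP hl₀
  refine ⟨C, ⟨⟨Nat.count (EM.IsM C) (A₁.mu n), ?_⟩, EM.co_trans hC.1 hA₁⟩, ?_⟩
  · rw [EM.rn_eq (EM.mu_eq_iff.2 ⟨hC.2.1, rfl⟩), ← hn, EM.rn_eq (A := A₁) rfl]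
    congr 1
    ext i j
    exact hC.2.2 i j i.2 j.2
  · rw [Set.eq_empty_iff_forall_notMem]
    rintro B ⟨hB, hBD⟩
    apply hBD
    intro G G' hG hG'
    have key : ∀ H H' : Einf, Coarsen H B → Coarsen H' B → E H H' →
        ∀ i j, H.1 i j → H'.1 i j := by
      intro H H' hH hH' hE
      have hmem : (H, H') ∈ {p : Einf × Einf | E p.1 p.2} := hE
      obtain ⟨m, hm⟩ := Set.mem_iUnion.1 (hcov hmem)
      exact h m H H' hm (EM.co_trans hH hB.2) (EM.co_trans hH' hB.2)
    constructor
    · intro hE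
      exact EM.ext' fun i j => ⟨key G G' hG hG' hE i j, key G' G hG' hG (hEquiv.symm hE) i j⟩
    · rintro rfl
      exact hEquiv.refl G
end

section
/- Let E be a countable Borel equivalence relation on 𝓔_∞. Then for every s ∈ 𝓔_∞^fin and A ∈ 𝓔_∞ with [s,A] ≠ ∅ there exists B ∈ [s,A] such that for all C, C' ∈ 𝓔_∞ with C ≤ B and C' ≤ B, one has C E C' if and only if C = C'. In particular, the restriction of E to the cube [s,B] is Borel reducible to equality on 2^ℕ. -/
open Classical

open Einf

namespace CSP

/-- Rigid surjections `ℕ → ℕ`. -/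
def Rig (f : ℕ → ℕ) : Prop :=
  (∀ x, ∀ y, y < f x → ∃ x', x' < x ∧ f x' = y) ∧ ∀ y, ∃ x, f x = y

def Agr (n : ℕ) (f g : ℕ → ℕ) : Prop := ∀ x, x < n → f x = g x

def Fx (n : ℕ) (h : ℕ → ℕ) : Prop := Rig h ∧ ∀ x, x < n → h x = x

theorem Agr.refl (n : ℕ) (f : ℕ → ℕ) : Agr n f f := fun _ _ => rfl
theorem Agr.symm {n : ℕ} {f g : ℕ → ℕ} (h : Agr n f g) : Agr n g f := fun x hx => (h x hx).symm
theorem Agr.trans {n : ℕ} {f g k : ℕ → ℕ} (h : Agr n f g) (h' : Agr n g k) : Agr n f k :=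
  fun x hx => (h x hx).trans (h' x hx)
theorem Agr.mono {n m : ℕ} {f g : ℕ → ℕ} (h : Agr m f g) (hn : n ≤ m) : Agr n f g :=
  fun x hx => h x (hx.trans_le hn)

theorem Rig.le {f : ℕ → ℕ} (hf : Rig f) (x : ℕ) : f x ≤ x := by
  induction x using Nat.strong_induction_on with
  | _ x ih =>
    rcases Nat.eq_zero_or_pos (f x) with h | h
    · omega
    · obtain ⟨x', hx', he⟩ := hf.1 x (f x - 1) (by omega)
      have := ih x' hx'
      omega

theorem rig_id : Rig id := ⟨fun _ y hy => ⟨y, hy, rfl⟩, fun y => ⟨y, rfl⟩⟩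

theorem Rig.comp {g f : ℕ → ℕ} (hg : Rig g) (hf : Rig f) : Rig (g ∘ f) := by
  refine ⟨fun x y hy => ?_, fun y => ?_⟩
  · obtain ⟨u, hu, rfl⟩ := hg.1 (f x) y hy
    obtain ⟨x', hx', rfl⟩ := hf.1 x u hu
    exact ⟨x', hx', rfl⟩
  · obtain ⟨u, rfl⟩ := hg.2 y
    obtain ⟨x, rfl⟩ := hf.2 u
    exact ⟨x, rfl⟩

theorem Rig.of_comp {k h : ℕ → ℕ} (hk : Rig (k ∘ h)) (hh : Rig h) : Rig k := by
  refine ⟨fun y y' hy' => ?_, fun y => ?_⟩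
  · have hex := hh.2 y
    have hx := Nat.find_spec hex
    have hmin := fun z => Nat.find_min (H := hex) (m := z)
    generalize Nat.find hex = x at hx hmin
    obtain ⟨x', hx', he⟩ := hk.1 x y' (by simpa [hx] using hy')
    refine ⟨h x', ?_, he⟩
    rcases lt_trichotomy (h x') y with h1 | h1 | h1
    · exact h1
    · exact absurd h1 (hmin x' hx')
    · obtain ⟨x'', hx'', he''⟩ := hh.1 x' y h1
      exact absurd he'' (hmin x'' (hx''.trans hx'))
  · obtain ⟨x, rfl⟩ := hk.2 y
    exact ⟨h x, rfl⟩

theorem fx_id (n : ℕ) : Fx n id := ⟨rig_id, fun _ _ => rfl⟩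

theorem Fx.comp {n : ℕ} {g f : ℕ → ℕ} (hg : Fx n g) (hf : Fx n f) : Fx n (g ∘ f) :=
  ⟨hg.1.comp hf.1, fun x hx => by simp [hf.2 x hx, hg.2 x hx]⟩

theorem Fx.mono {n m : ℕ} {f : ℕ → ℕ} (hf : Fx m f) (h : n ≤ m) : Fx n f :=
  ⟨hf.1, fun x hx => hf.2 x (hx.trans_le h)⟩

theorem Fx.agr {n : ℕ} {h : ℕ → ℕ} (hh : Fx n h) (k : ℕ → ℕ) : Agr n (k ∘ h) k :=
  fun x hx => by simp [hh.2 x hx]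

theorem Fx.agr' {n : ℕ} {h k v : ℕ → ℕ} (hh : Fx n h) (hk : Agr n k v) : Agr n (k ∘ h) v :=
  (hh.agr k).trans hk

theorem Agr.comp {n P : ℕ} {h k v : ℕ → ℕ} (hk : Agr n k v) (hh : ∀ x, x < P → h x < n) :
    Agr P (k ∘ h) (v ∘ h) := fun x hx => hk _ (hh x hx)

/-- merging letter `n` into letter `i`. -/
def tau (n i x : ℕ) : ℕ := if x < n then x else if x = n then i else x - 1

theorem tau_fx {n i : ℕ} (hi : i < n) : Fx n (tau n i) := by
  refine ⟨⟨fun x y hy => ?_, fun y => ?_⟩, fun x hx => by simp [tau, hx]⟩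
  · by_cases hyn : y < n
    · refine ⟨y, ?_, by simp [tau, hyn]⟩
      unfold tau at hy; split_ifs at hy <;> omega
    · refine ⟨y + 1, ?_, ?_⟩
      · unfold tau at hy; split_ifs at hy <;> omega
      · unfold tau; split_ifs <;> omega
  · by_cases hyn : y < n
    · exact ⟨y, by simp [tau, hyn]⟩
    · refine ⟨y + 1, ?_⟩
      unfold tau; split_ifs <;> omega

theorem tau_lt {n i : ℕ} (hi : i < n) (x : ℕ) (hx : x < n + 1) : tau n i x < n := by
  unfold tau; split_ifs <;> omega

theorem tau_self (n i : ℕ) : tau n i n = i := by simp [tau]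

/-- Amalgamation. -/
theorem amalg {h h2 : ℕ → ℕ} {P m : ℕ} (hh : Rig h) (h1 : ∀ x, x < P → h x < m)
    (hs : ∀ y, y < m → ∃ x, x < P ∧ h x = y) (hh2 : Fx m h2) :
    ∃ h3 h5 : ℕ → ℕ, Fx P h3 ∧ h5 ∘ h3 = h2 ∘ h ∧
      ∀ k v, Rig k → Agr P k (v ∘ h) → ∃ k5, Rig k5 ∧ Agr m k5 v ∧ k = k5 ∘ h5 := by
  choose! c hc using hs
  have hPm : m ≤ P := by
    by_contra hcon
    have hP := hc P (by omega)
    have := hh.le (c P)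
    omega
  refine ⟨fun x => if x < P then x else if h2 (h x) < m then c (h2 (h x)) else P + (h2 (h x) - m),
    fun x => if x < P then h x else m + (x - P), ⟨⟨?_, ?_⟩, ?_⟩, ?_, ?_⟩
  · intro x y hy
    by_cases hyP : y < P
    · refine ⟨y, ?_, by simp [hyP]⟩
      by_contra hxy
      simp only [] at hy
      split_ifs at hy <;> omega
    · have hx : ¬ x < P := by
        intro hx; simp only [hx, if_true] at hy; omega
      simp only [hx, if_false] at hy
      split_ifs at hy with h4
      · have := hc _ h4; omega
      · obtain ⟨x', hx', he⟩ := (hh2.1.comp hh).1 x (m + (y - P)) (by simp; omega)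
        have hx'P : ¬ x' < P := by
          intro hlt
          have := h1 x' hlt
          have h6 := hh2.2 _ this
          simp at he
          omega
        refine ⟨x', hx', ?_⟩
        simp at he
        simp only [hx'P, if_false, he]
        split_ifs <;> omega
  · intro y
    by_cases hyP : y < P
    · exact ⟨y, by simp [hyP]⟩
    · obtain ⟨x', he⟩ := (hh2.1.comp hh).2 (m + (y - P))
      have hx'P : ¬ x' < P := by
        intro hlt
        have := h1 x' hlt
        have h6 := hh2.2 _ this
        simp at he
        omega
      refine ⟨x', ?_⟩
      simp at he
      simp only [hx'P, if_false, he]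
      split_ifs <;> omega
  · intro x hx; simp [hx]
  · funext x
    simp only [Function.comp]
    by_cases hx : x < P
    · simp only [hx, if_true]
      exact (hh2.2 _ (h1 x hx)).symm
    · simp only [hx, if_false]
      by_cases h4 : h2 (h x) < m
      · simp only [h4, if_true, (hc _ h4).1, (hc _ h4).2]
      · simp only [h4, if_false]
        split_ifs <;> omega
  · intro k v hk hkv
    have hcomp : k = (fun y => if y < m then v y else k (P + (y - m))) ∘
        (fun x => if x < P then h x else m + (x - P)) := by
      funext x
      simp only [Function.comp]
      by_cases hx : x < P
      · simp only [hx, if_true, h1 x hx]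
        exact hkv x hx
      · simp only [hx, if_false]
        rw [if_neg (by omega)]
        congr 1; omega
    refine ⟨_, ?_, ?_, hcomp⟩
    · rw [hcomp] at hk
      refine hk.of_comp ⟨fun x y hy => ?_, fun y => ?_⟩
      · simp only [] at hy
        by_cases hym : y < m
        · by_cases hx : x < P
          · simp only [hx, if_true] at hy
            obtain ⟨x', hx', he⟩ := hh.1 x y hy
            exact ⟨x', hx', by simp [hx'.trans hx, he]⟩
          · exact ⟨c y, by have := hc y hym; omega, by simp [(hc y hym).1, (hc y hym).2]⟩
        · have hx : ¬ x < P := by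
            intro hx
            simp only [hx, if_true] at hy
            have := h1 x hx; omega
          simp only [hx, if_false] at hy
          exact ⟨P + (y - m), by omega, by simp; omega⟩
      · by_cases hym : y < m
        · exact ⟨c y, by simp [(hc y hym).1, (hc y hym).2]⟩
        · exact ⟨P + (y - m), by simp; omega⟩
    · intro y hy; simp [hy]

/-- finite compositions -/
def Cmp (h : ℕ → ℕ → ℕ) (t : ℕ) : ℕ → ℕ → ℕ
  | 0 => id
  | r + 1 => h (t + r) ∘ Cmp h t r

theorem Cmp_succ' (h : ℕ → ℕ → ℕ) (t r : ℕ) : Cmp h t (r + 1) = Cmp h (t + 1) r ∘ h t := by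
  induction r with
  | zero => rfl
  | succ r ih =>
    rw [Cmp, ih, Cmp, Function.comp_assoc]
    congr 2; omega

theorem limG {h : ℕ → ℕ → ℕ} {m : ℕ → ℕ} (hh : ∀ t, Fx (m t) (h t)) (hm : Monotone m)
    (hm' : ∀ t, t ≤ m t) :
    ∃ G : ℕ → ℕ → ℕ, ∀ t, Fx (m t) (G t) ∧ G t = G (t + 1) ∘ h t := by
  have hC : ∀ t r, Fx (m t) (Cmp h t r) := by
    intro t r
    induction r with
    | zero => exact fx_id _
    | succ r ih => exact ((hh (t + r)).mono (hm (by omega))).comp ih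
  have hst1 : ∀ t r x, Cmp h t r x < t + r → ∀ s, Cmp h t (r + s) x = Cmp h t r x := by
    intro t r x hx s
    induction s with
    | zero => rfl
    | succ s ih =>
      rw [← add_assoc, Cmp]
      simp only [Function.comp, ih]
      exact (hh _).2 _ (by have := hm' (t + (r + s)); omega)
  have hst : ∀ t x r, x < r → Cmp h t r x = Cmp h t (x + 1) x := by
    intro t x r hr
    obtain ⟨s, rfl⟩ := Nat.exists_eq_add_of_le (show x + 1 ≤ r from hr)
    exact hst1 t (x + 1) x (by have := (hC t (x+1)).1.le x; omega) s
  refine ⟨fun t x => Cmp h t (x + 1) x, fun t => ⟨⟨⟨?_, ?_⟩, ?_⟩, ?_⟩⟩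
  · intro x y hy
    obtain ⟨x', hx', he⟩ := (hC t (x+1)).1.1 x y hy
    refine ⟨x', hx', ?_⟩
    rw [← he]
    exact (hst t x' (x+1) (by omega)).symm
  · intro y
    obtain ⟨x, hx⟩ := (hC t (y+1)).1.2 y
    refine ⟨x, ?_⟩
    have h1 := hst1 t (y+1) x (by omega) (x + 1)
    have h2 := hst t x (y + 1 + (x + 1)) (by omega)
    simp only []
    omega
  · intro x hx
    exact (hC t (x+1)).2 x hx
  · funext x
    simp only [Function.comp]
    have h1 := hst t x (x + 1 + 1) (by omega)
    rw [Cmp_succ'] at h1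
    simp only [Function.comp] at h1
    rw [← h1]
    exact hst (t+1) (h t x) (x+1) (by have := (hh t).1.le x; omega)

/-- Fusion. -/
theorem fusion (Φ : ℕ → (ℕ → ℕ) → Prop) (n : ℕ)
    (her : ∀ m, n ≤ m → ∀ g h, Rig g → Fx m h → Φ m g → Φ m (h ∘ g))
    (den : ∀ m, n ≤ m → ∀ g, Rig g → ∃ h, Fx m h ∧ Φ m (h ∘ g))
    (g : ℕ → ℕ) (hg : Rig g) : ∃ h, Fx n h ∧ ∀ m, n ≤ m → Φ m (h ∘ g) := by
  choose! H hH using den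
  let gs : ℕ → ℕ → ℕ := fun t => Nat.rec g (fun t g' => H (n + t) g' ∘ g') t
  have gs0 : gs 0 = g := rfl
  have gss : ∀ t, gs (t + 1) = H (n + t) (gs t) ∘ gs t := fun t => rfl
  have hgs : ∀ t, Rig (gs t) := by
    intro t
    induction t with
    | zero => exact hg
    | succ t ih => rw [gss]; exact (hH _ (by omega) _ ih).1.1.comp ih
  obtain ⟨G, hG⟩ := limG (h := fun t => H (n + t) (gs t)) (m := fun t => n + t)
    (fun t => (hH _ (by omega) _ (hgs t)).1) (fun a b hab => by simp; omega) (fun t => by omega)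
  have key : ∀ t, G 0 ∘ g = G t ∘ gs t := by
    intro t
    induction t with
    | zero => rfl
    | succ t ih => rw [ih, (hG t).2, gss]; rfl
  refine ⟨G 0, (hG 0).1, fun m hm => ?_⟩
  obtain ⟨t, rfl⟩ := Nat.exists_eq_add_of_le hm
  rw [key (t + 1)]
  refine her _ hm (gs (t+1)) (G (t+1)) (hgs (t+1)) ((hG (t+1)).1.mono (by omega)) ?_
  rw [gss]
  exact (hH _ hm _ (hgs t)).2

/-- finitely many dense hereditary requirements at one level -/
theorem finDense {κ : Type*} (m : ℕ) (S : Set κ) (hS : S.Finite) (Φ : κ → (ℕ → ℕ) → Prop)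
    (her : ∀ i, ∀ g h, Rig g → Fx m h → Φ i g → Φ i (h ∘ g))
    (den : ∀ i, ∀ g, Rig g → ∃ h, Fx m h ∧ Φ i (h ∘ g))
    (g : ℕ → ℕ) (hg : Rig g) : ∃ h, Fx m h ∧ ∀ i ∈ S, Φ i (h ∘ g) := by
  induction S, hS using Set.Finite.induction_on with
  | empty => exact ⟨id, fx_id m, by simp⟩
  | @insert a s ha hs ih =>
    obtain ⟨h, hh, hi⟩ := ih
    obtain ⟨h', hh', hi'⟩ := den a (h ∘ g) (hh.1.comp hg)
    refine ⟨h' ∘ h, hh'.comp hh, ?_⟩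
    intro i hi2
    rcases Set.mem_insert_iff.1 hi2 with rfl | hi2
    · exact hi'
    · exact her i (h ∘ g) h' (hh.1.comp hg) hh' (hi i hi2)

/-- Version with codes. -/
theorem finCode {X κ : Type*} (m : ℕ) (code : X → κ) (S : Set X) (hS : (code '' S).Finite)
    (Ψ : X → (ℕ → ℕ) → Prop)
    (cong : ∀ x x' g, code x = code x' → Ψ x g → Ψ x' g)
    (her : ∀ x, ∀ g h, Rig g → Fx m h → Ψ x g → Ψ x (h ∘ g))
    (den : ∀ x, ∀ g, Rig g → ∃ h, Fx m h ∧ Ψ x (h ∘ g))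
    (g : ℕ → ℕ) (hg : Rig g) : ∃ h, Fx m h ∧ ∀ x ∈ S, Ψ x (h ∘ g) := by
  obtain ⟨h, hh, hi⟩ := finDense m (code '' S) hS (fun i g => ∀ x, code x = i → Ψ x g)
    (fun i g h hg hh hp x hx => her x g h hg hh (hp x hx))
    (fun i g hg => by
      by_cases hex : ∃ x, code x = i
      · obtain ⟨x, hx⟩ := hex
        obtain ⟨h, hh, hp⟩ := den x g hg
        exact ⟨h, hh, fun x' hx' => cong x x' _ (hx.trans hx'.symm) hp⟩
      · exact ⟨id, fx_id m, fun x hx => absurd ⟨x, hx⟩ hex⟩) g hg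
  exact ⟨h, hh, fun x hx => hi _ ⟨x, hx, rfl⟩ x rfl⟩

end CSP


namespace CSP

section Ultra
open Filter
attribute [local instance] Ultrafilter.semigroup

theorem exists_minimal_left_ideal {M : Type*} [Nonempty M] [Semigroup M]
    [TopologicalSpace M] [CompactSpace M] [T2Space M] (hc : ∀ r : M, Continuous (· * r)) :
    ∃ N : Set M, IsClosed N ∧ N.Nonempty ∧ (∀ x, ∀ y ∈ N, x * y ∈ N) ∧
      ∀ e ∈ N, ∀ x ∈ N, ∃ y, x = y * e := by
  let S : Set (Set M) := {N | IsClosed N ∧ N.Nonempty ∧ ∀ x, ∀ y ∈ N, x * y ∈ N}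
  obtain ⟨N, -, hN⟩ := zorn_superset_nonempty S (fun c hcS hch hne => by
    refine ⟨⋂₀ c, ⟨isClosed_sInter fun t ht => (hcS ht).1, ?_, ?_⟩, fun s hs => Set.sInter_subset_of_mem hs⟩
    · refine IsCompact.nonempty_sInter_of_directed_nonempty_isCompact_isClosed (hS := hne.to_subtype) ?_ ?_ ?_ ?_
      · exact IsChain.directedOn (hch.symm)
      · exact fun t ht => (hcS ht).2.1
      · exact fun t ht => (hcS ht).1.isCompact
      · exact fun t ht => (hcS ht).1
    · intro x y hy t ht
      exact (hcS ht).2.2 x y (hy t ht)) Set.univ ⟨isClosed_univ, Set.univ_nonempty, fun _ _ _ => trivial⟩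
  refine ⟨N, hN.1.1, hN.1.2.1, hN.1.2.2, ?_⟩
  intro e he x hx
  have h1 : Set.range (· * e) ∈ S := by
    refine ⟨(isCompact_range (hc e)).isClosed, ⟨_, ⟨e, rfl⟩⟩, ?_⟩
    rintro x _ ⟨y, rfl⟩
    exact ⟨x * y, mul_assoc _ _ _⟩
  have h2 : Set.range (· * e) ⊆ N := by
    rintro _ ⟨y, rfl⟩
    exact hN.1.2.2 y e he
  obtain ⟨y, hy⟩ := hN.2 h1 h2 hx
  exact ⟨y, hy.symm⟩

theorem continuous_umap {α β : Type*} (f : α → β) :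
    Continuous (fun U : Ultrafilter α => U.map f) :=
  ultrafilterBasis_is_basis.continuous_iff.2 <| Set.forall_mem_range.mpr fun s ↦
    ultrafilter_isOpen_basic (f ⁻¹' s)

theorem umap_mul {α β : Type*} [Monoid α] [Monoid β] (f : α →* β) (U V : Ultrafilter α) :
    (U * V).map f = U.map f * V.map f := by
  apply Ultrafilter.coe_inj.mp
  apply Filter.ext'
  intro p
  rw [Ultrafilter.eventually_mul]
  simp only [Ultrafilter.coe_map, Filter.eventually_map]
  rw [Ultrafilter.eventually_mul]
  simp only [map_mul]

theorem ultra (α : Type) : ∃ (V : Ultrafilter (List (Option α))),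
    (∀ᶠ w in (V : Filter (List (Option α))), w.head? = some none) ∧ ∀ a b, ∀ p : List α → Prop,
      (∀ᶠ v in (V : Filter (List (Option α))), p (v.map (fun o => o.getD a))) →
        ∀ᶠ v in (V : Filter (List (Option α))), ∀ᶠ v' in (V : Filter (List (Option α))),
          p (v.map (fun o => o.getD a) ++ v'.map (fun o => o.getD b)) := by
  let T : α → FreeMonoid (Option α) →* FreeMonoid α := fun a => FreeMonoid.map (fun o => o.getD a)
  obtain ⟨N, hNc, ⟨p, hp⟩, hNl, hNm⟩ := exists_minimal_left_ideal
    (M := Ultrafilter (FreeMonoid α)) Ultrafilter.continuous_mul_left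
  let 𝒱 : Set (Ultrafilter (FreeMonoid (Option α))) :=
    {V | {w : FreeMonoid (Option α) | (FreeMonoid.toList w).head? = some none} ∈ V ∧
      ∀ a, V.map (T a) ∈ N}
  obtain ⟨V, hV, hVi⟩ := exists_idempotent_in_compact_subsemigroup
    (M := Ultrafilter (FreeMonoid (Option α))) Ultrafilter.continuous_mul_left 𝒱 (by
      refine ⟨(pure (FreeMonoid.of none) : Ultrafilter (FreeMonoid (Option α))) *
        p.map (FreeMonoid.map (some : α → Option α)), ?_, ?_⟩
      · refine (Ultrafilter.eventually_mul _ _ (fun w => (FreeMonoid.toList w).head? = some none)).2 ?_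
        rw [Ultrafilter.coe_pure, Filter.eventually_pure]
        refine Filter.Eventually.of_forall fun v => ?_
        simp [FreeMonoid.toList_mul]
      · intro a
        rw [umap_mul, Ultrafilter.map_map]
        have : (T a : FreeMonoid (Option α) → FreeMonoid α) ∘ (FreeMonoid.map (some : α → Option α)) = id := by
          funext w
          change (T a) (FreeMonoid.map some w) = w
          rw [FreeMonoid.map_map]
          exact DFunLike.congr_fun FreeMonoid.map_id w
        rw [this, Ultrafilter.map_id]
        exact hNl _ _ hp) (by
      apply IsClosed.isCompact
      have : 𝒱 = {V | {w : FreeMonoid (Option α) | (FreeMonoid.toList w).head? = some none} ∈ V} ∩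
          ⋂ a, (fun U => Ultrafilter.map (T a) U) ⁻¹' N := by
        ext V; simp [𝒱]
      rw [this]
      exact (ultrafilter_isClosed_basic _).inter
        (isClosed_iInter fun a => hNc.preimage (continuous_umap _))) (by
      intro V hV W hW
      refine ⟨?_, fun a => ?_⟩
      · refine (Ultrafilter.eventually_mul _ _ (fun w => (FreeMonoid.toList w).head? = some none)).2 ?_
        filter_upwards [hV.1] with w hw
        refine Filter.Eventually.of_forall fun v => ?_
        have hw2 : (FreeMonoid.toList w).head? = some none := hw
        rw [FreeMonoid.toList_mul, List.head?_append, hw2]; rfl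
      · rw [umap_mul]
        exact hNl _ _ (hW.2 a))
  have hid : ∀ a, V.map (T a) * V.map (T a) = V.map (T a) := by
    intro a
    rw [← umap_mul, hVi]
  have hab : ∀ a b, V.map (T a) * V.map (T b) = V.map (T a) := by
    intro a b
    obtain ⟨y, hy⟩ := hNm _ (hV.2 b) _ (hV.2 a)
    rw [hy, mul_assoc, hid]
  refine ⟨V, hV.1, fun a b p hp => ?_⟩
  have h1 : ∀ᶠ w in ((V.map (T a) : Ultrafilter (FreeMonoid α)) : Filter (FreeMonoid α)), p w := hp
  rw [← hab a b] at h1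
  exact h1

def ap {m : ℕ} (a : ℕ → Fin m) (y : ℕ) : Fin m := if h : y < m then ⟨y, h⟩ else a (y - m)

theorem csCore {m : ℕ} (V : Ultrafilter (List (Option (Fin m))))
    (hV : ∀ᶠ w in (V : Filter (List (Option (Fin m)))), w.head? = some none)
    (hV2 : ∀ a b, ∀ p : List (Fin m) → Prop,
      (∀ᶠ v in (V : Filter (List (Option (Fin m)))), p (v.map (fun o => o.getD a))) →
        ∀ᶠ v in (V : Filter (List (Option (Fin m)))), ∀ᶠ v' in (V : Filter (List (Option (Fin m)))),
          p (v.map (fun o => o.getD a) ++ v'.map (fun o => o.getD b)))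
    (A : List (Fin m) → Prop) (a0 : Fin m)
    (hA : ∀ᶠ v in (V : Filter (List (Option (Fin m)))), A (v.map (fun o => o.getD a0))) :
    ∃ Ls : ℕ → List ℕ, (∀ l, ∃ t, Ls (l + 1) = Ls l ++ (m + l) :: t) ∧
      (∀ l, ∀ x ∈ Ls l, x < m + l) ∧ ∀ l a, A ((Ls l).map (ap a)) := by
  let Good : List (Fin m) → Prop := fun w => A w ∧
    ∀ a, ∀ᶠ v in (V : Filter (List (Option (Fin m)))), A (w ++ v.map (fun o => o.getD a))
  have h1 : ∀ᶠ v in (V : Filter (List (Option (Fin m)))), Good (v.map (fun o => o.getD a0)) := by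
    refine hA.and ?_
    rw [Filter.eventually_all]
    exact fun b => hV2 a0 b A hA
  have h2 : ∀ w, Good w → ∀ a, ∀ᶠ v in (V : Filter (List (Option (Fin m)))),
      Good (w ++ v.map (fun o => o.getD a)) := by
    intro w hw a
    refine (hw.2 a).and ?_
    rw [Filter.eventually_all]
    intro b
    have := hV2 a b (fun x => A (w ++ x)) (hw.2 a)
    simpa only [List.append_assoc] using this
  have step : ∀ l (L : List ℕ), (∀ x ∈ L, x < m + l) ∧ (∀ a, Good (L.map (ap a))) →
      ∃ L' : List ℕ, ((∀ x ∈ L', x < m + (l + 1)) ∧ (∀ a, Good (L'.map (ap a)))) ∧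
        ∃ t, L' = L ++ (m + l) :: t := by
    intro l L ⟨hL1, hL2⟩
    have hfin : {w : List (Fin m) | w.length = L.length}.Finite := List.finite_length_eq _ _
    have hev : ∀ᶠ v in (V : Filter (List (Option (Fin m)))),
        ∀ w ∈ {w : List (Fin m) | w.length = L.length}, ∀ c, Good w →
          Good (w ++ v.map (fun o => o.getD c)) := by
      rw [Filter.eventually_all_finite hfin]
      intro w hw
      rw [Filter.eventually_all]
      intro c
      by_cases hg : Good w
      · exact (h2 w hg c).mono fun v hv _ => hv
      · exact Filter.Eventually.of_forall fun v hg' => absurd hg' hg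
    obtain ⟨v, hv1, hv2⟩ := (hV.and hev).exists
    obtain ⟨t, rfl⟩ : ∃ t, v = none :: t := by
      cases v with
      | nil => simp at hv1
      | cons x t => simp at hv1; exact ⟨t, by rw [hv1]⟩
    refine ⟨L ++ (none :: t).map (fun o : Option (Fin m) => o.elim (m + l) (fun x => x.val)),
      ⟨?_, ?_⟩, ⟨t.map (fun o : Option (Fin m) => o.elim (m + l) (fun x => x.val)), by simp⟩⟩
    · intro x hx
      rcases List.mem_append.1 hx with hx | hx
      · have := hL1 x hx; omega
      · obtain ⟨o, -, rfl⟩ := List.mem_map.1 hx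
        cases o with
        | none => simp
        | some y => simp; omega
    · intro a
      have := hv2 (L.map (ap a)) (by simp) (a l) (hL2 a)
      convert this using 1
      rw [List.map_append, List.map_map]
      congr 1
      apply List.map_congr_left
      intro o _
      cases o with
      | none => simp [ap]
      | some y => simp [ap]
  obtain ⟨v0, hv0⟩ := h1.exists
  have base : (∀ x ∈ (v0.map (fun o => o.getD a0)).map (fun x : Fin m => x.val), x < m + 0) ∧
      (∀ a, Good (((v0.map (fun o => o.getD a0)).map (fun x : Fin m => x.val)).map (ap a))) := by
    constructor
    · intro x hx
      obtain ⟨y, -, rfl⟩ := List.mem_map.1 hx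
      simp
    · intro a
      convert hv0 using 1
      rw [List.map_map]
      conv_rhs => rw [← List.map_id (v0.map (fun o => o.getD a0))]
      apply List.map_congr_left
      intro o _
      simp [ap]
  choose! F hF using step
  let Ls : ℕ → List ℕ := fun l => Nat.rec ((v0.map (fun o => o.getD a0)).map (fun x : Fin m => x.val))
    (fun l L => F l L) l
  have hLs : ∀ l, (∀ x ∈ Ls l, x < m + l) ∧ (∀ a, Good ((Ls l).map (ap a))) := by
    intro l
    induction l with
    | zero => exact base
    | succ l ih => exact (hF l _ ih).1
  exact ⟨Ls, fun l => (hF l _ (hLs l)).2, fun l => (hLs l).1, fun l a => ((hLs l).2 a).1⟩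

/-- Carlson-Simpson -/
theorem cs {m : ℕ} (hm : 0 < m) (Q : List (Fin m) → Prop) :
    ∃ (h P : ℕ → ℕ), Fx m h ∧ (∀ l, h (P l) = m + l ∧ m ≤ P l ∧ ∀ x, x < P l → h x < m + l) ∧
      ((∀ a l, Q ((List.range (P l - m)).map (fun i => ap a (h (m + i))))) ∨
       (∀ a l, ¬ Q ((List.range (P l - m)).map (fun i => ap a (h (m + i)))))) := by
  obtain ⟨V, hV, hV2⟩ := ultra (Fin m)
  have main : ∀ A : List (Fin m) → Prop,
      (∀ᶠ v in (V : Filter (List (Option (Fin m)))), A (v.map (fun o => o.getD ⟨0, hm⟩))) →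
      ∃ (h P : ℕ → ℕ), Fx m h ∧ (∀ l, h (P l) = m + l ∧ m ≤ P l ∧ ∀ x, x < P l → h x < m + l) ∧
      (∀ a l, A ((List.range (P l - m)).map (fun i => ap a (h (m + i))))) := by
    intro A hA
    obtain ⟨Ls, hL1, hL2, hL3⟩ := csCore V hV hV2 A ⟨0, hm⟩ hA
    choose t ht using hL1
    have hlen : ∀ l, l ≤ (Ls l).length := by
      intro l
      induction l with
      | zero => omega
      | succ l ih => rw [ht]; simp; omega
    have hpre : ∀ l s i, i < (Ls l).length → (Ls (l + s)).getD i 0 = (Ls l).getD i 0 := by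
      intro l s i hi
      induction s with
      | zero => rfl
      | succ s ih =>
        have hle : ∀ s, (Ls l).length ≤ (Ls (l + s)).length := by
          intro s
          induction s with
          | zero => rfl
          | succ s ih => rw [← add_assoc, ht]; simp; omega
        rw [← ih, ← add_assoc, ht, List.getD_append _ _ _ _ (hi.trans_le (hle s))]
    have hpre' : ∀ l l' i, i < (Ls l).length → i < (Ls l').length →
        (Ls l).getD i 0 = (Ls l').getD i 0 := by
      intro l l' i h1 h2
      rcases le_total l l' with h | h
      · obtain ⟨s, rfl⟩ := Nat.exists_eq_add_of_le h
        exact (hpre _ _ _ h1).symm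
      · obtain ⟨s, rfl⟩ := Nat.exists_eq_add_of_le h
        exact (hpre _ _ _ h2)
    let h : ℕ → ℕ := fun x => if x < m then x else (Ls (x + 1)).getD (x - m) 0
    have hh : ∀ l i, i < (Ls l).length → h (m + i) = (Ls l).getD i 0 := by
      intro l i hi
      simp only [h]
      rw [if_neg (by omega), show m + i - m = i by omega]
      exact hpre' _ _ _ (by have := hlen (m + i + 1); omega) hi
    have hlt : ∀ l x, x < m + (Ls l).length → h x < m + l := by
      intro l x hx
      by_cases hxm : x < m
      · simp only [h, hxm, if_true]; omega
      · obtain ⟨i, rfl⟩ := Nat.exists_eq_add_of_le (not_lt.1 hxm)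
        rw [hh l i (by omega)]
        apply hL2
        rw [List.getD_eq_getElem _ _ (by omega)]
        exact List.getElem_mem _
    have hP : ∀ l, h (m + (Ls l).length) = m + l := by
      intro l
      rw [hh (l + 1) _ (by rw [ht]; simp), ht, List.getD_append_right _ _ _ _ le_rfl]
      simp
    have hid : ∀ x, x < m → h x = x := fun x hx => by simp [h, hx]
    refine ⟨h, fun l => m + (Ls l).length, ⟨⟨?_, ?_⟩, hid⟩, ?_, ?_⟩
    · intro x y hy
      by_cases hym : y < m
      · refine ⟨y, ?_, hid y hym⟩
        by_contra hxy
        rw [hid x (by omega)] at hy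
        omega
      · obtain ⟨l, rfl⟩ := Nat.exists_eq_add_of_le (not_lt.1 hym)
        refine ⟨_, ?_, hP l⟩
        by_contra hxy
        have := hlt (l + 1) x (by rw [ht]; simp; omega)
        omega
    · intro y
      by_cases hym : y < m
      · exact ⟨y, hid y hym⟩
      · obtain ⟨l, rfl⟩ := Nat.exists_eq_add_of_le (not_lt.1 hym)
        exact ⟨_, hP l⟩
    · exact fun l => ⟨hP l, by simp, fun x hx => hlt l x hx⟩
    · intro a l
      convert hL3 l a using 1
      apply List.ext_getElem
      · simp
      · intro i h1 h2
        simp at h1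
        simp only [List.getElem_map, List.getElem_range]
        rw [hh l i h1, List.getD_eq_getElem _ _ h1]
  rcases Ultrafilter.eventually_or.1 (Filter.Eventually.of_forall (f := (V : Filter (List (Option (Fin m)))))
    (fun v => Classical.em (Q (v.map (fun o => o.getD ⟨0, hm⟩))))) with hq | hq
  · obtain ⟨h, P, h1, h2, h3⟩ := main Q hq
    exact ⟨h, P, h1, h2, Or.inl h3⟩
  · obtain ⟨h, P, h1, h2, h3⟩ := main (fun w => ¬ Q w) hq
    exact ⟨h, P, h1, h2, Or.inr h3⟩

end Ultra

end CSP


namespace CSP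

def NA (Y : Set (ℕ → ℕ)) (g : ℕ → ℕ) (m : ℕ) (v : ℕ → ℕ) : Prop :=
  ∀ h, Fx m h → ∃ k, Rig k ∧ Agr m k v ∧ k ∘ (h ∘ g) ∈ Y

def Av (Y : Set (ℕ → ℕ)) (g : ℕ → ℕ) (m : ℕ) (v : ℕ → ℕ) : Prop :=
  ∀ k, Rig k → Agr m k v → k ∘ g ∉ Y

theorem NA.fx {Y : Set (ℕ → ℕ)} {g v h : ℕ → ℕ} {m : ℕ} (H : NA Y g m v) (hh : Fx m h) :
    NA Y (h ∘ g) m v := fun h' hh' => H (h' ∘ h) (hh'.comp hh)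

theorem Av.fx {Y : Set (ℕ → ℕ)} {g v h : ℕ → ℕ} {m : ℕ} (H : Av Y g m v) (hh : Fx m h) :
    Av Y (h ∘ g) m v := fun k hk hkv => H (k ∘ h) (hk.comp hh.1) (hh.agr' hkv)

theorem NA.congr {Y : Set (ℕ → ℕ)} {g v v' : ℕ → ℕ} {m : ℕ} (H : NA Y g m v) (h : Agr m v v') :
    NA Y g m v' := fun h' hh' => by
  obtain ⟨k, hk, hkv, hY⟩ := H h' hh'
  exact ⟨k, hk, hkv.trans h, hY⟩

theorem Av.congr {Y : Set (ℕ → ℕ)} {g v v' : ℕ → ℕ} {m : ℕ} (H : Av Y g m v) (h : Agr m v v') :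
    Av Y g m v' := fun k hk hkv => H k hk (hkv.trans h.symm)

theorem NA.not_av {Y : Set (ℕ → ℕ)} {g v : ℕ → ℕ} {m : ℕ} (H : NA Y g m v) : ¬ Av Y g m v := by
  intro hA
  obtain ⟨k, hk, hkv, hY⟩ := H id (fx_id m)
  exact hA k hk hkv hY

theorem not_NA {Y : Set (ℕ → ℕ)} {g v : ℕ → ℕ} {m : ℕ} (H : ¬ NA Y g m v) :
    ∃ h, Fx m h ∧ Av Y (h ∘ g) m v := by
  unfold NA at H
  push Not at H
  exact H

theorem NA.pass {Y : Set (ℕ → ℕ)} {g v h : ℕ → ℕ} {P m : ℕ} (hh : Rig h)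
    (h1 : ∀ x, x < P → h x < m) (hs : ∀ y, y < m → ∃ x, x < P ∧ h x = y)
    (H : NA Y g P (v ∘ h)) : NA Y (h ∘ g) m v := by
  intro h2 hh2
  obtain ⟨h3, h5, hh3, he, hk5⟩ := amalg hh h1 hs hh2
  obtain ⟨k, hk, hkv, hY⟩ := H h3 hh3
  obtain ⟨k5, hk5, hkv5, rfl⟩ := hk5 k v hk hkv
  refine ⟨k5, hk5, hkv5, ?_⟩
  have : k5 ∘ (h2 ∘ (h ∘ g)) = (k5 ∘ h5) ∘ (h3 ∘ g) := by
    rw [← Function.comp_assoc h2, ← he]; rfl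
  rw [this]; exact hY

theorem NA.merge {Y : Set (ℕ → ℕ)} {g v : ℕ → ℕ} {m i : ℕ} (H : NA Y g m v) (hi : i < m)
    (hv : v m = v i) : NA Y g (m + 1) v := by
  intro h hh
  obtain ⟨k, hk, hkv, hY⟩ := H (tau m i ∘ h) ((tau_fx hi).comp (hh.mono (by omega)))
  refine ⟨k ∘ tau m i, hk.comp (tau_fx hi).1, ?_, hY⟩
  intro x hx
  simp only [Function.comp]
  rcases Nat.lt_succ_iff_lt_or_eq.1 hx with hx | rfl
  · rw [(tau_fx hi).2 x hx]; exact hkv x hx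
  · rw [tau_self, hv]; exact hkv i hi

theorem finite_codes (m : ℕ) : ((fun (v : ℕ → ℕ) (i : Fin m) => v i) '' {v | Rig v}).Finite := by
  refine (Set.Finite.pi' (t := fun _ : Fin m => Set.Iio m) (fun _ => Set.finite_Iio m)).subset ?_
  rintro _ ⟨v, hv, rfl⟩ i
  have := Rig.le hv i
  simp only [Set.mem_Iio]
  omega

theorem agr_of_code {m : ℕ} {v v' : ℕ → ℕ}
    (h : (fun (i : Fin m) => v i) = (fun (i : Fin m) => v' i)) : Agr m v v' :=
  fun x hx => congrFun h ⟨x, hx⟩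

theorem code_of_agr {m : ℕ} {v v' : ℕ → ℕ} (h : Agr m v v') :
    (fun (i : Fin m) => v i) = (fun (i : Fin m) => v' i) := funext fun i => h i i.2

theorem decideLem (Y : Set (ℕ → ℕ)) (n : ℕ) (g : ℕ → ℕ) (hg : Rig g) :
    ∃ h, Fx n h ∧ ∀ m, n ≤ m → ∀ v, Rig v → Av Y (h ∘ g) m v ∨ NA Y (h ∘ g) m v := by
  refine fusion (fun m g => ∀ v, Rig v → Av Y g m v ∨ NA Y g m v) n ?_ ?_ g hg
  · intro m hm g h hg hh H v hv
    exact (H v hv).imp (fun h' => h'.fx hh) (fun h' => h'.fx hh)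
  · intro m hm g hg
    refine finCode m (fun (v : ℕ → ℕ) (i : Fin m) => v i) {v | Rig v} (finite_codes m)
      (fun v g => Av Y g m v ∨ NA Y g m v) ?_ ?_ ?_ g hg
    · intro v v' g hc H
      exact H.imp (fun h' => h'.congr (agr_of_code hc)) (fun h' => h'.congr (agr_of_code hc))
    · intro v g h hg hh H
      exact H.imp (fun h' => h'.fx hh) (fun h' => h'.fx hh)
    · intro v g hg
      by_cases H : NA Y g m v
      · exact ⟨id, fx_id m, Or.inr H⟩
      · obtain ⟨h, hh, hA⟩ := not_NA H
        exact ⟨h, hh, Or.inl hA⟩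

def OS (m : ℕ) (v : ℕ → ℕ) (p : ℕ) (v' : ℕ → ℕ) : Prop :=
  m ≤ p ∧ Rig v' ∧ Agr m v' v ∧ (∀ x, x < p → ∃ j, j < m ∧ v' x = v j) ∧ (∀ j, j < m → v' p ≠ v j)

theorem OS.congr {m p : ℕ} {v v2 v' : ℕ → ℕ} (h : OS m v p v') (hv : Agr m v v2) : OS m v2 p v' := by
  obtain ⟨h1, h2, h3, h4, h5⟩ := h
  refine ⟨h1, h2, h3.trans hv, fun x hx => ?_, fun j hj => ?_⟩
  · obtain ⟨j, hj, he⟩ := h4 x hx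
    exact ⟨j, hj, he.trans (hv j hj)⟩
  · rw [← hv j hj]; exact h5 j hj

theorem newAgr {P : ℕ} {f f' : ℕ → ℕ} (hf : Rig f) (hf' : Rig f') (h : Agr P f f')
    (h1 : ∀ x, x < P → f x ≠ f P) (h2 : ∀ x, x < P → f' x ≠ f' P) : f P = f' P := by
  rcases lt_trichotomy (f P) (f' P) with h3 | h3 | h3
  · obtain ⟨x, hx, he⟩ := hf'.1 _ _ h3
    exact absurd ((h x hx).trans he) (h1 x hx)
  · exact h3
  · obtain ⟨x, hx, he⟩ := hf.1 _ _ h3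
    exact absurd ((h x hx).symm.trans he) (h2 x hx)

theorem oneStep {Y : Set (ℕ → ℕ)} {g v : ℕ → ℕ} {m : ℕ} (hg : Rig g) (hm : 0 < m)
    (H : NA Y g m v) : ∃ h, Fx m h ∧ ∀ p v', OS m v p v' → NA Y (h ∘ g) (p + 1) v' := by
  obtain ⟨h0, hh0, hd⟩ := decideLem Y m g hg
  have H1 : NA Y (h0 ∘ g) m v := H.fx hh0
  obtain ⟨h, P, hh, hP, hcase⟩ := cs hm (fun w => ∀ u, OS m v (m + w.length) u →
    (∀ i (hi : i < w.length), u (m + i) = v (w[i]'hi)) → Av Y (h0 ∘ g) (m + w.length + 1) u)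
  have hlen : ∀ (a : ℕ → Fin m) l,
      ((List.range (P l - m)).map (fun i => ap a (h (m + i)))).length = P l - m := by simp
  have hPm : ∀ l, m + (P l - m) = P l := fun l => by have := (hP l).2.1; omega
  simp only [hlen, hPm, List.getElem_map, List.getElem_range] at hcase
  rcases hcase with hQ | hQ
  · exfalso
    obtain ⟨k, hk, hkv, hkY⟩ := H1 h hh
    have hex : ∃ y, ∀ j, j < m → k y ≠ v j := by
      obtain ⟨y, hy⟩ := hk.2 (m + ∑ j ∈ Finset.range m, v j)
      refine ⟨y, fun j hj he => ?_⟩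
      have := Finset.single_le_sum (f := v) (fun i _ => Nat.zero_le _) (Finset.mem_range.2 hj)
      omega
    have hy := Nat.find_spec hex
    have hmin := fun z => Nat.find_min (H := hex) (m := z)
    generalize Nat.find hex = y at hy hmin
    push Not at hmin
    have hym : m ≤ y := by
      by_contra hc
      exact hy y (by omega) (hkv y (by omega))
    obtain ⟨l, rfl⟩ := Nat.exists_eq_add_of_le hym
    choose! c hc using hmin
    let a : ℕ → Fin m := fun j => if hj : m + j < m + l then ⟨c (m + j), (hc _ hj).1⟩ else ⟨0, hm⟩
    have ha : ∀ y, y < m + l → v (ap a y) = k y := by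
      intro y hy
      unfold ap
      split_ifs with h1
      · exact (hkv y h1).symm
      · have : m + (y - m) = y := by omega
        simp only [a]
        rw [dif_pos (by omega)]
        simp only [this]
        exact (hc y hy).2.symm
    obtain ⟨hP1, hP2, hP3⟩ := hP l
    refine hQ a l (k ∘ h) ⟨hP2, hk.comp hh.1, hh.agr' hkv, ?_, ?_⟩ ?_ (k ∘ h) (hk.comp hh.1)
      (Agr.refl _ _) hkY
    · intro x hx
      have := hc (h x) (hP3 x hx)
      exact ⟨_, this.1, this.2⟩
    · intro j hj
      simp only [Function.comp, hP1]
      exact hy j hj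
    · intro i hi
      exact (ha _ (hP3 _ (by omega))).symm
  · refine ⟨h ∘ h0, hh.comp hh0, ?_⟩
    intro p v' hos
    obtain ⟨hp, hv', hvv, hold, hnew⟩ := id hos
    obtain ⟨l, rfl⟩ := Nat.exists_eq_add_of_le hp
    choose! c hc using hold
    let a : ℕ → Fin m := fun j => if hj : m + j < m + l then ⟨c (m + j), (hc _ hj).1⟩ else ⟨0, hm⟩
    have ha : ∀ y, y < m + l → v (ap a y) = v' y := by
      intro y hy
      unfold ap
      split_ifs with h1
      · exact (hvv y h1).symm
      · have : m + (y - m) = y := by omega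
        simp only [a]
        rw [dif_pos (by omega)]
        simp only [this]
        exact (hc y hy).2.symm
    obtain ⟨hP1, hP2, hP3⟩ := hP l
    have hq := hQ a l
    push Not at hq
    obtain ⟨u, ⟨hu1, hu2, hu3, hu4, hu5⟩, hu6, hu7⟩ := hq
    have hNA : NA Y (h0 ∘ g) (P l + 1) u :=
      (hd (P l + 1) (by omega) u hu2).resolve_left hu7
    have hag : Agr (P l) u (v' ∘ h) := by
      intro x hx
      simp only [Function.comp]
      by_cases hxm : x < m
      · rw [hh.2 x hxm, hu3 x hxm, hvv x hxm]
      · obtain ⟨i, rfl⟩ := Nat.exists_eq_add_of_le (not_lt.1 hxm)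
        rw [hu6 i (by omega)]
        exact ha _ (hP3 _ hx)
    have hag2 : Agr (P l + 1) u (v' ∘ h) := by
      intro x hx
      rcases Nat.lt_succ_iff_lt_or_eq.1 hx with hx | rfl
      · exact hag x hx
      · refine newAgr hu2 (hv'.comp hh.1) hag ?_ ?_
        · intro x hx he
          obtain ⟨j, hj, he2⟩ := hu4 x hx
          exact hu5 j hj (he.symm.trans he2)
        · intro x hx he
          simp only [Function.comp, hP1] at he
          have := hc (h x) (hP3 x hx)
          exact hnew _ this.1 (he.symm.trans this.2)
    rw [Function.comp_assoc]
    refine NA.pass (P := P l + 1) hh.1 ?_ ?_ (hNA.congr hag2)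
    · intro x hx
      rcases Nat.lt_succ_iff_lt_or_eq.1 hx with hx | rfl
      · have := hP3 x hx; omega
      · omega
    · intro y hy
      rcases Nat.lt_succ_iff_lt_or_eq.1 hy with hy | rfl
      · obtain ⟨x, hx, he⟩ := hh.1.1 (P l) y (by omega)
        exact ⟨x, by omega, he⟩
      · exact ⟨P l, by omega, hP1⟩

theorem hLemma {Y : Set (ℕ → ℕ)} {g q : ℕ → ℕ} {n : ℕ} (hg : Rig g) (hn : 0 < n)
    (H : NA Y g n q) : ∃ h, Fx n h ∧ ∀ m, n ≤ m → ∀ v, Rig v → Agr n v q → NA Y (h ∘ g) m v := by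
  have her : ∀ m v, ∀ g h, Rig g → Fx m h → (Av Y g m v ∨ ∀ p v', OS m v p v' → NA Y g (p + 1) v') →
      (Av Y (h ∘ g) m v ∨ ∀ p v', OS m v p v' → NA Y (h ∘ g) (p + 1) v') := by
    intro m v g h hg hh H
    refine H.imp (fun h' => h'.fx hh) (fun h' p v' hos => ?_)
    have hex := hh.1.2 p
    have hP := Nat.find_spec hex
    have hmin := fun z => Nat.find_min (H := hex) (m := z)
    generalize Nat.find hex = P at hP hmin
    have hlt : ∀ x, x < P → h x < p := by
      intro x hx
      rcases lt_trichotomy (h x) p with h1 | h1 | h1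
      · exact h1
      · exact absurd h1 (hmin x hx)
      · obtain ⟨x'', hx'', he''⟩ := hh.1.1 x p h1
        exact absurd he'' (hmin x'' (hx''.trans hx))
    obtain ⟨h1, h2, h3, h4, h5⟩ := hos
    have hPm : m ≤ P := by have := hh.1.le P; omega
    refine NA.pass (P := P + 1) hh.1 ?_ ?_
      (h' P (v' ∘ h) ⟨hPm, h2.comp hh.1, hh.agr' h3, fun x hx => h4 _ (hlt x hx), ?_⟩)
    · intro x hx
      rcases Nat.lt_succ_iff_lt_or_eq.1 hx with hx | rfl
      · have := hlt x hx; omega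
      · omega
    · intro y hy
      rcases Nat.lt_succ_iff_lt_or_eq.1 hy with hy | rfl
      · obtain ⟨x, hx, he⟩ := hh.1.1 P y (by omega)
        exact ⟨x, by omega, he⟩
      · exact ⟨P, by omega, hP⟩
    · intro j hj
      simp only [Function.comp, hP]
      exact h5 j hj
  obtain ⟨h, hh, hΦ⟩ := fusion (fun m g => ∀ v, Rig v → (Av Y g m v ∨ ∀ p v', OS m v p v' → NA Y g (p + 1) v'))
    n (fun m hm g h hg hh H v hv => her m v g h hg hh (H v hv)) (fun m hm g hg => by
      refine finCode m (fun (v : ℕ → ℕ) (i : Fin m) => v i) {v | Rig v} (finite_codes m)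
        (fun v g => Av Y g m v ∨ ∀ p v', OS m v p v' → NA Y g (p + 1) v') ?_ (her m) ?_ g hg
      · intro v v' g hc H
        exact H.imp (fun h' => h'.congr (agr_of_code hc))
          (fun h' p u hu => h' p u (hu.congr (agr_of_code hc).symm))
      · intro v g hg
        by_cases H : NA Y g m v
        · obtain ⟨h, hh, hA⟩ := oneStep hg (by omega) H
          exact ⟨h, hh, Or.inr hA⟩
        · obtain ⟨h, hh, hA⟩ := not_NA H
          exact ⟨h, hh, Or.inl hA⟩) g hg
  refine ⟨h, hh, fun m hm => ?_⟩
  induction m, hm using Nat.le_induction with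
  | base => exact fun v hv hvq => (H.fx hh).congr hvq.symm
  | succ m hm ih =>
    intro v hv hvq
    have hNA := ih v hv hvq
    by_cases hex : ∃ i, i < m ∧ v m = v i
    · obtain ⟨i, hi, he⟩ := hex
      exact hNA.merge hi he
    · push Not at hex
      exact (hΦ m hm v hv).resolve_left hNA.not_av m v
        ⟨le_rfl, hv, Agr.refl _ _, fun x hx => ⟨x, hx, rfl⟩, hex⟩

end CSP


namespace CSP

theorem extLemma {ι : Type} [Finite ι]
    (D : (ℕ → ℕ) → (ℕ → ℕ) → (ι → ℕ → ℕ) → (ι → ℕ → ℕ) → Prop) (n l t : ℕ)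
    (hD : ∀ g h k k' z, Fx n h → D (h ∘ g) k k' z → D g (k ∘ h) (fun i => k' i ∘ h) z)
    (g : ℕ → ℕ) 
    (H : ∀ h, Fx n h → ∃ k k' z, Rig k ∧ (∀ i, Rig (k' i)) ∧ D (h ∘ g) k k' z) :
    ∃ (h : ℕ → ℕ) (m : ℕ) (v : ℕ → ℕ) (v' z0 : ι → ℕ → ℕ), Fx n h ∧ n < m ∧ Rig v ∧
      (∀ i, Rig (v' i)) ∧ (∃ x, x < m ∧ v x = t) ∧
      ∀ h', Fx m h' → ∃ k k' z, Rig k ∧ (∀ i, Rig (k' i)) ∧ Agr m k v ∧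
        (∀ i, Agr m (k' i) (v' i)) ∧ (∀ i, Agr l (z i) (z0 i)) ∧ D (h' ∘ (h ∘ g)) k k' z := by
  by_contra hcon
  push Not at hcon
  let X := (ℕ → ℕ) × (ι → ℕ → ℕ) × (ι → ℕ → ℕ)
  let code : (m : ℕ) → X → (Fin m → ℕ) × (ι → Fin m → ℕ) × (ι → Fin l → ℕ) := fun m x =>
    (fun i => x.1 i, fun i j => x.2.1 i j, fun i j => x.2.2 i j)
  let cond : ℕ → X → Prop := fun m x => Rig x.1 ∧ (∀ i, Rig (x.2.1 i)) ∧ (∃ j, j < m ∧ x.1 j = t) ∧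
    ∀ i j, j < l → x.2.2 i j < m
  let Ψ : ℕ → X → (ℕ → ℕ) → Prop := fun m x g0 => Fx n g0 → ∀ x', cond m x' → code m x' = code m x →
    ¬ D (g0 ∘ g) x'.1 x'.2.1 x'.2.2
  have hfx : ∀ m, n + 1 ≤ m → ∀ g0 h, Rig g0 → Fx m h → Fx n (h ∘ g0) → Fx n g0 := by
    intro m hm g0 h hg0 hh hf
    refine ⟨hg0, fun x hx => ?_⟩
    have h1 := hf.2 x hx
    have h2 := hg0.le x
    simp only [Function.comp] at h1
    rwa [hh.2 _ (by omega)] at h1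
  have her : ∀ m, n + 1 ≤ m → ∀ x, ∀ g0 h, Rig g0 → Fx m h → Ψ m x g0 → Ψ m x (h ∘ g0) := by
    intro m hm x g0 h hg0 hh H1 hf x' hx' hc hDx
    refine H1 (hfx m hm g0 h hg0 hh hf) (x'.1 ∘ h, fun i => x'.2.1 i ∘ h, x'.2.2) ?_ ?_ ?_
    · obtain ⟨h1, h2, ⟨j, hj, h3⟩, h4⟩ := hx'
      refine ⟨h1.comp hh.1, fun i => (h2 i).comp hh.1, ⟨j, hj, ?_⟩, h4⟩
      simp only [Function.comp, hh.2 j hj, h3]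
    · rw [← hc]
      simp only [code, Prod.mk.injEq]
      refine ⟨funext fun i => ?_, funext fun i => funext fun j => ?_, trivial⟩
      · simp only [Function.comp, hh.2 i i.2]
      · simp only [Function.comp, hh.2 j j.2]
    · exact hD (g0 ∘ g) h x'.1 x'.2.1 x'.2.2 (hh.mono (by omega)) hDx
  obtain ⟨h, hh, hΦ⟩ := fusion (fun m g0 => ∀ x, cond m x → Ψ m x g0) (n + 1)
    (fun m hm g0 h hg0 hh H1 x hx => her m hm x g0 h hg0 hh (H1 x hx)) (fun m hm g0 hg0 => by
      refine finCode m (code m) {x | cond m x} ?_ (Ψ m) ?_ (her m hm) ?_ g0 hg0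
      · refine ((Set.Finite.pi' (t := fun _ : Fin m => Set.Iio m) (fun _ => Set.finite_Iio m)).prod
          ((Set.Finite.pi' (fun _ : ι => Set.Finite.pi' (t := fun _ : Fin m => Set.Iio m)
            (fun _ => Set.finite_Iio m))).prod
           (Set.Finite.pi' (fun _ : ι => Set.Finite.pi' (t := fun _ : Fin l => Set.Iio m)
            (fun _ => Set.finite_Iio m))))).subset ?_
        rintro _ ⟨x, ⟨h1, h2, -, h4⟩, rfl⟩
        refine ⟨fun i => ?_, fun i j => ?_, fun i j => ?_⟩
        · exact (h1.le i).trans_lt i.2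
        · exact ((h2 i).le j).trans_lt j.2
        · exact h4 i j j.2
      · intro x x' g0 hc H1 hf x'' hx'' hc''
        exact H1 hf x'' hx'' (hc''.trans hc.symm)
      · intro x g0 hg0
        by_cases hex : Fx n g0 ∧ ∃ x', cond m x' ∧ code m x' = code m x
        · obtain ⟨hf, x', hx', hc⟩ := hex
          obtain ⟨h', hh', hno⟩ := hcon g0 m x'.1 x'.2.1 x'.2.2 hf hm hx'.1 hx'.2.1 hx'.2.2.1
          refine ⟨h', hh', fun _ x'' hx'' hc'' => ?_⟩
          have hcc := hc''.trans hc.symm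
          simp only [code, Prod.mk.injEq] at hcc
          refine hno x''.1 x''.2.1 x''.2.2 hx''.1 hx''.2.1 (agr_of_code hcc.1)
            (fun i => agr_of_code (congrFun hcc.2.1 i)) (fun i => agr_of_code (congrFun hcc.2.2 i))
        · refine ⟨id, fx_id m, fun hf x' hx' hc => ?_⟩
          exact absurd ⟨hf, x', hx', hc⟩ hex) id rig_id
  obtain ⟨k, k', z, hk, hk', hDk⟩ := H h (hh.mono (by omega))
  obtain ⟨j, hj⟩ := hk.2 t
  have hbd : ∃ b, ∀ i j, j < l → z i j < b := by
    have : (Set.range (fun p : ι × Fin l => z p.1 p.2)).Finite := Set.finite_range _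
    obtain ⟨b, hb⟩ := this.bddAbove
    refine ⟨b + 1, fun i j hj => ?_⟩
    have := hb ⟨(i, ⟨j, hj⟩), rfl⟩
    simp only [] at this
    omega
  obtain ⟨b, hb⟩ := hbd
  refine hΦ (n + 1 + j + 1 + b) (by omega) (k, k', z) ?_ (hh.mono (by omega)) (k, k', z) ?_ rfl hDk
  all_goals
    exact ⟨hk, hk', ⟨j, by omega, hj⟩, fun i j hj => by have := hb i j hj; simp only []; omega⟩

end CSP


namespace CSP

theorem firstPos {h : ℕ → ℕ} (hh : Rig h) (m : ℕ) : ∃ P, m ≤ P ∧ (∀ x, x < P → h x < m) ∧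
    (∀ y, y < m → ∃ x, x < P ∧ h x = y) := by
  have hex := hh.2 m
  have hP := Nat.find_spec hex
  have hmin := fun z => Nat.find_min (H := hex) (m := z)
  generalize Nat.find hex = P at hP hmin
  have hlt : ∀ x, x < P → h x < m := by
    intro x hx
    rcases lt_trichotomy (h x) m with h1 | h1 | h1
    · exact h1
    · exact absurd h1 (hmin x hx)
    · obtain ⟨x'', hx'', he''⟩ := hh.1 x m h1
      exact absurd he'' (hmin x'' (hx''.trans hx))
  exact ⟨P, by have := hh.le P; omega, hlt, fun y hy => hh.1 P y (by omega)⟩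

theorem seqLemma {X : Type*} (Inv : ℕ → X → Prop) (Rel : ℕ → X → X → Prop) (x0 : X)
    (h0 : Inv 0 x0) (step : ∀ t x, Inv t x → ∃ x', Inv (t + 1) x' ∧ Rel t x x') :
    ∃ xs : ℕ → X, xs 0 = x0 ∧ ∀ t, Inv t (xs t) ∧ Rel t (xs t) (xs (t + 1)) := by
  have : Nonempty X := ⟨x0⟩
  choose! F hF using step
  let xs : ℕ → X := fun t => Nat.rec x0 (fun t x => F t x) t
  have hI : ∀ t, Inv t (xs t) := by
    intro t
    induction t with
    | zero => exact h0
    | succ t ih => exact (hF t _ ih).1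
  exact ⟨xs, rfl, fun t => ⟨hI t, (hF t _ (hI t)).2⟩⟩

theorem limZ {z : ℕ → ℕ → ℕ} (hz : ∀ t, Agr t (z (t + 1)) (z t)) :
    ∃ Z, ∀ t, Agr t Z (z t) := by
  have h : ∀ t s, Agr t (z (t + s)) (z t) := by
    intro t s
    induction s with
    | zero => exact Agr.refl _ _
    | succ s ih => exact ((hz (t + s)).mono (by omega)).trans ih
  refine ⟨fun x => z (x + 1) x, fun t x hx => ?_⟩
  obtain ⟨s, rfl⟩ := Nat.exists_eq_add_of_le (show x + 1 ≤ t from hx)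
  exact (h (x + 1) s x (by omega)).symm

theorem tendsto_agr {y : ℕ → ℕ → ℕ} {Z : ℕ → ℕ} (h : ∀ t, Agr t (y t) Z) :
    Filter.Tendsto y Filter.atTop (nhds Z) := by
  rw [tendsto_pi_nhds]
  intro x
  refine tendsto_const_nhds.congr' ?_
  filter_upwards [Filter.eventually_gt_atTop x] with t ht
  exact (h t x ht).symm

theorem contAgr {α : (ℕ → ℕ) → ℕ → ℕ} (hα : Continuous α) {y : ℕ → ℕ → ℕ} {Z f : ℕ → ℕ}
    (h : ∀ t, Agr t (y t) Z) (h2 : ∀ t, Agr t (α (y t)) f) : α Z = f :=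
  tendsto_nhds_unique ((hα.tendsto Z).comp (tendsto_agr h)) (tendsto_agr h2)

theorem limLemma {g v h : ℕ → ℕ → ℕ} {m : ℕ → ℕ} (hg : ∀ t, g (t + 1) = h t ∘ g t)
    (hh : ∀ t, Fx (m t) (h t)) (hm : ∀ t, m t < m (t + 1)) (hv : ∀ t, Rig (v t))
    (hvv : ∀ t, Agr (m t) (v (t + 1)) (v t)) (ht : ∀ t, ∃ x, x < m (t + 1) ∧ v (t + 1) x = t) :
    ∃ K : ℕ → ℕ → ℕ, ∀ t, Rig (K t) ∧ Agr (m t) (K t) (v t) ∧ K 0 ∘ g 0 = K t ∘ g t := by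
  have hmm : StrictMono m := strictMono_nat_of_lt_succ hm
  obtain ⟨G, hG⟩ := limG hh hmm.monotone (fun t => hmm.le_apply)
  have h1 : ∀ t s, Agr (m t) (v (t + s)) (v t) := by
    intro t s
    induction s with
    | zero => exact Agr.refl _ _
    | succ s ih => exact ((hvv (t + s)).mono (hmm.monotone (by omega))).trans ih
  obtain ⟨V, hV⟩ : ∃ V, ∀ t, Agr (m t) V (v t) := by
    refine ⟨fun x => v (x + 1) x, fun t x hx => ?_⟩
    have hx1 : x < m (x + 1) := hmm.le_apply (x := x + 1)
    rcases le_total t (x + 1) with h | h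
    · obtain ⟨s, hs⟩ := Nat.exists_eq_add_of_le h
      simp only [hs]
      exact h1 t s x hx
    · obtain ⟨s, rfl⟩ := Nat.exists_eq_add_of_le h
      exact (h1 _ s x hx1).symm
  have hVR : Rig V := by
    refine ⟨fun x y hy => ?_, fun y => ?_⟩
    · have hx1 : x < m (x + 1) := hmm.le_apply (x := x + 1)
      rw [hV (x + 1) x hx1] at hy
      obtain ⟨x', hx', he⟩ := (hv _).1 x y hy
      exact ⟨x', hx', (hV (x + 1) x' (by omega)).trans he⟩
    · obtain ⟨x, hx, he⟩ := ht y
      exact ⟨x, (hV _ x hx).trans he⟩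
  refine ⟨fun t => V ∘ G t, fun t => ⟨hVR.comp (hG t).1.1, (hG t).1.agr' (hV t), ?_⟩⟩
  induction t with
  | zero => rfl
  | succ t ih => rw [ih]; beta_reduce; rw [(hG t).2, hg]; rfl

theorem half {α : (ℕ → ℕ) → ℕ → ℕ} {Y' : Set (ℕ → ℕ)} {g v z : ℕ → ℕ} {m l : ℕ} (t : ℕ)
    (hg : Rig g) (hm : 0 < m) (H1 : NA (α '' {y | Agr l y z}) g m v) (H2 : NA Y' g m v) :
    ∃ h m' v' z', Fx m h ∧ m < m' ∧ Rig v' ∧ Agr m v' v ∧ (∃ x, x < m' ∧ v' x = t) ∧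
      Agr l z' z ∧ NA (α '' {y | Agr (l + 1) y z'}) (h ∘ g) m' v' ∧ NA Y' (h ∘ g) m' v' := by
  obtain ⟨h1, hh1, hH⟩ := hLemma hg hm H2
  obtain ⟨h2, m', v', w', z0, hh2, hm', hv', -, ht, hE⟩ := extLemma (ι := Unit)
    (fun g k k' z' => Agr m k v ∧ Agr l (z' ()) z ∧ α (z' ()) = k ∘ g) m (l + 1) t
    (fun g h k k' z' hh hd => ⟨hh.agr' hd.1, hd.2.1, hd.2.2⟩) (h1 ∘ g) (fun h hh => by
      obtain ⟨k, hk, hkv, y, hy, he⟩ := (H1.fx hh1) h hh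
      exact ⟨k, fun _ => id, fun _ => y, hk, fun _ => rig_id, hkv, hy, he⟩)
  obtain ⟨k, k', z', hk, -, hkv, -, hz, hd1, hd2, hd3⟩ := hE id (fx_id _)
  have hvv : Agr m v' v := (hkv.symm.mono hm'.le).trans hd1
  refine ⟨h2 ∘ h1, m', v', z0 (), hh2.comp hh1, hm', hv', hvv, ht,
    ((hz ()).symm.mono (by omega)).trans hd2, ?_, ?_⟩
  · intro h' hh'
    obtain ⟨k, k', z', hk, -, hkv, -, hz, hd1, hd2, hd3⟩ := hE h' hh'
    exact ⟨k, hk, hkv, z' (), hz (), hd3⟩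
  · obtain ⟨P, hP1, hP2, hP3⟩ := firstPos hh2.1 m'
    rw [Function.comp_assoc]
    exact NA.pass hh2.1 hP2 hP3 (hH P (by omega) (v' ∘ h2) (hv'.comp hh2.1) (hh2.agr' hvv))

theorem inter2 {α β : (ℕ → ℕ) → ℕ → ℕ} (hα : Continuous α) (hβ : Continuous β) {g q : ℕ → ℕ}
    {n : ℕ} (hg : Rig g) (hq : Rig q) (hn : 0 < n) (H1 : NA (Set.range α) g n q)
    (H2 : NA (Set.range β) g n q) :
    ∃ k, Rig k ∧ Agr n k q ∧ k ∘ g ∈ Set.range α ∩ Set.range β := by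
  let X := (ℕ → ℕ) × ℕ × (ℕ → ℕ) × (ℕ → ℕ) × (ℕ → ℕ)
  obtain ⟨xs, hx0, hxs⟩ := seqLemma (X := X)
    (fun t x => Rig x.1 ∧ 0 < x.2.1 ∧ Rig x.2.2.1 ∧
      NA (α '' {y | Agr t y x.2.2.2.1}) x.1 x.2.1 x.2.2.1 ∧
      NA (β '' {y | Agr t y x.2.2.2.2}) x.1 x.2.1 x.2.2.1)
    (fun t x x' => ∃ h, x'.1 = h ∘ x.1 ∧ Fx x.2.1 h ∧ x.2.1 < x'.2.1 ∧ Agr x.2.1 x'.2.2.1 x.2.2.1 ∧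
      (∃ j, j < x'.2.1 ∧ x'.2.2.1 j = t) ∧ Agr t x'.2.2.2.1 x.2.2.2.1 ∧ Agr t x'.2.2.2.2 x.2.2.2.2)
    (g, n, q, id, id) ⟨hg, hn, hq, by
      have : {y | Agr 0 y id} = Set.univ := by ext y; simp [Agr]
      simpa [this] using ⟨H1, H2⟩⟩ (by
    rintro t ⟨g, m, v, z, w⟩ ⟨hg, hm, hv, h1, h2⟩
    obtain ⟨ha, m', v', z', hha, hm', hv', hvv, ht, hz, h1, h2⟩ := half t hg hm h1 h2
    obtain ⟨hb, m'', v'', w', hhb, hm'', hv'', hvv', ht', hw, h2, h1⟩ :=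
      half t (hha.1.comp hg) (by omega) h2 h1
    refine ⟨(hb ∘ (ha ∘ g), m'', v'', z', w'), ⟨hhb.1.comp (hha.1.comp hg), ?_, hv'', h1, h2⟩,
      hb ∘ ha, rfl, (hhb.mono hm'.le).comp hha, ?_, ?_, ht', hz, hw⟩
    · exact (hm.trans hm').trans hm''
    · exact hm'.trans hm''
    · exact (hvv'.mono hm'.le).trans hvv)
  have hI := fun t => (hxs t).1
  have hR := fun t => (hxs t).2
  choose hs hs1 hs2 hs3 hs4 hs5 hs6 hs7 using hR
  obtain ⟨K, hK⟩ := limLemma (g := fun t => (xs t).1) (v := fun t => (xs t).2.2.1)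
    (m := fun t => (xs t).2.1) hs1 hs2 hs3 (fun t => (hI t).2.2.1) hs4 hs5
  have hmm : StrictMono (fun t => (xs t).2.1) := strictMono_nat_of_lt_succ hs3
  have hK0 := hK 0
  have key : ∀ t k, Agr (xs t).2.1 k (xs t).2.2.1 → Agr t (k ∘ (xs t).1) (K 0 ∘ g) := by
    intro t k hk x hx
    have h1 : K 0 ∘ g = K t ∘ (xs t).1 := by
      have := (hK t).2.2
      simpa only [hx0] using this
    rw [h1]
    have h2 := (hI t).1.le x
    have h3 : t ≤ (xs t).2.1 := hmm.le_apply
    exact (hk _ (by omega)).trans ((hK t).2.1 _ (lt_of_le_of_lt h2 (lt_of_lt_of_le hx h3))).symm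
  refine ⟨K 0, (hK 0).1, by simpa only [hx0] using (hK 0).2.1, ?_, ?_⟩
  · obtain ⟨Z, hZ⟩ := limZ (z := fun t => (xs t).2.2.2.1) hs6
    have : ∀ t, ∃ y, Agr t y Z ∧ Agr t (α y) (K 0 ∘ g) := by
      intro t
      obtain ⟨k, hk, hkv, y, hy, he⟩ := (hI t).2.2.2.1 id (fx_id _)
      exact ⟨y, Agr.trans hy (hZ t).symm, by rw [he]; exact key t k hkv⟩
    choose y hy1 hy2 using this
    exact ⟨Z, contAgr hα hy1 hy2⟩
  · obtain ⟨Z, hZ⟩ := limZ (z := fun t => (xs t).2.2.2.2) hs7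
    have : ∀ t, ∃ y, Agr t y Z ∧ Agr t (β y) (K 0 ∘ g) := by
      intro t
      obtain ⟨k, hk, hkv, y, hy, he⟩ := (hI t).2.2.2.2 id (fx_id _)
      exact ⟨y, Agr.trans hy (hZ t).symm, by rw [he]; exact key t k hkv⟩
    choose y hy1 hy2 using this
    exact ⟨Z, contAgr hβ hy1 hy2⟩

open MeasureTheory in
theorem inter2A {Y Y' : Set (ℕ → ℕ)} (hY : AnalyticSet Y) (hY' : AnalyticSet Y') {g q : ℕ → ℕ}
    {n : ℕ} (hg : Rig g) (hq : Rig q) (hn : 0 < n) (H1 : NA Y g n q)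
    (H2 : NA Y' g n q) : NA (Y ∩ Y') g n q := by
  rw [AnalyticSet] at hY hY'
  rcases hY with rfl | ⟨α, hα, rfl⟩
  · obtain ⟨k, -, -, h⟩ := H1 id (fx_id _)
    exact absurd h (Set.notMem_empty _)
  rcases hY' with rfl | ⟨β, hβ, rfl⟩
  · obtain ⟨k, -, -, h⟩ := H2 id (fx_id _)
    exact absurd h (Set.notMem_empty _)
  intro h hh
  exact inter2 hα hβ (hh.1.comp hg) hq hn (H1.fx hh) (H2.fx hh)

open MeasureTheory in
theorem interFin {ι : Type} [Finite ι] {Y : ι → Set (ℕ → ℕ)} (hY : ∀ i, AnalyticSet (Y i))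
    {g q : ℕ → ℕ} {n : ℕ} (hg : Rig g) (hq : Rig q) (hn : 0 < n) (H : ∀ i, NA (Y i) g n q) :
    ∃ k, Rig k ∧ Agr n k q ∧ ∀ i, k ∘ g ∈ Y i := by
  have := Fintype.ofFinite ι
  have : ∀ s : Finset ι, AnalyticSet (⋂ i ∈ s, Y i) ∧ NA (⋂ i ∈ s, Y i) g n q := by
    intro s
    induction s using Finset.induction_on with
    | empty =>
      simp only [Finset.notMem_empty, Set.iInter_of_empty, Set.iInter_univ]
      exact ⟨MeasurableSet.univ.analyticSet, fun h hh => ⟨q, hq, Agr.refl _ _, trivial⟩⟩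
    | @insert a s ha ih =>
      rw [Finset.set_biInter_insert]
      refine ⟨?_, inter2A (hY a) ih.1 hg hq hn (H a) ih.2⟩
      rw [Set.inter_eq_iInter]
      exact AnalyticSet.iInter (fun b => by cases b; exacts [ih.1, hY a])
  obtain ⟨k, hk, hkq, h⟩ := (this Finset.univ).2 id (fx_id _)
  exact ⟨k, hk, hkq, fun i => by simpa using Set.mem_iInter₂.1 h i (Finset.mem_univ i)⟩

end CSP


namespace CSP

def Big (a b : (ℕ → ℕ) → ℕ → ℕ) (g : ℕ → ℕ) (n : ℕ) (q z : ℕ → ℕ) (l : ℕ) (q' : ℕ → ℕ) : Prop :=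
  ∀ h, Fx n h → ∃ k k' y, Rig k ∧ Rig k' ∧ Agr n k q ∧ Agr n k' q' ∧ Agr l y z ∧
    a y = k ∘ (h ∘ g) ∧ b y = k' ∘ (h ∘ g)

theorem Big.split {a b : (ℕ → ℕ) → ℕ → ℕ} {g q z q' : ℕ → ℕ} {n l i : ℕ}
    (H : Big a b g n q z l q') (hi : i < n) :
    Big a b g (n + 1) (q ∘ tau n i) z l (q' ∘ tau n i) := by
  intro h hh
  obtain ⟨k, k', y, hk, hk', hkq, hkq', hy, h1, h2⟩ :=
    H (tau n i ∘ h) ((tau_fx hi).comp (hh.mono (by omega)))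
  exact ⟨k ∘ tau n i, k' ∘ tau n i, y, hk.comp (tau_fx hi).1, hk'.comp (tau_fx hi).1,
    hkq.comp (tau_lt hi), hkq'.comp (tau_lt hi), hy, h1, h2⟩

theorem Big.congr {a b : (ℕ → ℕ) → ℕ → ℕ} {g q q2 z q' : ℕ → ℕ} {n l : ℕ}
    (H : Big a b g n q z l q') (h : Agr n q q2) : Big a b g n q2 z l q' := by
  intro h' hh'
  obtain ⟨k, k', y, hk, hk', hkq, hr⟩ := H h' hh'
  exact ⟨k, k', y, hk, hk', hkq.trans h, hr⟩

theorem meas_agr (n : ℕ) (q : ℕ → ℕ) : MeasurableSet {k : ℕ → ℕ | Agr n k q} := by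
  have : {k : ℕ → ℕ | Agr n k q} = ⋂ x, ⋂ (_ : x < n), {k : ℕ → ℕ | k x = q x} := by
    ext k; simp [Agr]
  rw [this]
  refine MeasurableSet.iInter fun x => MeasurableSet.iInter fun _ => ?_
  exact measurableSet_eq_fun (measurable_pi_apply x) measurable_const

theorem meas_rig : MeasurableSet {k : ℕ → ℕ | Rig k} := by
  have : {k : ℕ → ℕ | Rig k} = (⋂ x, ⋂ y, ({k : ℕ → ℕ | y < k x}ᶜ ∪ ⋃ x', ⋃ (_ : x' < x), {k : ℕ → ℕ | k x' = y}))
      ∩ ⋂ y, ⋃ x, {k : ℕ → ℕ | k x = y} := by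
    ext k
    simp only [Rig, Set.mem_inter_iff, Set.mem_iInter, Set.mem_union, Set.mem_compl_iff,
      Set.mem_iUnion, Set.mem_ofPred_eq, imp_iff_not_or, exists_prop]
  rw [this]
  refine MeasurableSet.inter (MeasurableSet.iInter fun x => MeasurableSet.iInter fun y => ?_)
    (MeasurableSet.iInter fun y => MeasurableSet.iUnion fun x => ?_)
  · refine MeasurableSet.union (MeasurableSet.compl ?_)
      (MeasurableSet.iUnion fun x' => MeasurableSet.iUnion fun _ => ?_)
    · exact measurableSet_lt measurable_const (measurable_pi_apply x)
    · exact measurableSet_eq_fun (measurable_pi_apply x') measurable_const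
  · exact measurableSet_eq_fun (measurable_pi_apply x) measurable_const

open MeasureTheory in
theorem analytic_Y {a b : (ℕ → ℕ) → ℕ → ℕ} (ha : Continuous a) (hb : Continuous b)
    (g q z : ℕ → ℕ) (n l : ℕ) :
    AnalyticSet {f | ∃ k' y, Rig k' ∧ Agr n k' q ∧ Agr l y z ∧ a y = f ∧ b y = k' ∘ g} := by
  have : {f | ∃ k' y, Rig k' ∧ Agr n k' q ∧ Agr l y z ∧ a y = f ∧ b y = k' ∘ g} =
      (fun p : (ℕ → ℕ) × (ℕ → ℕ) => a p.2) '' {p | Rig p.1 ∧ Agr n p.1 q ∧ Agr l p.2 z ∧ b p.2 = p.1 ∘ g} := by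
    ext f
    constructor
    · rintro ⟨k', y, h1, h2, h3, h4, h5⟩
      exact ⟨(k', y), ⟨h1, h2, h3, h5⟩, h4⟩
    · rintro ⟨⟨k', y⟩, ⟨h1, h2, h3, h5⟩, h4⟩
      exact ⟨k', y, h1, h2, h3, h4, h5⟩
  rw [this]
  refine MeasurableSet.analyticSet_image ?_ (ha.measurable.comp measurable_snd)
  refine (measurable_fst meas_rig).inter ((measurable_fst (meas_agr n q)).inter
    ((measurable_snd (meas_agr l z)).inter ?_))
  refine measurableSet_eq_fun (hb.measurable.comp measurable_snd) ?_
  exact measurable_pi_lambda _ fun x => (measurable_pi_apply (g x)).comp measurable_fst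

theorem jointExt {a b : (ℕ → ℕ) → ℕ → ℕ} (ha : Continuous a) (hb : Continuous b)
    {ι : Type} [Finite ι] {g q : ℕ → ℕ} {q' z : ι → ℕ → ℕ} {n l : ℕ} (t : ℕ) (hg : Rig g) (hn : 0 < n)
    (hq : Rig q) (H : ∀ i, Big a b g n q (z i) l (q' i)) :
    ∃ (h : ℕ → ℕ) (m : ℕ) (v : ℕ → ℕ) (v' z0 : ι → ℕ → ℕ), Fx n h ∧ n < m ∧ Rig v ∧ Agr n v q ∧
      (∀ i, Rig (v' i)) ∧ (∀ i, Agr n (v' i) (q' i)) ∧ (∀ i, Agr l (z0 i) (z i)) ∧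
      (∃ x, x < m ∧ v x = t) ∧ ∀ i, Big a b (h ∘ g) m v (z0 i) (l + 1) (v' i) := by
  obtain ⟨h, m, v, v', z0, hh, hm, hv, hv', ht, hE⟩ := extLemma
    (fun g k k' z' => Agr n k q ∧ ∀ i, Agr n (k' i) (q' i) ∧ Agr l (z' i) (z i) ∧
      a (z' i) = k ∘ g ∧ b (z' i) = k' i ∘ g) n (l + 1) t
    (fun g h k k' z' hh hd => ⟨hh.agr' hd.1, fun i => ⟨hh.agr' (hd.2 i).1, (hd.2 i).2⟩⟩) g
    (fun h hh => by
      obtain ⟨k, hk, hkq, hY⟩ := interFin (fun i => analytic_Y ha hb (h ∘ g) (q' i) (z i) n l)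
        (hh.1.comp hg) hq hn (fun i h' hh' => by
          obtain ⟨k, k', y, hk, hk', hkq, hkq', hy, h1, h2⟩ := H i (h' ∘ h) (hh'.comp hh)
          exact ⟨k, hk, hkq, k' ∘ h', y, hk'.comp hh'.1, hh'.agr' hkq', hy, h1, h2⟩)
      choose k' y h1 h2 h3 h4 h5 using hY
      exact ⟨k, k', y, hk, h1, hkq, fun i => ⟨h2 i, h3 i, h4 i, h5 i⟩⟩)
  obtain ⟨k, k', z', hk, hk', hkv, hkv', hz, hd1, hd2⟩ := hE id (fx_id _)
  refine ⟨h, m, v, v', z0, hh, hm, hv, (hkv.symm.mono hm.le).trans hd1, hv',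
    fun i => ((hkv' i).symm.mono hm.le).trans (hd2 i).1,
    fun i => ((hz i).symm.mono (by omega)).trans (hd2 i).2.1, ht, ?_⟩
  intro i h' hh'
  obtain ⟨k, k', z', hk, hk', hkv, hkv', hz, hd1, hd2⟩ := hE h' hh'
  exact ⟨k, k' i, z' i, hk, hk' i, hkv, hkv' i, hz i, (hd2 i).2.2⟩

def res (w : ℕ → Bool) : ℕ → List Bool
  | 0 => []
  | L + 1 => w L :: res w L

theorem res_length (w : ℕ → Bool) (L : ℕ) : (res w L).length = L := by
  induction L with
  | zero => rfl
  | succ L ih => simp [res, ih]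

theorem res_congr {w w' : ℕ → Bool} {L : ℕ} (h : ∀ x, x < L → w x = w' x) : res w L = res w' L := by
  induction L with
  | zero => rfl
  | succ L ih => rw [res, res, ih (fun x hx => h x (by omega)), h L (by omega)]

theorem noBig {a b : (ℕ → ℕ) → ℕ → ℕ} (ha : Continuous a) (hb : Continuous b)
    (hc : ∀ f, {f' | ∃ y, a y = f ∧ b y = f'}.Countable)
    {g q q' z : ℕ → ℕ} {n i0 i1 : ℕ} (hg : Rig g) (hq : Rig q) 
    (h0 : i0 < n) (h1 : i1 < n) (he : q i0 = q i1) (hne : q' i0 ≠ q' i1)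
    (H : Big a b g n q z 0 q') : False := by
  let I : Bool → ℕ := fun c => if c then i0 else i1
  let X := (ℕ → ℕ) × ℕ × (ℕ → ℕ) × (List Bool → ℕ → ℕ) × (List Bool → ℕ → ℕ)
  obtain ⟨xs, hx0, hxs⟩ := seqLemma (X := X)
    (fun L x => Rig x.1 ∧ n ≤ x.2.1 ∧ Rig x.2.2.1 ∧ x.2.2.1 i0 = x.2.2.1 i1 ∧
      ∀ w, w.length = L → x.2.2.2.1 w i0 ≠ x.2.2.2.1 w i1 ∧
        Big a b x.1 x.2.1 x.2.2.1 (x.2.2.2.2 w) L (x.2.2.2.1 w))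
    (fun L x x' => ∃ h, x'.1 = h ∘ x.1 ∧ Fx x.2.1 h ∧ x.2.1 < x'.2.1 ∧ Agr x.2.1 x'.2.2.1 x.2.2.1 ∧
      (∃ j, j < x'.2.1 ∧ x'.2.2.1 j = L) ∧
      ∀ c w, w.length = L → Agr x.2.1 (x'.2.2.2.1 (c :: w)) (x.2.2.2.1 w) ∧
        Agr L (x'.2.2.2.2 (c :: w)) (x.2.2.2.2 w) ∧
        x'.2.2.2.1 (c :: w) x.2.1 = x.2.2.2.1 w (I c))
    (g, n, q, fun _ => q', fun _ => z)
    ⟨hg, le_rfl, hq, he, fun w hw => ⟨hne, H⟩⟩ (by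
    rintro L ⟨g, m, v, v', z⟩ ⟨hg, hm, hv, hve, hw⟩
    simp only [] at hg hm hv hve hw
    have hI : ∀ c, I c < m := by intro c; simp only [I]; split_ifs <;> omega
    have htt : ∀ c, Agr (m + 1) (v ∘ tau m (I c)) (v ∘ tau m i0) := by
      intro c x hx
      simp only [Function.comp]
      rcases Nat.lt_succ_iff_lt_or_eq.1 hx with hx | rfl
      · rw [(tau_fx (hI c)).2 x hx, (tau_fx (h0.trans_le hm)).2 x hx]
      · rw [tau_self, tau_self]
        simp only [I]; split_ifs
        · rfl
        · exact hve.symm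
    have hfin : Finite {w : List Bool // w.length = L + 1} := List.finite_length_eq _ _
    obtain ⟨h, m2, v2, v2', z2, hh, hm2, hv2, hvv2, hr2, hvv2', hz2, ht, hB⟩ :=
      jointExt ha hb (ι := {w : List Bool // w.length = L + 1}) (q := v ∘ tau m i0)
        (q' := fun w => v' w.1.tail ∘ tau m (I (w.1.headD true))) (z := fun w => z w.1.tail)
        (n := m + 1) (l := L) L hg (by omega) (hv.comp (tau_fx (h0.trans_le hm)).1) (fun w => by
          refine Big.congr (Big.split (hw _ ?_).2 (hI _)) (htt _)
          simp [w.2])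
    refine ⟨(h ∘ g, m2, v2, fun w => if hw : w.length = L + 1 then v2' ⟨w, hw⟩ else id,
      fun w => if hw : w.length = L + 1 then z2 ⟨w, hw⟩ else id), ⟨hh.1.comp hg, ?_, hv2, ?_, ?_⟩,
      h, rfl, hh.mono (Nat.le_succ _), ?_, ?_, ht, ?_⟩
    · exact (hm.trans (Nat.le_succ _)).trans hm2.le
    · have e0 := hvv2 i0 (by omega)
      have e1 := hvv2 i1 (by omega)
      simp only [Function.comp] at e0 e1
      rw [(tau_fx (h0.trans_le hm)).2 _ (by omega)] at e0 e1
      simp only []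
      rw [e0, e1, hve]
    · intro w hwl
      simp only [hwl, dif_pos]
      refine ⟨?_, hB _⟩
      have e0 := hvv2' ⟨w, hwl⟩ i0 (by omega)
      have e1 := hvv2' ⟨w, hwl⟩ i1 (by omega)
      simp only [Function.comp] at e0 e1
      rw [(tau_fx (hI _)).2 _ (by omega)] at e0 e1
      rw [e0, e1]
      exact (hw _ (by simp [hwl])).1
    · exact (Nat.lt_succ_self m).trans hm2
    · refine (hvv2.mono (Nat.le_succ _)).trans ?_
      exact (tau_fx (h0.trans_le hm)).agr v
    · intro c w hwl
      have hwl' : (c :: w).length = L + 1 := by simp [hwl]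
      simp only [hwl', dif_pos]
      have e := hvv2' ⟨c :: w, hwl'⟩
      refine ⟨(e.mono (Nat.le_succ _)).trans ((tau_fx (hI c)).agr (v' w)), hz2 ⟨c :: w, hwl'⟩, ?_⟩
      have := e m (Nat.lt_succ_self m)
      rw [this]
      simp only [Function.comp, tau_self, List.headD, List.tail])
  have hI := fun t => (hxs t).1
  have hR := fun t => (hxs t).2
  choose hs hs1 hs2 hs3 hs4 hs5 hs6 using hR
  obtain ⟨K, hK⟩ := limLemma (g := fun t => (xs t).1) (v := fun t => (xs t).2.2.1)
    (m := fun t => (xs t).2.1) hs1 hs2 hs3 (fun t => (hI t).2.2.1) hs4 hs5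
  have hmm : StrictMono (fun t => (xs t).2.1) := strictMono_nat_of_lt_succ hs3
  have key : ∀ t k, Agr (xs t).2.1 k (xs t).2.2.1 → Agr t (k ∘ (xs t).1) (K 0 ∘ (xs 0).1) := by
    intro t k hk x hx
    rw [(hK t).2.2]
    have h2 := (hI t).1.le x
    have h3 : t ≤ (xs t).2.1 := hmm.le_apply
    exact (hk _ (by omega)).trans ((hK t).2.1 _ (lt_of_le_of_lt h2 (lt_of_lt_of_le hx h3))).symm
  -- points
  have hpt : ∀ w : ℕ → Bool, ∃ Z, a Z = K 0 ∘ (xs 0).1 ∧ ∀ L, ∀ x, (xs (L + 1)).1 x = (xs L).2.1 →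
      b Z x = (xs L).2.2.2.1 (res w L) (I (w L)) := by
    intro w
    obtain ⟨Z, hZ⟩ := limZ (z := fun t => (xs t).2.2.2.2 (res w t))
      (fun t => (hs6 t (w t) (res w t) (res_length w t)).2.1)
    have : ∀ t, ∃ k k' y, Agr t y Z ∧ a y = k ∘ (xs t).1 ∧ b y = k' ∘ (xs t).1 ∧
        Agr (xs t).2.1 k (xs t).2.2.1 ∧ Agr (xs t).2.1 k' ((xs t).2.2.2.1 (res w t)) := by
      intro t
      obtain ⟨k, k', y, hk, hk', hkq, hkq', hy, e1, e2⟩ :=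
        ((hI t).2.2.2.2 (res w t) (res_length w t)).2 id (fx_id _)
      exact ⟨k, k', y, hy.trans (hZ t).symm, e1, e2, hkq, hkq'⟩
    choose k k' y hy1 hy2 hy3 hy4 hy5 using this
    refine ⟨Z, contAgr ha hy1 (fun t => by rw [hy2]; exact key t _ (hy4 t)), ?_⟩
    intro L x hx
    have hst : ∀ s, (xs (L + 1 + s)).1 x = (xs L).2.1 ∧
        (xs (L + 1 + s)).2.2.2.1 (res w (L + 1 + s)) (xs L).2.1 = (xs L).2.2.2.1 (res w L) (I (w L)) := by
      intro s
      induction s with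
      | zero => exact ⟨hx, (hs6 L (w L) (res w L) (res_length w L)).2.2⟩
      | succ s ih =>
        have hlt : (xs L).2.1 < (xs (L + 1 + s)).2.1 := hmm (by omega)
        refine ⟨?_, ?_⟩
        · rw [← add_assoc, hs1]
          simp only [Function.comp]
          rw [ih.1]
          exact (hs2 _).2 _ hlt
        · rw [← ih.2]
          exact (hs6 (L + 1 + s) (w _) (res w _) (res_length w _)).1 _ hlt
    have htd : Filter.Tendsto (fun t => b (y t) x) Filter.atTop (nhds (b Z x)) :=
      ((continuous_apply x).tendsto _).comp ((hb.tendsto Z).comp (tendsto_agr hy1))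
    refine tendsto_nhds_unique htd (tendsto_const_nhds.congr' ?_)
    filter_upwards [Filter.eventually_ge_atTop (L + 1)] with t ht
    obtain ⟨s, rfl⟩ := Nat.exists_eq_add_of_le ht
    rw [hy3]
    simp only [Function.comp]
    have hlt : (xs L).2.1 < (xs (L + 1 + s)).2.1 := hmm (by omega)
    rw [(hst s).1, hy5 _ _ hlt, (hst s).2]
  choose Z hZa hZb using hpt
  have hinj : Function.Injective (fun w => b (Z w)) := by
    intro w w' hww
    by_contra hne
    have hex : ∃ x, w x ≠ w' x := by
      by_contra hcon
      push Not at hcon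
      exact hne (funext hcon)
    have hx := Nat.find_spec hex
    have hmin := fun z => Nat.find_min (H := hex) (m := z)
    generalize Nat.find hex = L at hx hmin
    push Not at hmin
    obtain ⟨x, hxL⟩ := (hI (L + 1)).1.2 (xs L).2.1
    have e1 := hZb w L x hxL
    have e2 := hZb w' L x hxL
    rw [← res_congr hmin, ← show b (Z w) = b (Z w') from hww, e1] at e2
    have hd := ((hI L).2.2.2.2 (res w L) (res_length w L)).1
    cases hw1 : w L <;> cases hw2 : w' L <;> simp_all [I]
  have hcnt := hc (K 0 ∘ (xs 0).1)
  have : Countable (ℕ → Bool) := by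
    have h1 : ((fun w => b (Z w)) ⁻¹' {f' | ∃ y, a y = K 0 ∘ (xs 0).1 ∧ b y = f'}).Countable :=
      hcnt.preimage hinj
    have h2 : (fun w => b (Z w)) ⁻¹' {f' | ∃ y, a y = K 0 ∘ (xs 0).1 ∧ b y = f'} = Set.univ := by
      ext w
      simp only [Set.mem_univ, iff_true]
      exact ⟨Z w, hZa w, rfl⟩
    rw [h2] at h1
    exact Set.countable_univ_iff.1 h1
  obtain ⟨e, he⟩ := exists_injective_nat (ℕ → Bool)
  refine Function.cantor_injective (fun s : Set ℕ => e (fun n => decide (n ∈ s))) ?_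
  intro s s' hss
  have h1 := he hss
  ext n
  have h2 := congrFun h1 n
  simpa using h2

theorem sepLemma {R : (ℕ → ℕ) → (ℕ → ℕ) → Prop} {a b : (ℕ → ℕ) → ℕ → ℕ} (ha : Continuous a)
    (hb : Continuous b) (hR : ∀ f f', R f f' ↔ ∃ y, a y = f ∧ b y = f')
    (hs : ∀ f f', R f f' → R f' f) (hc : ∀ f, {f' | R f f'}.Countable)
    {g q q' : ℕ → ℕ} {n : ℕ} (hg : Rig g) (hq : Rig q) (hq' : Rig q') (hd : ¬ Agr n q q') :
    ∃ h, Fx n h ∧ ∀ k k', Rig k → Rig k' → Agr n k q → Agr n k' q' →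
      ¬ R (k ∘ (h ∘ g)) (k' ∘ (h ∘ g)) := by
  have main : ∀ q q' i0 i1, Rig q → i0 < n → i1 < n → q i0 = q i1 → q' i0 ≠ q' i1 →
      ∃ h, Fx n h ∧ ∀ k k', Rig k → Rig k' → Agr n k q → Agr n k' q' →
      ¬ R (k ∘ (h ∘ g)) (k' ∘ (h ∘ g)) := by
    intro q q' i0 i1 hq h0 h1 he hne
    by_contra hcon
    push Not at hcon
    refine noBig ha hb (fun f => by simpa only [hR] using hc f) hg hq h0 h1 he hne (z := id) ?_
    intro h hh
    obtain ⟨k, k', hk, hk', hkq, hkq', hRk⟩ := hcon h hh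
    obtain ⟨y, hy1, hy2⟩ := (hR _ _).1 hRk
    exact ⟨k, k', y, hk, hk', hkq, hkq', fun x hx => absurd hx (Nat.not_lt_zero x), hy1, hy2⟩
  have hex : ∃ x, x < n ∧ q x ≠ q' x := by
    unfold Agr at hd; push Not at hd; exact hd
  obtain ⟨hxn, hx⟩ := Nat.find_spec hex
  have hmin : ∀ z, z < Nat.find hex → q z = q' z := by
    intro z hz
    by_contra hne
    exact Nat.find_min hex hz ⟨by omega, hne⟩
  generalize Nat.find hex = x at hxn hx hmin
  rcases lt_or_gt_of_ne hx with hlt | hlt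
  · obtain ⟨x', hx', he⟩ := hq'.1 x _ hlt
    exact main q q' x' x hq (by omega) hxn ((hmin x' hx').trans he) (by omega)
  · obtain ⟨x', hx', he⟩ := hq.1 x _ hlt
    obtain ⟨h, hh, hno⟩ := main q' q x' x hq' (by omega) hxn ((hmin x' hx').symm.trans he) (by omega)
    exact ⟨h, hh, fun k k' hk hk' h1 h2 hRk => hno k' k hk' hk h2 h1 (hs _ _ hRk)⟩

theorem mainComb {R : (ℕ → ℕ) → (ℕ → ℕ) → Prop} {a b : (ℕ → ℕ) → ℕ → ℕ} (ha : Continuous a)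
    (hb : Continuous b) (hR : ∀ f f', R f f' ↔ ∃ y, a y = f ∧ b y = f')
    (hs : ∀ f f', R f f' → R f' f) (hc : ∀ f, {f' | R f f'}.Countable)
    {g : ℕ → ℕ} (n : ℕ) (hg : Rig g) :
    ∃ h, Fx n h ∧ ∀ k k', Rig k → Rig k' → k ≠ k' → ¬ R (k ∘ (h ∘ g)) (k' ∘ (h ∘ g)) := by
  let Sep : ℕ → (ℕ → ℕ) × (ℕ → ℕ) → (ℕ → ℕ) → Prop := fun m x g =>
    ∀ k k', Rig k → Rig k' → Agr m k x.1 → Agr m k' x.2 → ¬ Agr m k k' → ¬ R (k ∘ g) (k' ∘ g)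
  have her : ∀ m x, ∀ g h, Rig g → Fx m h → Sep m x g → Sep m x (h ∘ g) := by
    intro m x g h hg hh H k k' hk hk' h1 h2 h3
    refine H (k ∘ h) (k' ∘ h) (hk.comp hh.1) (hk'.comp hh.1) (hh.agr' h1) (hh.agr' h2) ?_
    intro h4
    exact h3 (((hh.agr k).symm.trans h4).trans (hh.agr k'))
  obtain ⟨h, hh, hΦ⟩ := fusion (fun m g => ∀ x : (ℕ → ℕ) × (ℕ → ℕ), Rig x.1 ∧ Rig x.2 → Sep m x g) n
    (fun m hm g h hg hh H x hx => her m x g h hg hh (H x hx)) (fun m hm g hg => by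
      refine finCode m (fun (x : (ℕ → ℕ) × (ℕ → ℕ)) =>
        ((fun i => x.1 i : Fin m → ℕ), (fun i => x.2 i : Fin m → ℕ))) {x | Rig x.1 ∧ Rig x.2} ?_
        (Sep m) ?_ (her m) ?_ g hg
      · refine ((finite_codes m).prod (finite_codes m)).subset ?_
        rintro _ ⟨x, hx, rfl⟩
        exact ⟨⟨_, hx.1, rfl⟩, ⟨_, hx.2, rfl⟩⟩
      · intro x x' g hcd H k k' hk hk' h1 h2
        simp only [Prod.mk.injEq] at hcd
        exact H k k' hk hk' (h1.trans (agr_of_code hcd.1).symm) (h2.trans (agr_of_code hcd.2).symm)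
      · intro x g hg
        by_cases hex : ∃ k k', Rig k ∧ Rig k' ∧ Agr m k x.1 ∧ Agr m k' x.2 ∧ ¬ Agr m k k'
        · obtain ⟨q, q', hq, hq', e1, e2, e3⟩ := hex
          obtain ⟨h, hh, hno⟩ := sepLemma ha hb hR hs hc hg hq hq' e3
          exact ⟨h, hh, fun k k' hk hk' h1 h2 h3 => hno k k' hk hk' (h1.trans e1.symm) (h2.trans e2.symm)⟩
        · push Not at hex
          exact ⟨id, fx_id m, fun k k' hk hk' h1 h2 h3 => absurd (hex k k' hk hk' h1 h2) h3⟩) g hg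
  refine ⟨h, hh, fun k k' hk hk' hne => ?_⟩
  obtain ⟨x, hx⟩ := Function.ne_iff.1 hne
  exact hΦ (n + x + 1) (by omega) (k, k') ⟨hk, hk'⟩ k k' hk hk' (Agr.refl _ _) (Agr.refl _ _)
    (fun h => hx (h x (by omega)))

end CSP


namespace CSP

theorem mu_inf (A : Einf) : (setOf (fun k => ∀ m, A.1 m k → k ≤ m)).Infinite := by
  have := A.2
  have hex : ∀ q : Quotient A.1, ∃ x, (Quotient.mk A.1 x) = q := fun q => Quotient.exists_rep q
  refine Set.infinite_of_injective_forall_mem (f := fun q : Quotient A.1 => Nat.find (hex q)) ?_ ?_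
  · intro q q' h
    have h1 := Nat.find_spec (hex q)
    have h2 := Nat.find_spec (hex q')
    rw [← h1, ← h2]
    exact congrArg _ h
  · intro q m hm
    refine Nat.find_min' (hex q) ?_
    rw [← Nat.find_spec (hex q)]
    exact Quotient.sound hm

theorem mu_min (A : Einf) (n m : ℕ) (h : A.1 m (A.mu n)) : A.mu n ≤ m :=
  Nat.nth_mem_of_infinite (mu_inf A) n m h

theorem mu_ex (A : Einf) (x : ℕ) : ∃ n, A.1 x (A.mu n) := by
  have hex : ∃ y, A.1 x y := ⟨x, A.1.refl x⟩
  have h1 := Nat.find_spec hex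
  have h2 : ∀ m, A.1 m (Nat.find hex) → Nat.find hex ≤ m := fun m hm =>
    Nat.find_min' hex (A.1.trans h1 (A.1.symm hm))
  refine ⟨Nat.count (fun k => ∀ m, A.1 m k → k ≤ m) (Nat.find hex), ?_⟩
  unfold Einf.mu
  rw [Nat.nth_count h2]
  exact h1

theorem mu_strictMono (A : Einf) : StrictMono A.mu := Nat.nth_strictMono (mu_inf A)

theorem mu_inj (A : Einf) {n n' : ℕ} (h : A.1 (A.mu n) (A.mu n')) : n = n' :=
  (mu_strictMono A).injective (le_antisymm (mu_min A n _ (A.1.symm h)) (mu_min A n' _ h))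

noncomputable def idx (A : Einf) (x : ℕ) : ℕ := Classical.choose (mu_ex A x)

theorem idx_spec (A : Einf) (x : ℕ) : A.1 x (A.mu (idx A x)) := Classical.choose_spec (mu_ex A x)

theorem idx_iff (A : Einf) (x n : ℕ) : A.1 x (A.mu n) ↔ idx A x = n := by
  constructor
  · intro h
    exact mu_inj A (A.1.trans (A.1.symm (idx_spec A x)) h)
  · rintro rfl
    exact idx_spec A x

theorem idx_mu (A : Einf) (n : ℕ) : idx A (A.mu n) = n := (idx_iff A _ n).1 (A.1.refl _)

theorem rel_iff (A : Einf) (x y : ℕ) : A.1 x y ↔ idx A x = idx A y := by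
  rw [← idx_iff]
  constructor
  · intro h
    exact A.1.trans h (idx_spec A y)
  · intro h
    exact A.1.trans h (A.1.symm (idx_spec A y))

theorem idx_rig (A : Einf) : Rig (idx A) := by
  refine ⟨fun x y hy => ⟨A.mu y, ?_, idx_mu A y⟩, fun y => ⟨_, idx_mu A y⟩⟩
  exact (mu_strictMono A hy).trans_le (mu_min A _ _ (idx_spec A x))

theorem idx_inj {A B : Einf} (h : idx A = idx B) : A = B := by
  apply Subtype.ext
  apply Setoid.ext
  intro x y
  rw [rel_iff, rel_iff, h]

theorem toCS_eq (A : Einf) (n m : ℕ) : A.toCS n m = decide (idx A m = n) := by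
  unfold Einf.toCS
  simp only [idx_iff]

theorem rig_ker_eq {f f' : ℕ → ℕ} (hf : Rig f) (hf' : Rig f')
    (h : ∀ x y, f x = f y ↔ f' x = f' y) : f = f' := by
  funext x
  induction x using Nat.strong_induction_on with
  | _ x ih =>
    by_cases hex : ∃ x', x' < x ∧ f x' = f x
    · obtain ⟨x', hx', he⟩ := hex
      rw [← he, ih x' hx']
      exact (h _ _).1 he
    · push Not at hex
      exact newAgr hf hf' ih hex (fun x' hx' he => hex x' hx' ((h _ _).2 he))

def kerE (f : ℕ → ℕ) (hf : Rig f) : Einf :=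
  ⟨Setoid.ker f, Infinite.of_surjective
    (Quotient.lift f (fun _ _ h => h) : Quotient (Setoid.ker f) → ℕ)
    (fun y => by obtain ⟨x, hx⟩ := hf.2 y; exact ⟨Quotient.mk _ x, hx⟩)⟩

def botE : Einf :=
  ⟨⊥, Infinite.of_injective (fun x : ℕ => Quotient.mk (⊥ : Setoid ℕ) x)
    (fun x y h => by simpa using Quotient.exact h)⟩

noncomputable def ofR (f : ℕ → ℕ) : Einf :=
  if hf : Rig f then kerE f hf else botE

theorem ofR_pos {f : ℕ → ℕ} (hf : Rig f) : ofR f = kerE f hf := dif_pos hf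

theorem ofR_neg {f : ℕ → ℕ} (hf : ¬ Rig f) : ofR f = botE := dif_neg hf

theorem ofR_rel {f : ℕ → ℕ} (hf : Rig f) (x y : ℕ) : (ofR f).1 x y ↔ f x = f y := by
  rw [ofR_pos hf]
  exact Iff.rfl

theorem idx_ofR {f : ℕ → ℕ} (hf : Rig f) : idx (ofR f) = f :=
  rig_ker_eq (idx_rig _) hf (fun x y => by rw [← rel_iff, ofR_rel hf])

theorem ofR_idx (A : Einf) : ofR (idx A) = A := idx_inj (idx_ofR (idx_rig A))

theorem measurable_ofR : Measurable ofR := by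
  refine measurable_comap_iff.2 ?_
  refine measurable_pi_lambda _ fun n => measurable_pi_lambda _ fun m => ?_
  have : (fun f => (Einf.toCS ∘ ofR) f n m) = fun f => if Rig f then decide (f m = n) else
      (if h : ∃ f, ¬ Rig f then (ofR (Classical.choose h)).toCS n m else true) := by
    funext f
    by_cases hf : Rig f
    · simp only [Function.comp, hf, if_true, toCS_eq, idx_ofR hf]
    · have hex : ∃ f, ¬ Rig f := ⟨f, hf⟩
      simp only [Function.comp, hf, if_false, dif_pos hex]
      have h2 := Classical.choose_spec hex
      have : ofR f = ofR (Classical.choose hex) := by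
        rw [ofR_neg hf, ofR_neg h2]
      rw [this]
  rw [this]
  refine Measurable.ite meas_rig ?_ measurable_const
  exact (measurable_of_countable (fun y : ℕ => decide (y = n))).comp (measurable_pi_apply m)

theorem mu_eq {A : Einf} {P n : ℕ} (h1 : idx A P = n) (h2 : ∀ x, x < P → idx A x ≠ n) :
    A.mu n = P := by
  have h3 : A.mu n ≤ P := mu_min A n P ((idx_iff A P n).2 h1)
  rcases h3.lt_or_eq with h4 | h4
  · exact absurd (idx_mu A n) (h2 _ h4)
  · exact h4

theorem rn_ext {A B : Einf} {n : ℕ} (h : B.mu n = A.mu n)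
    (h2 : ∀ i j, i < A.mu n → j < A.mu n → (B.1 i j ↔ A.1 i j)) : B.rn n = A.rn n := by
  unfold Einf.rn
  rw [h]
  congr 1
  apply Setoid.ext
  intro i j
  exact h2 i j i.2 j.2

theorem factor {F : ℕ → ℕ} (hF : Rig F) {C : Einf} (hC : Einf.Coarsen C (ofR F)) :
    ∃ k, Rig k ∧ idx C = k ∘ F := by
  choose c hc using hF.2
  have : idx C = (fun y => idx C (c y)) ∘ F := by
    funext x
    refine (rel_iff C _ _).1 (hC _ _ ((ofR_rel hF _ _).2 ?_))
    exact (hc _).symm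
  refine ⟨_, ?_, this⟩
  have h2 := idx_rig C
  rw [this] at h2
  exact h2.of_comp hF

open MeasureTheory in
theorem mainE (E : Einf → Einf → Prop) (hEquiv : Equivalence E)
    (hBorel : MeasurableSet {p : Einf × Einf | E p.1 p.2})
    (hCount : ∀ A : Einf, {A' : Einf | E A A'}.Countable) (g : ℕ → ℕ) (hg : Rig g) (n : ℕ) :
    ∃ h, Fx n h ∧ ∀ C C' : Einf, Einf.Coarsen C (ofR (h ∘ g)) → Einf.Coarsen C' (ofR (h ∘ g)) →
      E C C' → C = C' := by
  let R : (ℕ → ℕ) → (ℕ → ℕ) → Prop := fun f f' => Rig f ∧ Rig f' ∧ E (ofR f) (ofR f')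
  have hm : MeasurableSet {p : (ℕ → ℕ) × (ℕ → ℕ) | R p.1 p.2} := by
    refine (measurable_fst meas_rig).inter ((measurable_snd meas_rig).inter ?_)
    exact ((measurable_ofR.comp measurable_fst).prodMk (measurable_ofR.comp measurable_snd)) hBorel
  have han := hm.analyticSet
  rw [AnalyticSet] at han
  rcases han with he | ⟨φ, hφ, hr⟩
  · have : ((id, id) : (ℕ → ℕ) × (ℕ → ℕ)) ∈ {p : (ℕ → ℕ) × (ℕ → ℕ) | R p.1 p.2} :=
      ⟨rig_id, rig_id, hEquiv.refl _⟩
    rw [he] at this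
    exact absurd this (Set.notMem_empty _)
  have hR : ∀ f f', R f f' ↔ ∃ y, (φ y).1 = f ∧ (φ y).2 = f' := by
    intro f f'
    have : ((f, f') : (ℕ → ℕ) × (ℕ → ℕ)) ∈ Set.range φ ↔ R f f' := by rw [hr]; rfl
    rw [← this]
    simp only [Set.mem_range, Prod.ext_iff]
  obtain ⟨h, hh, hno⟩ := mainComb (R := R) (hφ.fst) (hφ.snd) hR
    (fun f f' hf => ⟨hf.2.1, hf.1, hEquiv.symm hf.2.2⟩)
    (fun f => by
      refine ((hCount (ofR f)).image idx).mono ?_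
      rintro f' ⟨h1, h2, h3⟩
      exact ⟨ofR f', h3, idx_ofR h2⟩) n hg
  refine ⟨h, hh, fun C C' hC hC' hE => ?_⟩
  obtain ⟨k, hk, e1⟩ := factor (hh.1.comp hg) hC
  obtain ⟨k', hk', e2⟩ := factor (hh.1.comp hg) hC'
  by_cases hkk : k = k'
  · exact idx_inj (by rw [e1, e2, hkk])
  · refine absurd ?_ (hno k k' hk hk' hkk)
    rw [← e1, ← e2]
    exact ⟨idx_rig C, idx_rig C', by rw [ofR_idx, ofR_idx]; exact hE⟩

end CSP

/-- For a CBER `E` on `𝓔_∞` and every nonempty cube `[s,A]`, there is `B ∈ [s,A]` below which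
`E` is equality; in particular `E` restricted to `[s,B]` Borel reduces to equality on `2^ℕ`. -/
theorem einf_CBER_equality_below_some_member_of_every_cube
    (E : Einf → Einf → Prop) (hEquiv : Equivalence E)
    (hBorel : MeasurableSet {p : Einf × Einf | E p.1 p.2})
    (hCount : ∀ A : Einf, {A' : Einf | E A A'}.Countable)
    (s : FinApprox) (A : Einf) (hne : (cube s A).Nonempty) :
    ∃ B ∈ cube s A,
      (∀ C C' : Einf, Coarsen C B → Coarsen C' B → (E C C' ↔ C = C')) ∧
      ∃ f : ↥(cube s B) → (ℕ → Bool), Measurable f ∧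
        ∀ C C' : ↥(cube s B), (E C.1 C'.1 ↔ f C = f C') := by
  obtain ⟨A0, ⟨n, hn⟩, hA0⟩ := hne
  have hg := CSP.idx_rig A0
  obtain ⟨h, hh, hmain⟩ := CSP.mainE E hEquiv hBorel hCount (CSP.idx A0) hg (n + 1)
  have hF := hh.1.comp hg
  have hiff : ∀ C C' : Einf, Coarsen C (CSP.ofR (h ∘ CSP.idx A0)) →
      Coarsen C' (CSP.ofR (h ∘ CSP.idx A0)) → (E C C' ↔ C = C') := by
    intro C C' hC hC'
    refine ⟨hmain C C' hC hC', ?_⟩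
    rintro rfl
    exact hEquiv.refl _
  refine ⟨CSP.ofR (h ∘ CSP.idx A0), ⟨⟨n, ?_⟩, ?_⟩, hiff, ?_⟩
  · rw [← hn]
    have hlt : ∀ x, x < A0.mu n → CSP.idx A0 x < n := by
      intro x hx
      by_contra hcon
      have h1 : A0.mu n ≤ A0.mu (CSP.idx A0 x) := (CSP.mu_strictMono A0).monotone (not_lt.1 hcon)
      have h2 := CSP.mu_min A0 _ _ (CSP.idx_spec A0 x)
      omega
    apply CSP.rn_ext
    · apply CSP.mu_eq
      · rw [CSP.idx_ofR hF]
        simp only [Function.comp, CSP.idx_mu]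
        exact hh.2 n (Nat.lt_succ_self n)
      · intro x hx
        rw [CSP.idx_ofR hF]
        have := hlt x hx
        simp only [Function.comp]
        rw [hh.2 _ (by omega)]
        omega
    · intro i j hi hj
      have h1 := hlt i hi
      have h2 := hlt j hj
      rw [CSP.ofR_rel hF, CSP.rel_iff]
      simp only [Function.comp]
      rw [hh.2 _ (by omega), hh.2 _ (by omega)]
  · intro i j hij
    rw [CSP.ofR_rel hF]
    simp only [Function.comp]
    rw [(CSP.rel_iff A0 i j).1 (hA0 i j hij)]
  · refine ⟨fun C i => C.1.toCS (Nat.unpair i).1 (Nat.unpair i).2, ?_, ?_⟩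
    · refine measurable_pi_lambda _ fun i => ?_
      have h1 : Measurable Einf.toCS := comap_measurable _
      exact (measurable_pi_apply _).comp ((measurable_pi_apply _).comp (h1.comp measurable_subtype_coe))
    · intro C C'
      rw [hiff C.1 C'.1 C.2.2 C'.2.2]
      constructor
      · intro he
        have hCC : C = C' := Subtype.ext he
        rw [hCC]
      · intro he
        apply CSP.idx_inj
        funext m
        have := congrFun he (Nat.pair (CSP.idx C.1 m) m)
        simp only [Nat.unpair_pair, CSP.toCS_eq] at this
        simpa [eq_comm] using this
end
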